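/- Let F ⊆ ℝ² be a non-empty bounded set. Then dim_A D_x(F) ≥ min{dim_A F, 1} for all x ∈ ℝ² outside a set of exceptions of Hausdorff dimension at most 1. Consequently, if dim_H F > 1, then there exists x ∈ F such that dim_A D_x(F) = 1. -/

import Mathlib

open Metric MeasureTheory Filter Set
open scoped ENNReal NNReal Pointwise Topology

noncomputable section

/-- The Assouad dimension of a subset of a (pseudo)metric space: the infimum of all
`α ≥ 0` for which there is `C > 0` such that for every `x ∈ E` and all scales `0 < r < R`,
the set `E ∩ B(x,R)` can be covered by at most `C (R/r)^α` sets of diameter at most `r`. -/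
def assouadDim {X : Type*} [PseudoMetricSpace X] (E : Set X) : ℝ :=
  sInf {α : ℝ | 0 ≤ α ∧ ∃ C : ℝ, 0 < C ∧ ∀ x ∈ E, ∀ r R : ℝ, 0 < r → r < R →
    ∃ 𝒰 : Finset (Set X), (E ∩ closedBall x R ⊆ ⋃ U ∈ 𝒰, U) ∧
      (∀ U ∈ 𝒰, EMetric.diam U ≤ ENNReal.ofReal r) ∧
      ((𝒰.card : ℝ) ≤ C * (R / r) ^ α)}

/-- Euclidean space `ℝⁿ`. -/
abbrev Euc (n : ℕ) := EuclideanSpace ℝ (Fin n)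

/-- The pinned distance set `D_x(F) = {|x - y| : y ∈ F}`. -/
def pinnedDistSet {n : ℕ} (x : Euc n) (F : Set (Euc n)) : Set ℝ :=
  {d : ℝ | ∃ y ∈ F, d = dist x y}

/-!
If `x` is an exceptional pin, then `D_x(F)` satisfies an Assouad covering condition with an exponent
`t < min (dim_A F) 1`. Choose a tiny ball around some `z ∈ F` in which `F` contains a separated set
`S` of size corresponding to an exponent `s > t`. Seen from a pin away from `z`, the distances to
the points of `S` are up to rescaling the values of an orthogonal projection of `S`, so this
projection has a sparse range. The set of directions with sparse range turns out to be covered by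
boundedly many sets which have arbitrarily small box dimension at prescribed small scales, and the
exceptional pins lie near `z` or on the lines through `z` in these directions. This bounds their
dimension by `1`.

For the bound on the directions, note that the fibres of a projection with sparse range carry most
of the logarithmic size of `S`. By monotonicity of conditional expectations, at most relative
widths the distribution of the projection on a typical cell is hardly changed by cutting the cell
into pieces of smaller height. Suppose two projections `P` and `P + ϑ * y` are both regular at a
width comparable to `ϑ`. On pieces at different heights their difference is a different constant,
so the distribution of `P` on the cell is nearly invariant under a short translation. A sparse range
has gaps longer than this translation, which leaves no room for any mass between two gaps. Hence all
points of the cell have nearly the same height, although its fibres are large: a contradiction.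
Therefore the distances between directions avoid most widths.

The second claim follows since `1 < dim_H F ≤ dim_A F`, so that some `x ∈ F` is not exceptional.
-/
section Cells

variable {Ω α β γ : Type*} [Fintype Ω]

open scoped Classical in
/-- The cell of `x` in the partition of `Ω` into the level sets of `f`. -/
def cell (f : Ω → β) (x : Ω) : Finset Ω := {y | f y = f x}

/-- The average of `h` over the cell of `x`, i.e. the conditional expectation of `h` given `f` for
the uniform measure on `Ω`. -/
def cellAvg (f : Ω → β) (h : Ω → ℝ) (x : Ω) : ℝ := (∑ y ∈ cell f x, h y) / (cell f x).card

@[simp]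
theorem mem_cell {f : Ω → β} {x y : Ω} : y ∈ cell f x ↔ f y = f x := by
  simp [cell]

theorem cell_congr {f : Ω → β} {x y : Ω} (h : f y = f x) : cell f y = cell f x := by
  ext; simp [h]

theorem cell_subset_cell {g : Ω → γ} {f : Ω → β} (h : f.FactorsThrough g) (x : Ω) :
    cell g x ⊆ cell f x :=
  fun _ hy => mem_cell.2 (h (mem_cell.1 hy))

theorem one_le_card_cell (f : Ω → β) (x : Ω) : (1 : ℝ) ≤ (cell f x).card :=
  Nat.one_le_cast.2 (Finset.card_pos.2 ⟨x, mem_cell.2 rfl⟩)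

theorem card_cell_pos (f : Ω → β) (x : Ω) : (0 : ℝ) < (cell f x).card :=
  zero_lt_one.trans_le (one_le_card_cell f x)

theorem card_cell_le_card_cell {g : Ω → γ} {f : Ω → β} (h : f.FactorsThrough g) (x : Ω) :
    ((cell g x).card : ℝ) ≤ (cell f x).card :=
  Nat.cast_le.2 (Finset.card_le_card (cell_subset_cell h x))

theorem cellAvg_congr {f : Ω → β} {h : Ω → ℝ} {x y : Ω} (hxy : f y = f x) :
    cellAvg f h y = cellAvg f h x := by
  simp only [cellAvg, cell_congr hxy]

theorem cellAvg_mul {f : Ω → β} {φ : Ω → ℝ} (hφ : φ.FactorsThrough f) (h : Ω → ℝ) (x : Ω) :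
    cellAvg f (fun y => φ y * h y) x = φ x * cellAvg f h x := by
  rw [cellAvg, cellAvg, ← mul_div_assoc, Finset.mul_sum]
  exact congrArg (· / _) (Finset.sum_congr rfl fun y hy => by rw [hφ (mem_cell.1 hy)])

theorem cellAvg_nonneg (f : Ω → β) {h : Ω → ℝ} (hh : ∀ x, 0 ≤ h x) (x : Ω) : 0 ≤ cellAvg f h x :=
  div_nonneg (Finset.sum_nonneg fun y _ => hh y) (Nat.cast_nonneg _)

theorem cellAvg_le (f : Ω → β) {h : Ω → ℝ} {c : ℝ} (hh : ∀ x, h x ≤ c) (x : Ω) :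
    cellAvg f h x ≤ c := by
  rw [cellAvg, div_le_iff₀ (card_cell_pos f x), mul_comm, ← nsmul_eq_mul]
  exact Finset.sum_le_card_nsmul _ _ _ fun y _ => hh y

theorem sum_cellAvg (f : Ω → β) (h : Ω → ℝ) : ∑ x, cellAvg f h x = ∑ x, h x :=
  calc ∑ x, cellAvg f h x = ∑ x, ∑ y ∈ cell f x, h y / (cell f y).card := by
        refine Finset.sum_congr rfl fun _ _ => ?_
        rw [cellAvg, Finset.sum_div]
        exact Finset.sum_congr rfl fun y hy => by rw [cell_congr (mem_cell.1 hy)]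
    _ = ∑ y, ∑ _x ∈ cell f y, h y / (cell f y).card :=
        Finset.sum_comm' (by simp [eq_comm])
    _ = ∑ y, h y := by
        simp only [Finset.sum_const, nsmul_eq_mul, mul_div_cancel₀ _ (card_cell_pos f _).ne']

theorem sum_le_sum_of_sum_cell_le (f : Ω → β) {h k : Ω → ℝ}
    (hhk : ∀ x, ∑ y ∈ cell f x, h y ≤ ∑ y ∈ cell f x, k y) : ∑ x, h x ≤ ∑ x, k x := by
  rw [← sum_cellAvg f h, ← sum_cellAvg f k]
  exact Finset.sum_le_sum fun x _ => div_le_div_of_nonneg_right (hhk x) (card_cell_pos f x).le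

theorem mul_card_le_sum_of_le_cellAvg (f : Ω → β) {h : Ω → ℝ} (hh : ∀ x, 0 ≤ h x) {η : ℝ}
    {S : Finset Ω} (hS : ∀ x ∈ S, η ≤ cellAvg f h x) : η * S.card ≤ ∑ x, h x := by
  rw [← sum_cellAvg f h, mul_comm, ← nsmul_eq_mul]
  exact (Finset.card_nsmul_le_sum S _ η hS).trans
    (Finset.sum_le_univ_sum_of_nonneg fun x => cellAvg_nonneg f hh x)

theorem sum_div_card_cell_le [DecidableEq γ] (g : Ω → γ) {φ : γ → ℝ} (hφ : ∀ c, 0 ≤ φ c)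
    (S : Finset Ω) :
    ∑ x ∈ S, φ (g x) / (cell g x).card ≤ ∑ c ∈ S.image g, φ c := by
  rw [← Finset.sum_fiberwise_of_maps_to fun _ hx => Finset.mem_image_of_mem g hx]
  refine Finset.sum_le_sum fun c hc => ?_
  obtain ⟨x₀, -, rfl⟩ := Finset.mem_image.1 hc
  have hconst : ∀ x ∈ S.filter fun x => g x = g x₀,
      φ (g x) / (cell g x).card = φ (g x₀) / (cell g x₀).card := fun x hx => by
    rw [(Finset.mem_filter.1 hx).2, cell_congr (Finset.mem_filter.1 hx).2]
  rw [Finset.sum_congr rfl hconst, Finset.sum_const, nsmul_eq_mul, mul_div_left_comm]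
  refine mul_le_of_le_one_right (hφ _) ((div_le_one (card_cell_pos g x₀)).2 (Nat.cast_le.2 ?_))
  exact Finset.card_le_card fun x hx => mem_cell.2 (Finset.mem_filter.1 hx).2

theorem card_le_of_card_cell_prod_inter_le [DecidableEq Ω] [DecidableEq γ] {f : Ω → β} {g : Ω → γ}
    {S U : Finset Ω} {K : ℕ} {σ : ℝ} (hσ : 0 ≤ σ) (hK : ∀ x, ((cell f x).image g).card ≤ K)
    (hSU : S ⊆ U)
    (hS : ∀ x ∈ S, ((cell (fun y => (f y, g y)) x ∩ U).card : ℝ) ≤ σ * (cell f x).card) :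
    (S.card : ℝ) ≤ K * σ * Fintype.card Ω := by
  suffices h : ∑ x, (if x ∈ S then 1 else 0 : ℝ) ≤ ∑ _x : Ω, K * σ by
    simpa [mul_comm] using h
  refine sum_le_sum_of_sum_cell_le f fun x => ?_
  rw [Finset.sum_boole, Finset.sum_const, nsmul_eq_mul]
  have hfiber : ∀ c ∈ (cell f x).image g,
      (((cell f x).filter (· ∈ S)).filter fun y => g y = c).card ≤ ⌊σ * (cell f x).card⌋₊ := by
    intro c _
    rcases (((cell f x).filter (· ∈ S)).filter fun y => g y = c).eq_empty_or_nonempty with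
      h0 | ⟨z, hz⟩
    · simp [h0]
    · simp only [Finset.mem_filter, mem_cell] at hz
      refine Nat.le_floor (le_trans (Nat.cast_le.2 (Finset.card_le_card fun y hy => ?_))
        ((hS z hz.1.2).trans_eq (by rw [cell_congr hz.1.1])))
      simp only [Finset.mem_filter, mem_cell, Finset.mem_inter, Prod.mk.injEq] at hy ⊢
      exact ⟨⟨hy.1.1.trans hz.1.1.symm, hy.2.trans hz.2.symm⟩, hSU hy.1.2⟩
  have hcard := Finset.card_le_mul_card_image_of_maps_to
    (fun y hy => Finset.mem_image_of_mem g (Finset.mem_of_mem_filter y hy)) _ hfiber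
  calc (((cell f x).filter (· ∈ S)).card : ℝ)
      ≤ ⌊σ * (cell f x).card⌋₊ * ((cell f x).image g).card := mod_cast hcard
    _ ≤ σ * (cell f x).card * K := by
        gcongr
        · exact Nat.floor_le (by positivity)
        · exact hK x
    _ = (cell f x).card * (K * σ) := by ring

end Cells

section Entropy

theorem sum_log_card_mul_nonpos {Ω : Type*} {q : Finset Ω} {w : Ω → ℝ} (hw : ∀ x ∈ q, 0 < w x)
    (hsum : ∑ x ∈ q, w x ≤ 1) : ∑ x ∈ q, Real.log (q.card * w x) ≤ 0 := by
  calc ∑ x ∈ q, Real.log (q.card * w x) ≤ ∑ x ∈ q, (q.card * w x - 1) :=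
        Finset.sum_le_sum fun x hx => Real.log_le_sub_one_of_pos
          (mul_pos (Nat.cast_pos.2 (Finset.card_pos.2 ⟨x, hx⟩)) (hw x hx))
    _ = q.card * (∑ x ∈ q, w x - 1) := by
        simp [Finset.sum_sub_distrib, ← Finset.mul_sum, mul_sub]
    _ ≤ 0 := mul_nonpos_of_nonneg_of_nonpos (Nat.cast_nonneg _) (sub_nonpos.2 hsum)

variable {Ω α β γ : Type*} [Fintype Ω]

/-- The sum over all points of the logarithm of the size of their cell: `|Ω|` times the conditional
entropy, given `f`, of a uniformly distributed point of `Ω`. -/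
def logMass (f : Ω → β) : ℝ := ∑ x, Real.log (cell f x).card

theorem logMass_le_logMass {g : Ω → γ} {f : Ω → β} (h : f.FactorsThrough g) :
    logMass g ≤ logMass f :=
  Finset.sum_le_sum fun x _ => Real.log_le_log (card_cell_pos g x) (card_cell_le_card_cell h x)

theorem logMass_sub_logMass (f : Ω → β) (g : Ω → γ) :
    logMass f - logMass g = ∑ x, Real.log ((cell f x).card / (cell g x).card) := by
  rw [logMass, logMass, ← Finset.sum_sub_distrib]
  exact Finset.sum_congr rfl fun x _ =>
    (Real.log_div (card_cell_pos f x).ne' (card_cell_pos g x).ne').symm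

theorem sum_log_card_div_card_cell_le (g : Ω → γ) {q : Finset Ω} {K : Ω → ℝ}
    (hK : ∀ x, 0 < K x) (hsum : ∑ x ∈ q, 1 / ((cell g x).card * K x) ≤ 1) :
    ∑ x ∈ q, Real.log (q.card / (cell g x).card) ≤ ∑ x ∈ q, Real.log (K x) := by
  have hgibbs := sum_log_card_mul_nonpos
    (fun x _ => one_div_pos.2 (mul_pos (card_cell_pos g x) (hK x))) hsum
  rw [← sub_nonpos, ← Finset.sum_sub_distrib]
  refine (Finset.sum_congr rfl fun x hx => ?_).trans_le hgibbs
  have hq : (0 : ℝ) < q.card := Nat.cast_pos.2 (Finset.card_pos.2 ⟨x, hx⟩)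
  rw [← Real.log_div (div_pos hq (card_cell_pos g x)).ne' (hK x).ne', div_div, mul_one_div]

theorem sum_log_card_div_card_cell_le_of_card_image_le [DecidableEq γ] (g : Ω → γ)
    {q : Finset Ω} {K : ℝ} (hK : 0 < K) (h : ((q.image g).card : ℝ) ≤ K) :
    ∑ x ∈ q, Real.log (q.card / (cell g x).card) ≤ q.card * Real.log K := by
  refine (sum_log_card_div_card_cell_le g (K := fun _ => K) (fun _ => hK) ?_).trans_eq (by simp)
  calc ∑ x ∈ q, 1 / ((cell g x).card * K) = ∑ x ∈ q, 1 / K / (cell g x).card :=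
        Finset.sum_congr rfl fun x _ => by rw [div_div, mul_comm]
    _ ≤ ∑ _c ∈ q.image g, 1 / K := sum_div_card_cell_le g (fun _ => (one_div_pos.2 hK).le) q
    _ = (q.image g).card / K := by simp [div_eq_mul_inv]
    _ ≤ 1 := (div_le_one hK).2 h

theorem logMass_sub_logMass_le_of_card_image_le [DecidableEq γ] (f : Ω → β) (g : Ω → γ) {K : ℝ}
    (hK : 0 < K) (h : ∀ x, (((cell f x).image g).card : ℝ) ≤ K) :
    logMass f - logMass g ≤ Fintype.card Ω * Real.log K := by
  rw [logMass_sub_logMass, ← Finset.card_univ, ← nsmul_eq_mul, ← Finset.sum_const]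
  refine sum_le_sum_of_sum_cell_le f fun x => ?_
  rw [Finset.sum_const, nsmul_eq_mul]
  refine (Finset.sum_congr rfl fun y hy => ?_).trans_le
    (sum_log_card_div_card_cell_le_of_card_image_le g hK (h x))
  rw [cell_congr (mem_cell.1 hy)]

theorem sum_card_cell_mul_card_cell_div_le {f : Ω → α} {g : Ω → β} {h : Ω → γ}
    (hf : h.FactorsThrough f) (hg : h.FactorsThrough g) (x : Ω) :
    ∑ y ∈ cell h x, ((cell f y).card * (cell g y).card : ℝ) / (cell (fun z => (f z, g z)) y).card
      ≤ (cell h x).card * (cell h x).card := by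
  classical
  let F : α → ℝ := fun a => ((cell h x).filter fun y => f y = a).card
  let G : β → ℝ := fun b => ((cell h x).filter fun y => g y = b).card
  have hF : ∀ y ∈ cell h x, ((cell f y).card : ℝ) = F (f y) := fun y hy => by
    congr 2; ext z; simpa using fun e => (hf e).trans (mem_cell.1 hy)
  have hG : ∀ y ∈ cell h x, ((cell g y).card : ℝ) = G (g y) := fun y hy => by
    congr 2; ext z; simpa using fun e => (hg e).trans (mem_cell.1 hy)
  have hFsum : ∑ a ∈ (cell h x).image f, F a = (cell h x).card := by
    simp only [F]
    exact_mod_cast (Finset.card_eq_sum_card_image f (cell h x)).symm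
  have hGsum : ∑ b ∈ (cell h x).image g, G b = (cell h x).card := by
    simp only [G]
    exact_mod_cast (Finset.card_eq_sum_card_image g (cell h x)).symm
  calc _ = ∑ y ∈ cell h x, F (f y) * G (g y) / (cell (fun z => (f z, g z)) y).card :=
        Finset.sum_congr rfl fun y hy => by rw [hF y hy, hG y hy]
    _ ≤ ∑ c ∈ (cell h x).image fun z => (f z, g z), F c.1 * G c.2 :=
        sum_div_card_cell_le (φ := fun c => F c.1 * G c.2) (fun z => (f z, g z))
          (fun _ => by positivity) _
    _ ≤ ∑ c ∈ (cell h x).image f ×ˢ (cell h x).image g, F c.1 * G c.2 := by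
        refine Finset.sum_le_sum_of_subset_of_nonneg (Finset.image_subset_iff.2 fun y hy => ?_)
          fun _ _ _ => by positivity
        exact Finset.mem_product.2 ⟨Finset.mem_image_of_mem f hy, Finset.mem_image_of_mem g hy⟩
    _ = (cell h x).card * (cell h x).card := by
        rw [Finset.sum_product, ← Finset.sum_mul_sum, hFsum, hGsum]

theorem logMass_add_logMass_le {f : Ω → α} {g : Ω → β} {h : Ω → γ}
    (hf : h.FactorsThrough f) (hg : h.FactorsThrough g) :
    logMass f + logMass g ≤ logMass (fun x => (f x, g x)) + logMass h := by
  let k : Ω → α × β := fun x => (f x, g x)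
  let w : Ω → ℝ := fun x => (cell f x).card * (cell g x).card / (cell k x).card /
    ((cell h x).card * (cell h x).card)
  have hlog : ∀ x, Real.log (cell f x).card + Real.log (cell g x).card
      - (Real.log (cell k x).card + Real.log (cell h x).card)
      = Real.log ((cell h x).card * w x) := fun x => by
    have hfx := card_cell_pos f x
    have hgx := card_cell_pos g x
    have hkx := card_cell_pos k x
    have hhx := card_cell_pos h x
    rw [← Real.log_mul hfx.ne' hgx.ne', ← Real.log_mul hkx.ne' hhx.ne',
      ← Real.log_div (by positivity) (by positivity)]
    congr 1
    simp only [w]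
    field_simp
  rw [← sub_nonpos]
  simp only [logMass, ← Finset.sum_add_distrib, ← Finset.sum_sub_distrib]
  refine (sum_le_sum_of_sum_cell_le h fun x => ?_).trans_eq (Finset.sum_const_zero (s := .univ))
  have hcell : ∀ y ∈ cell h x, cell h y = cell h x := fun y hy => cell_congr (mem_cell.1 hy)
  rw [Finset.sum_const_zero, Finset.sum_congr rfl fun y hy => (hlog y).trans (by rw [hcell y hy])]
  refine sum_log_card_mul_nonpos (fun y _ => ?_) ?_
  · have := card_cell_pos f y
    have := card_cell_pos g y
    have := card_cell_pos k y
    have := card_cell_pos h y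
    positivity
  · have hhx := card_cell_pos h x
    rw [Finset.sum_congr rfl fun y hy => show w y = _ by simp only [w, hcell y hy]; rfl,
      ← Finset.sum_div, div_le_one (by positivity)]
    exact sum_card_cell_mul_card_cell_div_le hf hg x

end Entropy

section Energy

variable {Ω β γ : Type*} [Fintype Ω]

/-- The squared `L²` norm of the conditional expectation of `h` given `f`. -/
def energy (f : Ω → β) (h : Ω → ℝ) : ℝ := ∑ x, cellAvg f h x ^ 2

theorem energy_nonneg (f : Ω → β) (h : Ω → ℝ) : 0 ≤ energy f h :=
  Finset.sum_nonneg fun _ _ => sq_nonneg _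

theorem energy_le_card (f : Ω → β) {h : Ω → ℝ} (h0 : ∀ x, 0 ≤ h x) (h1 : ∀ x, h x ≤ 1) :
    energy f h ≤ Fintype.card Ω := by
  refine (Finset.sum_le_card_nsmul _ _ 1 fun x _ => ?_).trans_eq (by simp)
  exact pow_le_one₀ (cellAvg_nonneg f h0 x) (cellAvg_le f h1 x)

theorem sum_mul_cellAvg {f : Ω → β} {φ : Ω → ℝ} (hφ : φ.FactorsThrough f) (h : Ω → ℝ) :
    ∑ x, φ x * cellAvg f h x = ∑ x, φ x * h x := by
  rw [← sum_cellAvg f fun x => φ x * h x]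
  exact Finset.sum_congr rfl fun x _ => (cellAvg_mul hφ h x).symm

theorem sum_sq_cellAvg_sub_cellAvg {g : Ω → γ} {f : Ω → β} (hfg : f.FactorsThrough g) (h : Ω → ℝ) :
    ∑ x, (cellAvg g h x - cellAvg f h x) ^ 2 = energy g h - energy f h := by
  have horth : ∑ x, cellAvg f h x * cellAvg g h x = energy f h :=
    calc ∑ x, cellAvg f h x * cellAvg g h x = ∑ x, cellAvg f h x * h x :=
          sum_mul_cellAvg (fun _ _ hxy => cellAvg_congr (hfg hxy)) h
      _ = ∑ x, cellAvg f h x * cellAvg f h x :=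
          (sum_mul_cellAvg (fun _ _ hxy => cellAvg_congr hxy) h).symm
      _ = energy f h := Finset.sum_congr rfl fun x _ => (sq _).symm
  calc ∑ x, (cellAvg g h x - cellAvg f h x) ^ 2
      = energy g h - 2 * ∑ x, cellAvg f h x * cellAvg g h x + energy f h := by
        simp only [energy, Finset.mul_sum, ← Finset.sum_sub_distrib, ← Finset.sum_add_distrib]
        exact Finset.sum_congr rfl fun x _ => by ring
    _ = energy g h - energy f h := by rw [horth]; ring

end Energy
section ShiftComparison

variable {Ω : Type*}

/-- The number of points of `Q` at which `p` takes a value in `[u, v)`. -/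
def windowCount (p : Ω → ℝ) (Q : Finset Ω) (u v : ℤ) : ℝ :=
  (Q.filter fun x => (u : ℝ) ≤ p x ∧ p x < v).card

theorem windowCount_nonneg (p : Ω → ℝ) (Q : Finset Ω) (u v : ℤ) : 0 ≤ windowCount p Q u v :=
  Nat.cast_nonneg _

theorem windowCount_le_card (p : Ω → ℝ) (Q : Finset Ω) (u v : ℤ) :
    windowCount p Q u v ≤ Q.card :=
  Nat.cast_le.2 (Finset.card_filter_le _ _)

theorem windowCount_eq_zero (p : Ω → ℝ) (Q : Finset Ω) {u v : ℤ} (h : v ≤ u) :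
    windowCount p Q u v = 0 := by
  have hvu : (v : ℝ) ≤ u := Int.cast_le.2 h
  rw [windowCount, Nat.cast_eq_zero, Finset.card_eq_zero, Finset.filter_eq_empty_iff]
  exact fun x _ hx => (hx.2.trans_le (hvu.trans hx.1)).false

theorem windowCount_le_windowCount {p p' : Ω → ℝ} {Q Q' : Finset Ω} {u v u' v' : ℤ}
    (h : ∀ x ∈ Q, (u : ℝ) ≤ p x → p x < v → x ∈ Q' ∧ (u' : ℝ) ≤ p' x ∧ p' x < v') :
    windowCount p Q u v ≤ windowCount p' Q' u' v' := by
  refine Nat.cast_le.2 (Finset.card_le_card fun x hx => ?_)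
  obtain ⟨hxQ, hux, hxv⟩ := Finset.mem_filter.1 hx
  exact Finset.mem_filter.2 (h x hxQ hux hxv)

/-- Two cells `Q₁`, `Q₂` and two further cells `Q₁'`, `Q₂'` meeting them inside the window `[l, r)`
such that `p` has almost the same distribution on `Q₁` and `Q₂`, and `p'` on `Q₁'` and `Q₂'`. Up
to an error of one, `p'` is the translate of `p` by `s₁` on `Q₁` and by `s₂` on `Q₂'`. On `Q₂` the
window is bordered by two gaps of length `L`, which exceeds `|s₁ - s₂|`. -/
structure ShiftedCells (p p' : Ω → ℝ) (Q₁ Q₂ Q₁' Q₂' : Finset Ω) (l r : ℤ) (N : ℕ)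
    (s₁ s₂ L ε H : ℝ) : Prop where
  two_le : 2 ≤ N
  left_nonneg : 0 ≤ l
  right_le : r ≤ N
  card_pos₁ : (0 : ℝ) < Q₁.card
  card_pos₂ : (0 : ℝ) < Q₂.card
  card_pos₂' : (0 : ℝ) < Q₂'.card
  close : ∀ u v : ℤ, |u| ≤ 4 * N → |v| ≤ 4 * N →
    windowCount p Q₂ u v / Q₂.card ≤ windowCount p Q₁ u v / Q₁.card + ε
  close' : ∀ u v : ℤ, |u| ≤ 4 * N → |v| ≤ 4 * N →
    windowCount p' Q₁' u v / Q₁'.card ≤ windowCount p' Q₂' u v / Q₂'.card + ε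
  mem₁' : ∀ x ∈ Q₁, (l : ℝ) ≤ p x → p x < r → x ∈ Q₁'
  mem₂ : ∀ x ∈ Q₂', (l : ℝ) - L ≤ p x → p x ≤ r + L → x ∈ Q₂
  shift₁ : ∀ x ∈ Q₁, |p' x - p x - s₁| ≤ 1
  shift₂ : ∀ x ∈ Q₂', |p' x - p x - s₂| ≤ 1
  right_gap : ∀ x ∈ Q₂, (r : ℝ) ≤ p x → r + L < p x
  left_gap : ∀ x ∈ Q₂, p x < l → p x < l - L
  abs_shift_le : |s₁| ≤ N
  le_abs_sub : 6 ≤ |s₁ - s₂|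
  abs_sub_le : |s₁ - s₂| + 4 ≤ L
  eps_nonneg : 0 ≤ ε
  card_mul_card_le : (Q₁'.card : ℝ) * Q₂.card ≤ Q₁.card * Q₂'.card
  card_le : (Q₁'.card : ℝ) ≤ H * Q₁.card

namespace ShiftedCells

variable {p p' : Ω → ℝ} {Q₁ Q₂ Q₁' Q₂' : Finset Ω} {l r : ℤ} {N : ℕ} {s₁ s₂ L ε H : ℝ}

theorem windowCount_shift_le (h : ShiftedCells p p' Q₁ Q₂ Q₁' Q₂' l r N s₁ s₂ L ε H) {u v : ℤ}
    (hlu : l ≤ u) (hvr : v ≤ r) :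
    windowCount p Q₁ u v ≤ windowCount p' Q₁' (u - 1 + ⌊s₁⌋) (v + 2 + ⌊s₁⌋) := by
  have hlu' : (l : ℝ) ≤ u := Int.cast_le.2 hlu
  have hvr' : (v : ℝ) ≤ r := Int.cast_le.2 hvr
  have hfloor := Int.floor_le s₁
  have hfloor' := Int.lt_floor_add_one s₁
  refine windowCount_le_windowCount fun x hx hux hxv => ?_
  have hs := abs_le.1 (h.shift₁ x hx)
  refine ⟨h.mem₁' x hx (hlu'.trans hux) (hxv.trans_le hvr'), ?_, ?_⟩ <;> push_cast <;> linarith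

theorem windowCount_unshift_le (h : ShiftedCells p p' Q₁ Q₂ Q₁' Q₂' l r N s₁ s₂ L ε H)
    {u v u₀ v₀ : ℤ} (hlu : l ≤ u) (hvr : v ≤ r)
    (hwindow : ∀ x ∈ Q₂, (u : ℝ) + (s₁ - s₂) - 4 ≤ p x → p x < v + (s₁ - s₂) + 4 →
      (u₀ : ℝ) ≤ p x ∧ p x < v₀) :
    windowCount p' Q₂' (u - 1 + ⌊s₁⌋) (v + 2 + ⌊s₁⌋) ≤ windowCount p Q₂ u₀ v₀ := by
  have hlu' : (l : ℝ) ≤ u := Int.cast_le.2 hlu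
  have hvr' : (v : ℝ) ≤ r := Int.cast_le.2 hvr
  have hfloor := Int.floor_le s₁
  have hfloor' := Int.lt_floor_add_one s₁
  have hL := h.abs_sub_le
  have hs₁₂ := abs_le.1 (le_refl |s₁ - s₂|)
  refine windowCount_le_windowCount fun x hx hux hxv => ?_
  have hs := abs_le.1 (h.shift₂ x hx)
  push_cast at hux hxv
  have hxQ := h.mem₂ x hx (by linarith) (by linarith)
  exact ⟨hxQ, hwindow x hxQ (by linarith) (by linarith)⟩

/-- Moving a window by `s₁ - s₂` changes its relative mass in `Q₂` only slightly: transfer it from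
`Q₂` to `Q₁`, from there by `s₁` to `Q₁'`, to `Q₂'`, and by `-s₂` back to `Q₂`. -/
theorem windowCount_div_le (h : ShiftedCells p p' Q₁ Q₂ Q₁' Q₂' l r N s₁ s₂ L ε H)
    {u v u₀ v₀ : ℤ} (hlu : l ≤ u) (huv : u < v) (hvr : v ≤ r)
    (hwindow : ∀ x ∈ Q₂, (u : ℝ) + (s₁ - s₂) - 4 ≤ p x → p x < v + (s₁ - s₂) + 4 →
      (u₀ : ℝ) ≤ p x ∧ p x < v₀) :
    windowCount p Q₂ u v / Q₂.card ≤ windowCount p Q₂ u₀ v₀ / Q₂.card + ε * (1 + H) := by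
  obtain ⟨hs₁l, hs₁u⟩ := abs_le.1 h.abs_shift_le
  have hfloor_le : ⌊s₁⌋ ≤ N := Int.cast_le.1 ((Int.floor_le s₁).trans (by exact_mod_cast hs₁u))
  have hle_floor : -(N : ℤ) ≤ ⌊s₁⌋ := Int.le_floor.2 (by exact_mod_cast hs₁l)
  have hN := h.two_le
  have hl := h.left_nonneg
  have hr := h.right_le
  have hclose := h.close u v (by rw [abs_le]; omega) (by rw [abs_le]; omega)
  have hclose' := h.close' (u - 1 + ⌊s₁⌋) (v + 2 + ⌊s₁⌋)
    (by rw [abs_le]; omega) (by rw [abs_le]; omega)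
  set R := windowCount p Q₂ u₀ v₀
  have hR : 0 ≤ R := windowCount_nonneg ..
  have hpos₁ := h.card_pos₁
  have hpos₂ := h.card_pos₂
  have hpos₂' := h.card_pos₂'
  have htransfer : windowCount p Q₁ u v ≤ Q₁'.card * (R / Q₂'.card + ε) := by
    refine (h.windowCount_shift_le hlu hvr).trans ?_
    rcases (Nat.cast_nonneg (α := ℝ) Q₁'.card).eq_or_lt with hz | hz
    · exact (windowCount_le_card ..).trans_eq (by rw [← hz, zero_mul])
    · rw [mul_comm, ← div_le_iff₀ hz]
      exact hclose'.trans (by gcongr; exact h.windowCount_unshift_le hlu hvr hwindow)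
  have hcompare : (Q₁'.card : ℝ) * (R / Q₂'.card) ≤ Q₁.card * (R / Q₂.card) := by
    rw [← mul_div_assoc, ← mul_div_assoc, div_le_div_iff₀ hpos₂' hpos₂]
    nlinarith [h.card_mul_card_le]
  have hQ₁ : windowCount p Q₁ u v / Q₁.card ≤ R / Q₂.card + ε * H := by
    rw [div_le_iff₀ hpos₁]
    nlinarith [h.card_le, h.eps_nonneg]
  linarith

theorem windowCount_sub_right_div_le (h : ShiftedCells p p' Q₁ Q₂ Q₁' Q₂' l r N s₁ s₂ L ε H)
    (hs : 6 ≤ s₁ - s₂) (k : ℕ) (hk : (k : ℤ) ≤ r - l) :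
    windowCount p Q₂ (r - k) r / Q₂.card ≤ k * (ε * (1 + H)) := by
  have hL := (abs_le.1 (le_refl |s₁ - s₂|)).2.trans (le_sub_iff_add_le.2 h.abs_sub_le)
  induction k with
  | zero => simp [windowCount_eq_zero p Q₂ le_rfl]
  | succ k ih =>
    push_cast at hk
    have hstep := h.windowCount_div_le (u := r - (k + 1 : ℕ)) (v := r) (u₀ := r - k) (v₀ := r)
      (by push_cast; omega) (by push_cast; omega) le_rfl fun x hx hux hxv => by
        push_cast at hux ⊢
        refine ⟨by linarith, lt_of_not_ge fun hrx => ?_⟩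
        linarith [h.right_gap x hx hrx]
    have := ih (by omega)
    push_cast at hstep ⊢
    linarith

theorem windowCount_left_add_div_le (h : ShiftedCells p p' Q₁ Q₂ Q₁' Q₂' l r N s₁ s₂ L ε H)
    (hs : 6 ≤ s₂ - s₁) (k : ℕ) (hk : (k : ℤ) ≤ r - l) :
    windowCount p Q₂ l (l + k) / Q₂.card ≤ k * (ε * (1 + H)) := by
  have hL := (abs_le.1 (le_refl |s₁ - s₂|)).1
  have hL' := h.abs_sub_le
  induction k with
  | zero => simp [windowCount_eq_zero p Q₂ le_rfl]
  | succ k ih =>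
    push_cast at hk
    have hstep := h.windowCount_div_le (u := l) (v := l + (k + 1 : ℕ)) (u₀ := l) (v₀ := l + k)
      le_rfl (by push_cast; omega) (by push_cast; omega) fun x hx hux hxv => by
        push_cast at hxv ⊢
        refine ⟨le_of_not_gt fun hxl => ?_, by linarith⟩
        linarith [h.left_gap x hx hxl]
    have := ih (by omega)
    push_cast at hstep ⊢
    linarith

theorem windowCount_le (h : ShiftedCells p p' Q₁ Q₂ Q₁' Q₂' l r N s₁ s₂ L ε H) :
    windowCount p Q₂ l r / Q₂.card ≤ N * (ε * (1 + H)) := by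
  have hH : 0 ≤ H := nonneg_of_mul_nonneg_left ((Nat.cast_nonneg _).trans h.card_le) h.card_pos₁
  have hε := h.eps_nonneg
  rcases le_total r l with hrl | hlr
  · rw [windowCount_eq_zero p Q₂ hrl, zero_div]
    positivity
  obtain ⟨k, hk⟩ := Int.eq_ofNat_of_zero_le (sub_nonneg.2 hlr)
  have hkN : (k : ℝ) ≤ N := by
    have := h.left_nonneg
    have := h.right_le
    exact_mod_cast (by omega : k ≤ N)
  refine le_trans ?_ (mul_le_mul_of_nonneg_right hkN (by positivity))
  rcases le_abs.1 h.le_abs_sub with hs | hs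
  · simpa [← hk] using h.windowCount_sub_right_div_le hs k hk.ge
  · simpa [← hk] using h.windowCount_left_add_div_le (by linarith) k hk.ge

end ShiftedCells

end ShiftComparison

section CriticalCells

variable {Ω : Type*}

/-- The partition into unit squares of the coordinates `(a, b)`. -/
def coarse (a b : Ω → ℝ) (x : Ω) : ℤ × ℤ := (⌊a x⌋, ⌊b x⌋)

/-- The partition into rectangles of length `1` in `a` and height `T⁻³` in `b`. -/
def fine (T : ℕ) (a b : Ω → ℝ) (x : Ω) : ℤ × ℤ := (⌊a x⌋, ⌊(T : ℝ) ^ 3 * b x⌋)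

theorem floor_eq_floor_of_floor_pow_mul_eq {T m : ℕ} (hT : 0 < T) {s t : ℝ}
    (h : ⌊(T : ℝ) ^ m * s⌋ = ⌊(T : ℝ) ^ m * t⌋) : ⌊s⌋ = ⌊t⌋ := by
  have hTm : T ^ m ≠ 0 := by positivity
  rw [← Int.natCast_mul_floor_div_cancel hTm s, ← Int.natCast_mul_floor_div_cancel hTm t,
    Nat.cast_pow, h]

theorem fine_eq_iff {T : ℕ} {a b : Ω → ℝ} {x y : Ω} : fine T a b x = fine T a b y ↔
    ⌊a x⌋ = ⌊a y⌋ ∧ ⌊(T : ℝ) ^ 3 * b x⌋ = ⌊(T : ℝ) ^ 3 * b y⌋ :=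
  Prod.mk_inj

theorem coarse_factorsThrough_fine {T : ℕ} (hT : 0 < T) (a b : Ω → ℝ) :
    (coarse a b).FactorsThrough (fine T a b) := fun _ _ h =>
  have h := fine_eq_iff.1 h
  Prod.ext h.1 (floor_eq_floor_of_floor_pow_mul_eq hT h.2)

/-- The set of points at which `a` has its fractional part in `[c.1 / B, c.2 / B)`. -/
def slab (B : ℕ) (a : Ω → ℝ) (c : ℤ × ℤ) : Set Ω :=
  {x | (c.1 : ℝ) ≤ B * Int.fract (a x) ∧ B * Int.fract (a x) < c.2}

/-- The pairs of indices of the slabs on which the distributions of `a` on different cells are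
compared. The range is larger than `[0, B]` since windows get translated. -/
def gridPairs (B : ℕ) : Finset (ℤ × ℤ) :=
  Finset.Icc (-(4 * B : ℤ)) (4 * B) ×ˢ Finset.Icc (-(4 * B : ℤ)) (4 * B)

theorem mem_gridPairs {B : ℕ} {u v : ℤ} : (u, v) ∈ gridPairs B ↔ |u| ≤ 4 * B ∧ |v| ≤ 4 * B := by
  simp only [gridPairs, Finset.mem_product, Finset.mem_Icc, abs_le]

/-- The coordinate `a` relative to the unit interval containing `a X`, in units of `T⁻⁴`. -/
def rescale (T : ℕ) (a : Ω → ℝ) (X x : Ω) : ℝ := (T : ℝ) ^ 4 * (a x - ⌊a X⌋)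

theorem mem_slab_iff {T : ℕ} {a : Ω → ℝ} {X y : Ω} (h : ⌊a y⌋ = ⌊a X⌋) {u v : ℤ} :
    y ∈ slab (T ^ 4) a (u, v) ↔ (u : ℝ) ≤ rescale T a X y ∧ rescale T a X y < v := by
  simp only [slab, rescale, Int.fract, h, mem_ofPred_eq, Nat.cast_pow]

variable [Fintype Ω]

/-- The squared distance between the distribution of `a` on the fine cell of a point and that on
its coarse cell. -/
def defect (T : ℕ) (a b : Ω → ℝ) (x : Ω) : ℝ :=
  ∑ c ∈ gridPairs (T ^ 4), (cellAvg (fine T a b) ((slab (T ^ 4) a c).indicator 1) x -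
    cellAvg (coarse a b) ((slab (T ^ 4) a c).indicator 1) x) ^ 2

theorem defect_nonneg (T : ℕ) (a b : Ω → ℝ) (x : Ω) : 0 ≤ defect T a b x :=
  Finset.sum_nonneg fun _ _ => sq_nonneg _

theorem defect_factorsThrough_fine {T : ℕ} (hT : 0 < T) (a b : Ω → ℝ) :
    (defect T a b).FactorsThrough (fine T a b) := fun x y h => by
  simp only [defect, cellAvg_congr h, cellAvg_congr (coarse_factorsThrough_fine hT a b h)]

theorem mul_defect_le_of_cellAvg_le {T : ℕ} (hT : 0 < T) {a b : Ω → ℝ} {x : Ω} {η lam : ℝ}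
    (hdef : cellAvg (coarse a b) (defect T a b) x ≤ η)
    (hbig : lam * (cell (coarse a b) x).card ≤ (cell (fine T a b) x).card) :
    lam * defect T a b x ≤ η := by
  have hpos := card_cell_pos (coarse a b) x
  rw [cellAvg, div_le_iff₀ hpos] at hdef
  refine le_of_mul_le_mul_right ?_ hpos
  calc lam * defect T a b x * (cell (coarse a b) x).card
      = lam * (cell (coarse a b) x).card * defect T a b x := by ring
    _ ≤ (cell (fine T a b) x).card * defect T a b x :=
        mul_le_mul_of_nonneg_right hbig (defect_nonneg ..)
    _ = ∑ y ∈ cell (fine T a b) x, defect T a b y := by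
        rw [← nsmul_eq_mul, ← Finset.sum_const]
        exact Finset.sum_congr rfl fun y hy =>
          (defect_factorsThrough_fine hT a b (mem_cell.1 hy)).symm
    _ ≤ ∑ y ∈ cell (coarse a b) x, defect T a b y :=
        Finset.sum_le_sum_of_subset_of_nonneg
          (cell_subset_cell (coarse_factorsThrough_fine hT a b) x)
          fun y _ _ => defect_nonneg T a b y
    _ ≤ η * (cell (coarse a b) x).card := hdef

theorem abs_cellAvg_fine_sub_cellAvg_coarse_le {T : ℕ} (hT : 0 < T) {a b : Ω → ℝ} {x : Ω}
    {η lam ε : ℝ} (hlam : 0 < lam) (hε : 0 ≤ ε) (hη : η ≤ lam * ε ^ 2)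
    (hdef : cellAvg (coarse a b) (defect T a b) x ≤ η)
    (hbig : lam * (cell (coarse a b) x).card ≤ (cell (fine T a b) x).card)
    {c : ℤ × ℤ} (hc : c ∈ gridPairs (T ^ 4)) :
    |cellAvg (fine T a b) ((slab (T ^ 4) a c).indicator 1) x -
      cellAvg (coarse a b) ((slab (T ^ 4) a c).indicator 1) x| ≤ ε := by
  have hdefect : defect T a b x ≤ ε ^ 2 :=
    le_of_mul_le_mul_left ((mul_defect_le_of_cellAvg_le hT hdef hbig).trans hη) hlam
  refine abs_le_of_sq_le_sq (le_trans ?_ hdefect) hε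
  exact Finset.single_le_sum (f := fun c => (cellAvg (fine T a b) ((slab (T ^ 4) a c).indicator 1) x
    - cellAvg (coarse a b) ((slab (T ^ 4) a c).indicator 1) x) ^ 2) (fun _ _ => sq_nonneg _) hc

theorem cellAvg_slab_eq_windowCount_div {T : ℕ} {a b : Ω → ℝ} {X x : Ω} (h : ⌊a x⌋ = ⌊a X⌋)
    (u v : ℤ) :
    cellAvg (fine T a b) ((slab (T ^ 4) a (u, v)).indicator 1) x =
      windowCount (rescale T a X) (cell (fine T a b) x) u v / (cell (fine T a b) x).card := by
  classical
  rw [cellAvg, windowCount, Finset.card_filter, Nat.cast_sum]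
  congr 1
  refine Finset.sum_congr rfl fun y hy => ?_
  have hy : ⌊a y⌋ = ⌊a X⌋ := (congrArg Prod.fst (mem_cell.1 hy)).trans h
  simp only [indicator, mem_slab_iff hy, Pi.one_apply, Nat.cast_ite, Nat.cast_one, Nat.cast_zero]

theorem windowCount_div_le_windowCount_div_add {T : ℕ} (hT : 0 < T) {a b : Ω → ℝ} {X x y : Ω}
    {η lam ε : ℝ} (hlam : 0 < lam) (hε : 0 ≤ ε) (hη : 4 * η ≤ lam * ε ^ 2)
    (hx : coarse a b x = coarse a b X) (hy : coarse a b y = coarse a b X)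
    (hdef : cellAvg (coarse a b) (defect T a b) X ≤ η)
    (hxbig : lam * (cell (coarse a b) X).card ≤ (cell (fine T a b) x).card)
    (hybig : lam * (cell (coarse a b) X).card ≤ (cell (fine T a b) y).card)
    {u v : ℤ} (hu : |u| ≤ 4 * (T ^ 4 : ℕ)) (hv : |v| ≤ 4 * (T ^ 4 : ℕ)) :
    windowCount (rescale T a X) (cell (fine T a b) x) u v / (cell (fine T a b) x).card ≤
      windowCount (rescale T a X) (cell (fine T a b) y) u v / (cell (fine T a b) y).card + ε := by
  have hdev {z : Ω} (hz : coarse a b z = coarse a b X)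
      (hzbig : lam * (cell (coarse a b) X).card ≤ (cell (fine T a b) z).card) :=
    abs_le.1 (abs_cellAvg_fine_sub_cellAvg_coarse_le hT hlam (η := η) (ε := ε / 2) (x := z)
      (div_nonneg hε zero_le_two) (by linarith)
      (by rwa [cellAvg_congr hz]) (by rwa [cell_congr hz]) (mem_gridPairs.2 ⟨hu, hv⟩))
  have hxdev := hdev hx hxbig
  have hydev := hdev hy hybig
  rw [cellAvg_congr hx, cellAvg_slab_eq_windowCount_div (congrArg Prod.fst hx)] at hxdev
  rw [cellAvg_congr hy, cellAvg_slab_eq_windowCount_div (congrArg Prod.fst hy)] at hydev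
  linarith

end CriticalCells

section CriticalCells

variable {Ω : Type*}

theorem ceil_add_lt_mul_of_gap {f : Ω → ℝ} {B g w L : ℝ} (hB : 0 < B) (hL : L + 1 ≤ B * w)
    (hgap : ∀ x, g ≤ f x → g + w ≤ f x) {x : Ω} (hx : ⌈B * g⌉ ≤ B * f x) :
    ⌈B * g⌉ + L < B * f x := by
  have hle := hgap x ((mul_le_mul_iff_right₀ hB).1 ((Int.le_ceil _).trans hx))
  linarith [Int.ceil_lt_add_one (B * g), mul_le_mul_of_nonneg_left hle hB.le]

theorem mul_lt_floor_sub_of_gap {f : Ω → ℝ} {B g w L : ℝ} (hB : 0 < B) (hL : L + 1 ≤ B * w)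
    (hgap : ∀ x, g ≤ f x → g + w ≤ f x) {x : Ω} (hx : B * f x < ⌊B * (g + w)⌋) :
    B * f x < ⌊B * (g + w)⌋ - L := by
  have hlt : f x < g + w := (mul_lt_mul_iff_right₀ hB).1 (hx.trans_le (Int.floor_le _))
  have hle : f x ≤ g := le_of_not_ge fun hge => (hgap x hge).not_gt hlt
  linarith [Int.lt_floor_add_one (B * (g + w)), mul_le_mul_of_nonneg_left hle hB.le]

/-- Two directions `a` and `a'` at a critical distance `ζ`, between `T⁻²` and `T⁻¹`, such that the
values of `a` have a gap of length `w` in every interval of length `τ / 4`. The thresholds `σ`, `η`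
and `ε`, for proportions of points, for defects and for errors, decrease fast enough. -/
structure CriticalScale (T : ℕ) (a a' b : Ω → ℝ) (ζ κ τ w σ η ε : ℝ) : Prop where
  sixteen_le : 16 ≤ T
  eq_add_add : ∀ x, a' x = a x + ζ * b x + κ
  abs_slope_le : |ζ| ≤ 1 / T
  le_abs_slope : 1 / (T : ℝ) ^ 2 ≤ |ζ|
  div_le_gap : 16 / T ≤ w
  exists_gap : ∀ s : ℝ, ∃ g, s ≤ g ∧ g + w ≤ s + τ / 4 ∧ ∀ x, g ≤ a x → g + w ≤ a x
  sigma_pos : 0 < σ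
  eta_pos : 0 < η
  eps_pos : 0 < ε
  eps_le : ε * 8 * T ^ 8 ≤ σ ^ 2
  eta_le : 8 * η * T ^ 4 ≤ ε ^ 2 * σ ^ 2

variable [Fintype Ω]

/-- A coarse cell seen from two directions at a critical distance: many of its points (those of
`core`) lie well inside their coarse cells for both directions, and the defects of both directions
are small. -/
structure CriticalCell (T : ℕ) (a a' b : Ω → ℝ) (ζ κ τ w σ η ε : ℝ) (X : Ω) (core : Finset Ω) : Prop
    extends CriticalScale T a a' b ζ κ τ w σ η ε where
  mem_core : X ∈ core
  coarse_eq : ∀ x ∈ core, coarse a b x = coarse a b X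
  coarse_eq' : ∀ x ∈ core, coarse a' b x = coarse a' b X
  fract_mem : ∀ x ∈ core, Int.fract (a x) ∈ Icc τ (1 - τ)
  fract_mem' : ∀ x ∈ core, Int.fract (a' x) ∈ Icc τ (1 - τ)
  card_le : σ * (cell (coarse a b) X).card ≤ core.card
  card_le' : σ * (cell (coarse a' b) X).card ≤ core.card
  cellAvg_defect_le : cellAvg (coarse a b) (defect T a b) X ≤ η
  cellAvg_defect_le' : cellAvg (coarse a' b) (defect T a' b) X ≤ η

/-- A window `[l, r)` for `rescale T a X` which contains `core`, is bordered by two gaps of length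
`2 * T ^ 3`, and stays inside the coarse cells of `X` for both directions. -/
structure GapWindow (T : ℕ) (a a' b : Ω → ℝ) (X : Ω) (core : Finset Ω) (l r : ℤ) : Prop where
  left_nonneg : 0 ≤ l
  right_le : r ≤ (T ^ 4 : ℕ)
  mem_of_mem_core : ∀ x ∈ core, (l : ℝ) ≤ rescale T a X x ∧ rescale T a X x < r
  right_gap : ∀ x, (r : ℝ) ≤ rescale T a X x → r + 2 * (T : ℝ) ^ 3 < rescale T a X x
  left_gap : ∀ x, rescale T a X x < l → rescale T a X x < l - 2 * (T : ℝ) ^ 3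
  floor_eq : ∀ x, l - 2 * (T : ℝ) ^ 3 ≤ rescale T a X x →
    rescale T a X x ≤ r + 2 * (T : ℝ) ^ 3 → ⌊a x⌋ = ⌊a X⌋
  floor_eq' : ∀ x, ⌊b x⌋ = ⌊b X⌋ → (l : ℝ) ≤ rescale T a X x → rescale T a X x < r →
    ⌊a' x⌋ = ⌊a' X⌋

namespace CriticalCell

variable {T : ℕ} {a a' b : Ω → ℝ} {ζ κ τ w σ η ε : ℝ} {X : Ω} {core : Finset Ω}

theorem pos (h : CriticalCell T a a' b ζ κ τ w σ η ε X core) : 0 < T :=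
  (by norm_num : 0 < 16).trans_le h.sixteen_le

theorem sixteen_le_cast (h : CriticalCell T a a' b ζ κ τ w σ η ε X core) : (16 : ℝ) ≤ T := by
  exact_mod_cast h.sixteen_le

theorem sixteen_mul_pow_le (h : CriticalCell T a a' b ζ κ τ w σ η ε X core) :
    16 * (T : ℝ) ^ 3 ≤ T ^ 4 * w := by
  have hT : (0 : ℝ) < T := by exact_mod_cast h.pos
  calc 16 * (T : ℝ) ^ 3 = T ^ 4 * (16 / T) := by field_simp
    _ ≤ T ^ 4 * w := by gcongr; exact h.div_le_gap

theorem sub_sub_sub_eq (h : CriticalCell T a a' b ζ κ τ w σ η ε X core) (x y : Ω) :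
    a' x - a x - (a' y - a y) = ζ * (b x - b y) := by
  rw [h.eq_add_add x, h.eq_add_add y]
  ring

theorem abs_sub_sub_sub_le (h : CriticalCell T a a' b ζ κ τ w σ η ε X core) {x y : Ω}
    (hxy : ⌊b x⌋ = ⌊b y⌋) : |a' x - a x - (a' y - a y)| ≤ 1 / T := by
  rw [h.sub_sub_sub_eq, abs_mul]
  exact (mul_le_of_le_one_right (abs_nonneg ζ)
    (Int.abs_sub_lt_one_of_floor_eq_floor hxy).le).trans h.abs_slope_le

theorem rescale_sub_sub_sub_eq (h : CriticalCell T a a' b ζ κ τ w σ η ε X core) (x y : Ω) :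
    rescale T a' X x - rescale T a X x - (rescale T a' X y - rescale T a X y) =
      T ^ 4 * ζ * (b x - b y) := by
  rw [mul_assoc, ← h.sub_sub_sub_eq]
  simp only [rescale]
  ring

theorem abs_rescale_sub_sub_sub_le (h : CriticalCell T a a' b ζ κ τ w σ η ε X core) {x y : Ω}
    (hxy : ⌊(T : ℝ) ^ 3 * b x⌋ = ⌊(T : ℝ) ^ 3 * b y⌋) :
    |rescale T a' X x - rescale T a X x - (rescale T a' X y - rescale T a X y)| ≤ 1 := by
  have hT : (0 : ℝ) < T := by exact_mod_cast h.pos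
  have hslope : |T * ζ| ≤ 1 := by
    rw [abs_mul, abs_of_pos hT, mul_comm, ← le_div_iff₀ hT]
    exact h.abs_slope_le
  calc |rescale T a' X x - rescale T a X x - (rescale T a' X y - rescale T a X y)|
      = |T * ζ| * |T ^ 3 * b x - T ^ 3 * b y| := by
        rw [h.rescale_sub_sub_sub_eq, ← abs_mul]
        ring_nf
    _ ≤ 1 := mul_le_one₀ hslope (abs_nonneg _) (Int.abs_sub_lt_one_of_floor_eq_floor hxy).le

theorem fract_mem_Icc_of_mem_core (h : CriticalCell T a a' b ζ κ τ w σ η ε X core) {x : Ω}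
    (hx : x ∈ core) : a x - ⌊a X⌋ ∈
      Icc (max 0 (Int.fract (a X) - Int.fract (a' X)) + τ - 1 / T)
        (min 1 (1 + Int.fract (a X) - Int.fract (a' X)) - τ + 1 / T) := by
  have hfloor : ⌊a x⌋ = ⌊a X⌋ := congrArg Prod.fst (h.coarse_eq x hx)
  have hfloor' : ⌊a' x⌋ = ⌊a' X⌋ := congrArg Prod.fst (h.coarse_eq' x hx)
  have hfract := h.fract_mem x hx
  have hfract' := h.fract_mem' x hx
  have hshift := abs_le.1 (h.abs_sub_sub_sub_le (congrArg Prod.snd (h.coarse_eq x hx)))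
  have hT : (0 : ℝ) < 1 / T := one_div_pos.2 (by exact_mod_cast h.pos)
  simp only [Int.fract, hfloor, hfloor', mem_Icc] at *
  constructor
  · rcases max_cases 0 (a X - ⌊a X⌋ - (a' X - ⌊a' X⌋)) with ⟨hm, _⟩ | ⟨hm, _⟩ <;> linarith
  · rcases min_cases 1 (1 + (a X - ⌊a X⌋) - (a' X - ⌊a' X⌋)) with ⟨hm, _⟩ | ⟨hm, _⟩ <;> linarith

theorem gapWindow (h : CriticalCell T a a' b ζ κ τ w σ η ε X core) {lo hi g g' : ℝ}
    (hlo : max 0 (Int.fract (a X) - Int.fract (a' X)) = lo)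
    (hhi : min 1 (1 + Int.fract (a X) - Int.fract (a' X)) = hi)
    (hg : hi - τ / 2 ≤ g) (hgw : g + w ≤ hi - τ / 4)
    (hgap : ∀ x, g ≤ a x - ⌊a X⌋ → g + w ≤ a x - ⌊a X⌋)
    (hg' : lo + τ / 4 ≤ g') (hgw' : g' + w ≤ lo + τ / 2)
    (hgap' : ∀ x, g' ≤ a x - ⌊a X⌋ → g' + w ≤ a x - ⌊a X⌋) :
    GapWindow T a a' b X core ⌊(T : ℝ) ^ 4 * (g' + w)⌋ ⌈(T : ℝ) ^ 4 * g⌉ := by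
  have hT := h.sixteen_le_cast
  have hTinv : (0 : ℝ) < 1 / T := by positivity
  have hw : 16 * (1 / (T : ℝ)) ≤ w := by rw [mul_one_div]; exact h.div_le_gap
  have hT3 : (1 : ℝ) ≤ T ^ 3 := one_le_pow₀ (by linarith)
  have hB : (0 : ℝ) < T ^ 4 := by positivity
  have hBw := h.sixteen_mul_pow_le
  have hmono {s t : ℝ} : (T : ℝ) ^ 4 * s ≤ T ^ 4 * t ↔ s ≤ t := mul_le_mul_iff_right₀ hB
  have hlo0 : 0 ≤ lo := hlo ▸ le_max_left ..
  have hlod : Int.fract (a X) - Int.fract (a' X) ≤ lo := hlo ▸ le_max_right ..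
  have hhi1 : hi ≤ 1 := hhi ▸ min_le_left ..
  have hhid : hi ≤ 1 + Int.fract (a X) - Int.fract (a' X) := hhi ▸ min_le_right ..
  have hright (x : Ω) (hx : rescale T a X x ≤ ⌈(T : ℝ) ^ 4 * g⌉ + 2 * (T : ℝ) ^ 3) :
      a x - ⌊a X⌋ ≤ g + w :=
    hmono.1 (by rw [rescale] at hx; linarith [Int.ceil_lt_add_one ((T : ℝ) ^ 4 * g)])
  have hleft (x : Ω) (hx : ⌊(T : ℝ) ^ 4 * (g' + w)⌋ - 2 * (T : ℝ) ^ 3 ≤ rescale T a X x) :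
      g' ≤ a x - ⌊a X⌋ :=
    hmono.1 (by rw [rescale] at hx; linarith [Int.lt_floor_add_one ((T : ℝ) ^ 4 * (g' + w))])
  refine ⟨Int.floor_nonneg.2 (mul_nonneg hB.le (by linarith)), Int.ceil_le.2 ?_, fun x hx => ?_,
    fun x => ceil_add_lt_mul_of_gap hB (by linarith) hgap,
    fun x => mul_lt_floor_sub_of_gap hB (by linarith) hgap', fun x hxl hxr => ?_,
    fun x hb hxl hxr => ?_⟩
  · push_cast
    exact mul_le_of_le_one_right hB.le (by linarith)
  · obtain ⟨hx₁, hx₂⟩ := h.fract_mem_Icc_of_mem_core hx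
    rw [hlo] at hx₁
    rw [hhi] at hx₂
    exact ⟨(Int.floor_le _).trans (hmono.2 (by linarith)),
      (mul_lt_mul_of_pos_left (by linarith) hB).trans_le (Int.le_ceil _)⟩
  · have := hright x hxr
    have := hleft x hxl
    exact Int.floor_eq_iff.2 ⟨by linarith, by linarith⟩
  · have := hright x (by linarith)
    have := hleft x (by linarith)
    have := abs_le.1 (h.abs_sub_sub_sub_le hb)
    simp only [Int.fract] at *
    exact Int.floor_eq_iff.2 ⟨by linarith, by linarith⟩

theorem exists_gapWindow (h : CriticalCell T a a' b ζ κ τ w σ η ε X core) :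
    ∃ l r : ℤ, GapWindow T a a' b X core l r := by
  have hgap (s : ℝ) : ∃ g, s ≤ g ∧ g + w ≤ s + τ / 4 ∧
      ∀ x, g ≤ a x - ⌊a X⌋ → g + w ≤ a x - ⌊a X⌋ := by
    obtain ⟨g, hg, hgw, hgap⟩ := h.exists_gap (s + ⌊a X⌋)
    refine ⟨g - ⌊a X⌋, by linarith, by linarith, fun x hx => ?_⟩
    linarith [hgap x (by linarith)]
  obtain ⟨g, hg, hgw, hgap_g⟩ :=
    hgap (min 1 (1 + Int.fract (a X) - Int.fract (a' X)) - τ / 2)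
  obtain ⟨g', hg', hgw', hgap_g'⟩ :=
    hgap (max 0 (Int.fract (a X) - Int.fract (a' X)) + τ / 4)
  exact ⟨_, _, h.gapWindow rfl rfl hg (by linarith) hgap_g hg' (by linarith) hgap_g'⟩

end CriticalCell

end CriticalCells

section CriticalCells

variable {Ω : Type*} {T : ℕ} {a a' b : Ω → ℝ} {ζ κ τ w σ η ε : ℝ} {X : Ω}
  {core : Finset Ω} {l r : ℤ}

namespace GapWindow

theorem coarse_eq' (W : GapWindow T a a' b X core l r) {x : Ω}
    (hx : coarse a b x = coarse a b X) (hl : (l : ℝ) ≤ rescale T a X x)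
    (hr : rescale T a X x < r) : coarse a' b x = coarse a' b X :=
  have hb : ⌊b x⌋ = ⌊b X⌋ := congrArg Prod.snd hx
  Prod.ext (W.floor_eq' x hb hl hr) hb

theorem fine_eq' (W : GapWindow T a a' b X core l r) (hT : 0 < T) {x y : Ω}
    (hy : coarse a b y = coarse a b X) (hy' : coarse a' b y = coarse a' b X)
    (hxy : fine T a b x = fine T a b y) (hl : (l : ℝ) ≤ rescale T a X x)
    (hr : rescale T a X x < r) : fine T a' b x = fine T a' b y :=
  have hx' := W.coarse_eq' ((coarse_factorsThrough_fine hT a b hxy).trans hy) hl hr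
  fine_eq_iff.2 ⟨congrArg Prod.fst (hx'.trans hy'.symm), (fine_eq_iff.1 hxy).2⟩

theorem mem_gridPairs (W : GapWindow T a a' b X core l r) (hX : X ∈ core) :
    (l, r) ∈ gridPairs (T ^ 4) := by
  obtain ⟨hlX, hXr⟩ := W.mem_of_mem_core X hX
  have hlr : l ≤ r := Int.cast_le.1 (hlX.trans hXr.le)
  have hl := W.left_nonneg
  have hr := W.right_le
  refine _root_.mem_gridPairs.2 ⟨abs_le.2 ?_, abs_le.2 ?_⟩ <;> constructor <;> omega

end GapWindow

theorem abs_rescale_sub_rescale_le {x : Ω} (hx : ⌊a x⌋ = ⌊a X⌋) (hx' : ⌊a' x⌋ = ⌊a' X⌋) :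
    |rescale T a' X x - rescale T a X x| ≤ T ^ 4 := by
  have hfract : |Int.fract (a' x) - Int.fract (a x)| ≤ 1 := by
    rw [abs_le]
    constructor <;> linarith [Int.fract_nonneg (a x), Int.fract_lt_one (a x),
      Int.fract_nonneg (a' x), Int.fract_lt_one (a' x)]
  rw [Int.fract, Int.fract, hx, hx'] at hfract
  rw [rescale, rescale, ← mul_sub, abs_mul, abs_of_nonneg (by positivity)]
  exact mul_le_of_le_one_right (by positivity) hfract

variable [Fintype Ω]

/-- A point of the window `[l, r)` in the coarse cell of `X` whose fine cell has a substantial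
share of the coarse cell. -/
structure HeavyPoint (T : ℕ) (a b : Ω → ℝ) (X : Ω) (l r : ℤ) (y : Ω) : Prop where
  coarse_eq : coarse a b y = coarse a b X
  left_le : (l : ℝ) ≤ rescale T a X y
  lt_right : rescale T a X y < r
  card_le : ((cell (coarse a b) X).card : ℝ) ≤ T ^ 4 * (cell (fine T a b) y).card

namespace CriticalCell

theorem card_core_le (h : CriticalCell T a a' b ζ κ τ w σ η ε X core) :
    (core.card : ℝ) ≤ (cell (coarse a b) X).card :=
  Nat.cast_le.2 (Finset.card_le_card fun x hx => mem_cell.2 (h.coarse_eq x hx))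

theorem sigma_le_one (h : CriticalCell T a a' b ζ κ τ w σ η ε X core) : σ ≤ 1 :=
  le_of_mul_le_mul_right ((h.card_le.trans h.card_core_le).trans_eq (one_mul _).symm)
    (card_cell_pos (coarse a b) X)

theorem eps_le_half_sigma (h : CriticalCell T a a' b ζ κ τ w σ η ε X core) : ε ≤ σ / 2 := by
  have hT8 : (1 : ℝ) ≤ T ^ 8 := one_le_pow₀ (by linarith [h.sixteen_le_cast])
  have hεT := le_mul_of_one_le_right (mul_nonneg h.eps_pos.le (by norm_num : (0 : ℝ) ≤ 8)) hT8
  have hσ := mul_le_of_le_one_right h.sigma_pos.le h.sigma_le_one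
  linarith [h.eps_le, h.eps_pos, sq σ]

theorem le_cellAvg_slab (h : CriticalCell T a a' b ζ κ τ w σ η ε X core)
    (W : GapWindow T a a' b X core l r) :
    σ ≤ cellAvg (coarse a b) ((slab (T ^ 4) a (l, r)).indicator 1) X := by
  rw [cellAvg, le_div_iff₀ (card_cell_pos _ _)]
  calc σ * (cell (coarse a b) X).card ≤ core.card := h.card_le
    _ = ∑ x ∈ core, (slab (T ^ 4) a (l, r)).indicator 1 x := by
        rw [Finset.sum_congr rfl fun x hx => indicator_of_mem
          ((mem_slab_iff (congrArg Prod.fst (h.coarse_eq x hx))).2 (W.mem_of_mem_core x hx)) 1]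
        simp only [Pi.one_apply, Finset.sum_const, nsmul_eq_mul, mul_one]
    _ ≤ ∑ x ∈ cell (coarse a b) X, (slab (T ^ 4) a (l, r)).indicator 1 x :=
        Finset.sum_le_sum_of_subset_of_nonneg (fun x hx => mem_cell.2 (h.coarse_eq x hx))
          fun _ _ _ => indicator_nonneg (fun _ _ => zero_le_one) _

theorem four_mul_eta_le (h : CriticalCell T a a' b ζ κ τ w σ η ε X core) :
    4 * η ≤ σ ^ 2 / (2 * T ^ 4) * ε ^ 2 := by
  have hT : (0 : ℝ) < T := by exact_mod_cast h.pos
  rw [div_mul_eq_mul_div, le_div_iff₀ (by positivity)]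
  linarith [h.eta_le]

theorem sq_div_le_one_div (h : CriticalCell T a a' b ζ κ τ w σ η ε X core) :
    σ ^ 2 / (2 * T ^ 4) ≤ 1 / (T : ℝ) ^ 4 := by
  have hT : (0 : ℝ) < T := by exact_mod_cast h.pos
  have hσ : σ ^ 2 ≤ 1 := pow_le_one₀ h.sigma_pos.le h.sigma_le_one
  rw [div_le_div_iff₀ (by positivity) (by positivity)]
  nlinarith [pow_pos hT 4]

theorem four_mul_eta_le' (h : CriticalCell T a a' b ζ κ τ w σ η ε X core) :
    4 * η ≤ 1 / (T : ℝ) ^ 4 * ε ^ 2 :=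
  h.four_mul_eta_le.trans (mul_le_mul_of_nonneg_right h.sq_div_le_one_div (sq_nonneg ε))

theorem one_div_mul_card_le (h : CriticalCell T a a' b ζ κ τ w σ η ε X core) {x : Ω}
    (hbig : ((cell (coarse a b) X).card : ℝ) ≤ T ^ 4 * (cell (fine T a b) x).card) :
    1 / (T : ℝ) ^ 4 * (cell (coarse a b) X).card ≤ (cell (fine T a b) x).card := by
  have hT : (0 : ℝ) < T := by exact_mod_cast h.pos
  rwa [one_div_mul_eq_div, div_le_iff₀' (by positivity)]

theorem half_sigma_le_windowCount_div (h : CriticalCell T a a' b ζ κ τ w σ η ε X core)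
    (W : GapWindow T a a' b X core l r) {x : Ω} (hx : coarse a b x = coarse a b X)
    (hbig : ((cell (coarse a b) X).card : ℝ) ≤ T ^ 4 * (cell (fine T a b) x).card) :
    σ / 2 ≤ windowCount (rescale T a X) (cell (fine T a b) x) l r /
      (cell (fine T a b) x).card := by
  have hT : (0 : ℝ) < T := by exact_mod_cast h.pos
  have hlam : (0 : ℝ) < 1 / (T : ℝ) ^ 4 := by positivity
  have hη : η ≤ 1 / (T : ℝ) ^ 4 * ε ^ 2 := by
    linarith [h.four_mul_eta_le', mul_nonneg hlam.le (sq_nonneg ε)]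
  have hdev := abs_le.1 (abs_cellAvg_fine_sub_cellAvg_coarse_le h.pos (x := x) hlam h.eps_pos.le hη
    (by rw [cellAvg_congr hx]; exact h.cellAvg_defect_le)
    (by rw [cell_congr hx]; exact h.one_div_mul_card_le hbig) (W.mem_gridPairs h.mem_core))
  rw [cellAvg_congr hx, cellAvg_slab_eq_windowCount_div (congrArg Prod.fst hx)] at hdev
  linarith [h.le_cellAvg_slab W, h.eps_le_half_sigma]

theorem exists_heavyPoint (h : CriticalCell T a a' b ζ κ τ w σ η ε X core)
    (W : GapWindow T a a' b X core l r) {x : Ω} (hx : coarse a b x = coarse a b X)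
    (hbig : ((cell (coarse a b) X).card : ℝ) ≤ T ^ 4 * (cell (fine T a b) x).card) :
    ∃ y, HeavyPoint T a b X l r y ∧ fine T a b y = fine T a b x := by
  have hmass := (half_pos h.sigma_pos).trans_le (h.half_sigma_le_windowCount_div W hx hbig)
  rw [div_pos_iff_of_pos_right (card_cell_pos _ _), windowCount, Nat.cast_pos,
    Finset.card_pos] at hmass
  obtain ⟨y, hy⟩ := hmass
  obtain ⟨hyx, hly, hyr⟩ := Finset.mem_filter.1 hy
  have hyx := mem_cell.1 hyx
  exact ⟨y, ⟨(coarse_factorsThrough_fine h.pos a b hyx).trans hx, hly, hyr,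
    by rwa [cell_congr hyx]⟩, hyx⟩

theorem mul_card_le_card_cell_fine' (h : CriticalCell T a a' b ζ κ τ w σ η ε X core)
    (W : GapWindow T a a' b X core l r) {y : Ω} (hy : HeavyPoint T a b X l r y) :
    σ ^ 2 / (2 * T ^ 4) * (cell (coarse a' b) X).card ≤ (cell (fine T a' b) y).card := by
  have hT : (0 : ℝ) < T := by exact_mod_cast h.pos
  have hy' := W.coarse_eq' hy.coarse_eq hy.left_le hy.lt_right
  calc σ ^ 2 / (2 * T ^ 4) * (cell (coarse a' b) X).card
      = σ / (2 * T ^ 4) * (σ * (cell (coarse a' b) X).card) := by ring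
    _ ≤ σ / (2 * T ^ 4) * (T ^ 4 * (cell (fine T a b) y).card) := by
        have := h.sigma_pos
        exact mul_le_mul_of_nonneg_left
          (h.card_le'.trans (h.card_core_le.trans hy.card_le)) (by positivity)
    _ = σ / 2 * (cell (fine T a b) y).card := by field_simp
    _ ≤ windowCount (rescale T a X) (cell (fine T a b) y) l r :=
        (le_div_iff₀ (card_cell_pos _ _)).1
          (h.half_sigma_le_windowCount_div W hy.coarse_eq hy.card_le)
    _ ≤ (cell (fine T a' b) y).card := by
        refine Nat.cast_le.2 (Finset.card_le_card fun z hz => mem_cell.2 ?_)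
        obtain ⟨hzy, hlz, hzr⟩ := Finset.mem_filter.1 hz
        exact W.fine_eq' h.pos hy.coarse_eq hy' (mem_cell.1 hzy) hlz hzr

theorem six_le_abs_of_fine_eq (h : CriticalCell T a a' b ζ κ τ w σ η ε X core)
    {x₁ x₂ y₁ y₂ : Ω} (hsep : 1 / (T : ℝ) ≤ |b x₁ - b x₂|)
    (h₁ : fine T a b y₁ = fine T a b x₁) (h₂ : fine T a b y₂ = fine T a b x₂) :
    6 ≤ |T ^ 4 * ζ * (b y₁ - b y₂)| := by
  have hT := h.sixteen_le_cast
  have hclose {x y : Ω} (hyx : fine T a b y = fine T a b x) : |b x - b y| ≤ 1 / T ^ 3 := by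
    have hlt := (Int.abs_sub_lt_one_of_floor_eq_floor (congrArg Prod.snd hyx.symm)).le
    rwa [← mul_sub, abs_mul, abs_of_pos (by positivity), ← le_div_iff₀' (by positivity)] at hlt
  have hsep' : 1 / (T : ℝ) - 2 / T ^ 3 ≤ |b y₁ - b y₂| := by
    have htri := abs_sub_le (b x₁) (b y₁) (b x₂)
    have htri' := abs_sub_le (b y₁) (b y₂) (b x₂)
    rw [abs_sub_comm (b y₂)] at htri'
    linarith [hclose h₁, hclose h₂, show 2 / (T : ℝ) ^ 3 = 1 / T ^ 3 + 1 / T ^ 3 by ring]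
  have hslope : (T : ℝ) ^ 2 ≤ T ^ 4 * |ζ| :=
    calc (T : ℝ) ^ 2 = T ^ 4 * (1 / T ^ 2) := by field_simp
      _ ≤ T ^ 4 * |ζ| := by gcongr; exact h.le_abs_slope
  have htwo : 2 / (T : ℝ) ≤ 1 := (div_le_one (by linarith)).2 (by linarith)
  have hexpand : (T : ℝ) ^ 2 * (1 / T - 2 / T ^ 3) = T - 2 / T := by field_simp
  calc (6 : ℝ) ≤ T ^ 2 * (1 / T - 2 / T ^ 3) := by linarith
    _ ≤ T ^ 2 * |b y₁ - b y₂| := by gcongr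
    _ ≤ T ^ 4 * |ζ| * |b y₁ - b y₂| := by gcongr
    _ = |T ^ 4 * ζ * (b y₁ - b y₂)| := by
        rw [abs_mul, abs_mul, abs_of_pos (show (0 : ℝ) < T ^ 4 by positivity)]

theorem card_cell_fine'_le (h : CriticalCell T a a' b ζ κ τ w σ η ε X core)
    (W : GapWindow T a a' b X core l r) {y : Ω} (hy : HeavyPoint T a b X l r y) :
    ((cell (fine T a' b) y).card : ℝ) ≤ T ^ 4 / σ * (cell (fine T a b) y).card := by
  have hle := card_cell_le_card_cell (coarse_factorsThrough_fine h.pos a' b) y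
  rw [cell_congr (W.coarse_eq' hy.coarse_eq hy.left_le hy.lt_right)] at hle
  rw [div_mul_eq_mul_div, le_div_iff₀' h.sigma_pos]
  exact (mul_le_mul_of_nonneg_left hle h.sigma_pos.le).trans
    (h.card_le'.trans (h.card_core_le.trans hy.card_le))

theorem abs_rescale_sub_sub_sub_le_pow (h : CriticalCell T a a' b ζ κ τ w σ η ε X core)
    {x y : Ω} (hxy : ⌊b x⌋ = ⌊b y⌋) :
    |rescale T a' X x - rescale T a X x - (rescale T a' X y - rescale T a X y)| ≤ T ^ 3 := by
  have hT := h.sixteen_le_cast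
  have hb := (Int.abs_sub_lt_one_of_floor_eq_floor hxy).le
  have hslope := h.abs_slope_le
  calc |rescale T a' X x - rescale T a X x - (rescale T a' X y - rescale T a X y)|
      = T ^ 4 * |ζ| * |b x - b y| := by
        rw [h.rescale_sub_sub_sub_eq, abs_mul, abs_mul,
          abs_of_pos (show (0 : ℝ) < T ^ 4 by positivity)]
    _ ≤ T ^ 4 * (1 / T) * 1 := by gcongr
    _ = T ^ 3 := by field_simp

theorem shiftedCells (h : CriticalCell T a a' b ζ κ τ w σ η ε X core)
    (W : GapWindow T a a' b X core l r) {y₁ y₂ : Ω} (hy₁ : HeavyPoint T a b X l r y₁)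
    (hy₂ : HeavyPoint T a b X l r y₂) (hsep : 6 ≤ |T ^ 4 * ζ * (b y₁ - b y₂)|)
    (hcard : ((cell (fine T a' b) y₁).card : ℝ) * (cell (fine T a b) y₂).card ≤
      (cell (fine T a b) y₁).card * (cell (fine T a' b) y₂).card) :
    ShiftedCells (rescale T a X) (rescale T a' X) (cell (fine T a b) y₁) (cell (fine T a b) y₂)
      (cell (fine T a' b) y₁) (cell (fine T a' b) y₂) l r (T ^ 4)
      (rescale T a' X y₁ - rescale T a X y₁) (rescale T a' X y₂ - rescale T a X y₂)
      (2 * (T : ℝ) ^ 3) ε (T ^ 4 / σ) := by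
  have hT := h.sixteen_le_cast
  have hσ := h.sigma_pos
  have hy₁' := W.coarse_eq' hy₁.coarse_eq hy₁.left_le hy₁.lt_right
  have hy₂' := W.coarse_eq' hy₂.coarse_eq hy₂.left_le hy₂.lt_right
  exact {
    two_le := by
      calc 2 ≤ 16 ^ 4 := by norm_num
        _ ≤ T ^ 4 := Nat.pow_le_pow_left h.sixteen_le 4
    left_nonneg := W.left_nonneg
    right_le := W.right_le
    card_pos₁ := card_cell_pos _ _
    card_pos₂ := card_cell_pos _ _
    card_pos₂' := card_cell_pos _ _
    close := fun u v hu hv => windowCount_div_le_windowCount_div_add h.pos (by positivity)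
      h.eps_pos.le h.four_mul_eta_le' hy₂.coarse_eq hy₁.coarse_eq h.cellAvg_defect_le
      (h.one_div_mul_card_le hy₂.card_le) (h.one_div_mul_card_le hy₁.card_le) hu hv
    close' := fun u v hu hv => windowCount_div_le_windowCount_div_add h.pos (by positivity)
      h.eps_pos.le h.four_mul_eta_le hy₁' hy₂' h.cellAvg_defect_le'
      (h.mul_card_le_card_cell_fine' W hy₁) (h.mul_card_le_card_cell_fine' W hy₂) hu hv
    mem₁' := fun x hx hlx hxr =>
      mem_cell.2 (W.fine_eq' h.pos hy₁.coarse_eq hy₁' (mem_cell.1 hx) hlx hxr)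
    mem₂ := fun x hx hlx hxr => mem_cell.2 <| fine_eq_iff.2
      ⟨(W.floor_eq x hlx hxr).trans (congrArg Prod.fst hy₂.coarse_eq).symm,
        (fine_eq_iff.1 (mem_cell.1 hx)).2⟩
    shift₁ := fun x hx => h.abs_rescale_sub_sub_sub_le (congrArg Prod.snd (mem_cell.1 hx))
    shift₂ := fun x hx => h.abs_rescale_sub_sub_sub_le (congrArg Prod.snd (mem_cell.1 hx))
    right_gap := fun x _ => W.right_gap x
    left_gap := fun x _ => W.left_gap x
    abs_shift_le := (abs_rescale_sub_rescale_le (congrArg Prod.fst hy₁.coarse_eq)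
      (congrArg Prod.fst hy₁')).trans_eq (Nat.cast_pow T 4).symm
    le_abs_sub := by rwa [h.rescale_sub_sub_sub_eq]
    abs_sub_le := by
      have hb : ⌊b y₁⌋ = ⌊b y₂⌋ := congrArg Prod.snd (hy₁.coarse_eq.trans hy₂.coarse_eq.symm)
      have hT3 : (4 : ℝ) ≤ T ^ 3 := by nlinarith [sq_nonneg (T : ℝ)]
      linarith [h.abs_rescale_sub_sub_sub_le_pow hb]
    eps_nonneg := h.eps_pos.le
    card_mul_card_le := hcard
    card_le := h.card_cell_fine'_le W hy₁ }

theorem card_mul_card_lt (h : CriticalCell T a a' b ζ κ τ w σ η ε X core)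
    (W : GapWindow T a a' b X core l r) {y₁ y₂ : Ω} (hy₁ : HeavyPoint T a b X l r y₁)
    (hy₂ : HeavyPoint T a b X l r y₂) (hsep : 6 ≤ |T ^ 4 * ζ * (b y₁ - b y₂)|) :
    ((cell (fine T a b) y₁).card : ℝ) * (cell (fine T a' b) y₂).card <
      (cell (fine T a' b) y₁).card * (cell (fine T a b) y₂).card := by
  by_contra! hcard
  have hσ := h.sigma_pos
  have hT4 : (1 : ℝ) ≤ T ^ 4 := one_le_pow₀ (by linarith [h.sixteen_le_cast])
  have hsmall := (h.half_sigma_le_windowCount_div W hy₂.coarse_eq hy₂.card_le).trans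
    (h.shiftedCells W hy₁ hy₂ hsep hcard).windowCount_le
  have hlarge : (T : ℝ) ^ 4 * (ε * (1 + T ^ 4 / σ)) ≤ σ / 4 := by
    have hσT : σ ≤ T ^ 4 := h.sigma_le_one.trans hT4
    calc (T : ℝ) ^ 4 * (ε * (1 + T ^ 4 / σ)) = ε * T ^ 4 * (σ + T ^ 4) / σ := by field_simp
      _ ≤ ε * T ^ 4 * (T ^ 4 + T ^ 4) / σ := by have := h.eps_pos; gcongr
      _ = ε * 8 * T ^ 8 / σ / 4 := by ring
      _ ≤ σ ^ 2 / σ / 4 := by gcongr; exact h.eps_le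
      _ = σ / 4 := by field_simp
  push_cast at hsmall
  linarith

/-- On two heavy fine cells at different heights both `a` and `a'` have the same distribution, so
the distribution of `a` is almost invariant under a translation shorter than the gaps of `a`, and
the gaps swallow the window: this is impossible. -/
theorem abs_sub_lt (h : CriticalCell T a a' b ζ κ τ w σ η ε X core) {x₁ x₂ : Ω}
    (hx₁ : coarse a b x₁ = coarse a b X) (hx₂ : coarse a b x₂ = coarse a b X)
    (hbig₁ : ((cell (coarse a b) X).card : ℝ) ≤ T ^ 4 * (cell (fine T a b) x₁).card)
    (hbig₂ : ((cell (coarse a b) X).card : ℝ) ≤ T ^ 4 * (cell (fine T a b) x₂).card) :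
    |b x₁ - b x₂| < 1 / T := by
  by_contra! hsep
  obtain ⟨l, r, W⟩ := h.exists_gapWindow
  obtain ⟨y₁, hy₁, hyx₁⟩ := h.exists_heavyPoint W hx₁ hbig₁
  obtain ⟨y₂, hy₂, hyx₂⟩ := h.exists_heavyPoint W hx₂ hbig₂
  have hlt := h.card_mul_card_lt W hy₁ hy₂ (h.six_le_abs_of_fine_eq hsep hyx₁ hyx₂)
  have hgt := h.card_mul_card_lt W hy₂ hy₁
    (h.six_le_abs_of_fine_eq (by rwa [abs_sub_comm]) hyx₂ hyx₁)
  linarith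

end CriticalCell

end CriticalCells

section Branching

theorem sum_log_card_div_card_cell_le_of_filter {Ω γ : Type*} [Fintype Ω] [DecidableEq γ]
    (g : Ω → γ) (q : Finset Ω) (p : Ω → Prop) [DecidablePred p] {A B : ℝ} (hA : 0 < A) (hB : 0 < B)
    (hpA : (((q.filter p).image g).card : ℝ) ≤ A)
    (hpB : (((q.filter fun x => ¬ p x).image g).card : ℝ) ≤ B) :
    ∑ x ∈ q, Real.log (q.card / (cell g x).card) ≤
      (q.filter p).card * Real.log (2 * A) +
        (q.filter fun x => ¬ p x).card * Real.log (2 * B) := by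
  have sum_weights_le {S : Finset Ω} {C : ℝ} (hC : 0 < C) (hS : ((S.image g).card : ℝ) ≤ C) :
      ∑ x ∈ S, 1 / ((cell g x).card * (2 * C)) ≤ 1 / 2 :=
    calc ∑ x ∈ S, 1 / ((cell g x).card * (2 * C)) = ∑ x ∈ S, 1 / (2 * C) / (cell g x).card :=
          Finset.sum_congr rfl fun _ _ => by rw [div_div, mul_comm]
      _ ≤ ∑ _c ∈ S.image g, 1 / (2 * C) :=
          sum_div_card_cell_le g (φ := fun _ => 1 / (2 * C)) (fun _ => by positivity) S
      _ = (S.image g).card / C / 2 := by rw [Finset.sum_const, nsmul_eq_mul]; field_simp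
      _ ≤ 1 / 2 := div_le_div_of_nonneg_right ((div_le_one hC).2 hS) zero_le_two
  have hK : ∀ x, 0 < if p x then 2 * A else 2 * B := fun x => by split_ifs <;> positivity
  have weight_eq : ∀ x, 1 / ((cell g x).card * if p x then 2 * A else 2 * B) =
      if p x then 1 / ((cell g x).card * (2 * A)) else 1 / ((cell g x).card * (2 * B)) :=
    fun x => by split_ifs <;> rfl
  refine (sum_log_card_div_card_cell_le g hK ?_).trans_eq ?_
  · simp only [weight_eq, Finset.sum_ite]
    linarith [sum_weights_le hA hpA, sum_weights_le hB hpB]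
  · simp only [apply_ite Real.log, Finset.sum_ite, Finset.sum_const, nsmul_eq_mul]

variable {Ω : Type*}

/-- The partition into rectangles of length `1` in `a` and height `T⁻¹` in `b`, intermediate between
`coarse a b` and `fine T a b`. -/
def medium (T : ℕ) (a b : Ω → ℝ) (x : Ω) : ℤ × ℤ := (⌊a x⌋, ⌊(T : ℝ) * b x⌋)

theorem card_image_medium_le_of_mem_Ico {T : ℕ} {a b : Ω → ℝ} {S : Finset Ω} {k m : ℤ} {K : ℕ}
    (ha : ∀ x ∈ S, ⌊a x⌋ = k) (hb : ∀ x ∈ S, ⌊(T : ℝ) * b x⌋ ∈ Ico m (m + K)) :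
    (S.image (medium T a b)).card ≤ K := by
  have hsub : S.image (medium T a b) ⊆ {k} ×ˢ Finset.Ico m (m + K) :=
    Finset.image_subset_iff.2 fun x hx => Finset.mem_product.2
      ⟨Finset.mem_singleton.2 (ha x hx), Finset.mem_Ico.2 (hb x hx)⟩
  simpa using Finset.card_le_card hsub

theorem card_image_medium_le_two {T : ℕ} {a b : Ω → ℝ} {S : Finset Ω} {k : ℤ}
    (ha : ∀ x ∈ S, ⌊a x⌋ = k) (hb : ∀ x ∈ S, ∀ y ∈ S, T * (b x - b y) < 1) :
    (S.image (medium T a b)).card ≤ 2 := by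
  obtain rfl | hne := S.eq_empty_or_nonempty
  · simp
  obtain ⟨x₀, hx₀, hmin⟩ := S.exists_min_image b hne
  refine card_image_medium_le_of_mem_Ico (m := ⌊(T : ℝ) * b x₀⌋) ha fun x hx =>
    ⟨Int.floor_mono (mul_le_mul_of_nonneg_left (hmin x hx) T.cast_nonneg), Int.floor_lt.2 ?_⟩
  have hlt := hb x hx x₀ hx₀
  have hfloor := Int.lt_floor_add_one ((T : ℝ) * b x₀)
  push_cast
  linarith

variable [Fintype Ω]

theorem card_image_medium_le {T : ℕ} (hT : 0 < T) (a b : Ω → ℝ) (X : Ω) :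
    ((cell (coarse a b) X).image (medium T a b)).card ≤ T := by
  refine card_image_medium_le_of_mem_Ico (k := ⌊a X⌋) (m := T * ⌊b X⌋)
    (fun x hx => congrArg Prod.fst (mem_cell.1 hx)) fun x hx => ?_
  have hb : ⌊b x⌋ = ⌊b X⌋ := congrArg Prod.snd (mem_cell.1 hx)
  have hTpos : (0 : ℝ) < T := Nat.cast_pos.2 hT
  rw [← hb, mem_Ico, Int.le_floor, Int.floor_lt]
  push_cast
  constructor
  · exact mul_le_mul_of_nonneg_left (Int.floor_le _) hTpos.le
  · linarith [mul_lt_mul_of_pos_left (Int.lt_floor_add_one (b x)) hTpos]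

theorem card_image_fine_le {T : ℕ} (hT : 0 < T) (a b : Ω → ℝ) (X : Ω) :
    ((cell (coarse a b) X).image (fine T a b)).card ≤ T ^ 3 := by
  have hfine : fine T a b = medium (T ^ 3) a b := by ext <;> simp [medium, fine]
  exact hfine ▸ card_image_medium_le (pow_pos hT 3) a b X

theorem card_le_card_cell_coarse_div {T : ℕ} (hT : 0 < T) {a b : Ω → ℝ} {X : Ω} {S : Finset Ω}
    (hSX : S ⊆ cell (coarse a b) X)
    (hS : ∀ x ∈ S, T ^ 4 * ((cell (fine T a b) x).card : ℝ) ≤ (cell (coarse a b) X).card) :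
    (S.card : ℝ) ≤ (cell (coarse a b) X).card / T := by
  set c : ℝ := (cell (coarse a b) X).card / T ^ 4 with hc
  calc (S.card : ℝ) = ∑ _x ∈ S, 1 := by simp
    _ ≤ ∑ x ∈ S, c / (cell (fine T a b) x).card := Finset.sum_le_sum fun x hx => by
        rw [one_le_div (card_cell_pos _ x), hc, le_div_iff₀' (by positivity)]
        exact hS x hx
    _ ≤ ∑ _i ∈ S.image (fine T a b), c :=
        sum_div_card_cell_le _ (φ := fun _ => c) (fun _ => by positivity) S
    _ = (S.image (fine T a b)).card * c := by rw [Finset.sum_const, nsmul_eq_mul]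
    _ ≤ T ^ 3 * c := by
        gcongr
        exact_mod_cast (Finset.card_le_card (Finset.image_subset_image hSX)).trans
          (card_image_fine_le hT a b X)
    _ = (cell (coarse a b) X).card / T := by rw [hc]; field_simp

theorem log_two_mul_natCast_le {T : ℕ} (hT : 0 < T) :
    Real.log (2 * T) ≤ T * Real.log 2 := by
  have hpow : 2 * T ≤ 2 ^ T := by
    obtain ⟨n, rfl⟩ := Nat.exists_eq_succ_of_ne_zero hT.ne'
    rw [pow_succ']
    exact Nat.mul_le_mul_left 2 n.lt_two_pow_self
  rw [← Real.log_pow]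
  exact Real.log_le_log (by positivity) (by exact_mod_cast hpow)

/- The heavy points, lying in fine cells that carry a proportion at least `T⁻⁴` of the coarse cell,
occupy at most two medium cells. The remaining points are few since there are only `T³` fine cells,
so the whole coarse cell has bounded entropy with respect to the medium partition. -/
theorem sum_log_card_coarse_div_card_medium_le {T : ℕ} (hT : 0 < T) {a b : Ω → ℝ} {X : Ω}
    (h : ∀ x₁ x₂, coarse a b x₁ = coarse a b X → coarse a b x₂ = coarse a b X →
      ((cell (coarse a b) X).card : ℝ) ≤ T ^ 4 * (cell (fine T a b) x₁).card →
      ((cell (coarse a b) X).card : ℝ) ≤ T ^ 4 * (cell (fine T a b) x₂).card →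
      |b x₁ - b x₂| < 1 / (T : ℝ)) :
    ∑ x ∈ cell (coarse a b) X, Real.log ((cell (coarse a b) X).card /
      (cell (medium T a b) x).card) ≤ (cell (coarse a b) X).card * (3 * Real.log 2) := by
  have hTpos : (0 : ℝ) < T := Nat.cast_pos.2 hT
  set q := cell (coarse a b) X with hq
  set heavy : Ω → Prop := fun x => (q.card : ℝ) ≤ T ^ 4 * (cell (fine T a b) x).card with hheavy
  have card_image_heavy : ((q.filter heavy).image (medium T a b)).card ≤ 2 := by
    refine card_image_medium_le_two (k := ⌊a X⌋)
      (fun x hx => congrArg Prod.fst (mem_cell.1 (Finset.mem_of_mem_filter x hx)))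
      fun x hx y hy => ?_
    simp only [Finset.mem_filter, hq, mem_cell] at hx hy
    rw [mul_comm, ← lt_div_iff₀ hTpos]
    exact (le_abs_self _).trans_lt (h x y hx.1 hy.1 hx.2 hy.2)
  have card_image_light : ((q.filter fun x => ¬ heavy x).image (medium T a b)).card ≤ T :=
    (Finset.card_le_card (Finset.image_subset_image (Finset.filter_subset _ q))).trans
      (card_image_medium_le hT a b X)
  have card_light : ((q.filter fun x => ¬ heavy x).card : ℝ) ≤ q.card / T :=
    card_le_card_cell_coarse_div hT (Finset.filter_subset _ q) fun x hx =>
      (not_le.1 (Finset.mem_filter.1 hx).2).le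
  have log_four : Real.log (2 * 2) = 2 * Real.log 2 := by
    rw [Real.log_mul two_ne_zero two_ne_zero, two_mul]
  have hlog : 0 ≤ Real.log 2 := Real.log_nonneg one_le_two
  have hlogT : 0 ≤ Real.log (2 * T) := mod_cast Real.log_natCast_nonneg (2 * T)
  calc ∑ x ∈ q, Real.log (q.card / (cell (medium T a b) x).card)
      ≤ (q.filter heavy).card * Real.log (2 * 2) +
          (q.filter fun x => ¬ heavy x).card * Real.log (2 * T) :=
        sum_log_card_div_card_cell_le_of_filter _ q heavy two_pos hTpos
          (mod_cast card_image_heavy) (mod_cast card_image_light)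
    _ ≤ q.card * (2 * Real.log 2) + q.card / T * (T * Real.log 2) := by
        rw [log_four]
        gcongr
        · exact Finset.filter_subset _ _
        · exact log_two_mul_natCast_le hT
    _ = q.card * (3 * Real.log 2) := by field_simp; ring

theorem sum_log_card_coarse_div_card_medium_le_log {T : ℕ} (hT : 0 < T) (a b : Ω → ℝ) (X : Ω) :
    ∑ x ∈ cell (coarse a b) X, Real.log ((cell (coarse a b) X).card /
      (cell (medium T a b) x).card) ≤ (cell (coarse a b) X).card * Real.log T :=
  sum_log_card_div_card_cell_le_of_card_image_le _ (mod_cast hT)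
    (mod_cast card_image_medium_le hT a b X)

end Branching

section DyadicLevels

variable {Ω : Type*}

/-- The index of the dyadic interval of length `2⁻ⁿ` containing `u x`. -/
def dyadicIndex (u : Ω → ℝ) (n : ℕ) (x : Ω) : ℤ := ⌊(2 : ℝ) ^ n * u x⌋

/-- The index of the dyadic rectangle of size `2⁻ⁿ × 2⁻ˡ` containing `(P x, y x)`. -/
def dyadicRect (P y : Ω → ℝ) (n l : ℕ) (x : Ω) : ℤ × ℤ := (dyadicIndex P n x, dyadicIndex y l x)

theorem dyadicIndex_factorsThrough (u : Ω → ℝ) {m n : ℕ} (h : m ≤ n) :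
    (dyadicIndex u m).FactorsThrough (dyadicIndex u n) := fun x z hxz => by
  obtain ⟨k, rfl⟩ := Nat.exists_eq_add_of_le' h
  simp only [dyadicIndex, pow_add, mul_assoc] at hxz ⊢
  exact floor_eq_floor_of_floor_pow_mul_eq (T := 2) two_pos (mod_cast hxz)

theorem dyadicRect_factorsThrough (P y : Ω → ℝ) {n l n' l' : ℕ} (hn : n' ≤ n) (hl : l' ≤ l) :
    (dyadicRect P y n' l').FactorsThrough (dyadicRect P y n l) := fun _ _ h =>
  Prod.ext (dyadicIndex_factorsThrough P hn (congrArg Prod.fst h))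
    (dyadicIndex_factorsThrough y hl (congrArg Prod.snd h))

theorem dyadicRect_eq_coarse (P y : Ω → ℝ) (n l : ℕ) :
    dyadicRect P y n l = coarse (fun x => 2 ^ n * P x) fun x => 2 ^ l * y x := rfl

theorem dyadicRect_eq_medium (P y : Ω → ℝ) (n l i : ℕ) :
    dyadicRect P y n (l + i) =
      medium (2 ^ i) (fun x => 2 ^ n * P x) fun x => 2 ^ l * y x := by
  ext x
  · rfl
  · simp only [dyadicRect, dyadicIndex, medium]; push_cast; ring_nf

theorem dyadicRect_eq_fine (P y : Ω → ℝ) (n l i : ℕ) :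
    dyadicRect P y n (l + 3 * i) =
      fine (2 ^ i) (fun x => 2 ^ n * P x) fun x => 2 ^ l * y x := by
  ext x
  · rfl
  · simp only [dyadicRect, dyadicIndex, fine]; push_cast; ring_nf

theorem logMass_dyadicRect_sub_le [Fintype Ω] (P y : Ω → ℝ) {n l m : ℕ} (hl : l ≤ n) (hm : m ≤ l) :
    logMass (dyadicRect P y n m) - logMass (dyadicRect P y n l) ≤
      logMass (dyadicRect P y l m) - logMass (dyadicRect P y l l) := by
  have hsub := logMass_add_logMass_le (dyadicRect_factorsThrough P y hl le_rfl)
    (dyadicRect_factorsThrough P y (le_refl l) hm)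
  have hjoin : (dyadicRect P y n l).FactorsThrough
      fun x => (dyadicRect P y n m x, dyadicRect P y l l x) := fun _ _ h => by
    simp only [dyadicRect, Prod.mk.injEq] at h ⊢
    exact ⟨h.1.1, h.2.2⟩
  linarith [logMass_le_logMass hjoin]

end DyadicLevels

section CriticalPairs

variable {Ω : Type*} {T : ℕ} {a a' b : Ω → ℝ} {ζ κ τ w σ η ε : ℝ}

theorem CriticalScale.abs_slope_le_one (h : CriticalScale T a a' b ζ κ τ w σ η ε) : |ζ| ≤ 1 :=
  h.abs_slope_le.trans (by simpa using Nat.cast_inv_le_one T)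

variable [Fintype Ω]

open scoped Classical in
/-- The points whose coarse cell contains two heavy fine cells that are far apart in `b`. -/
def branchingPoints (T : ℕ) (a b : Ω → ℝ) : Finset Ω :=
  {X | ∃ x₁ x₂, coarse a b x₁ = coarse a b X ∧ coarse a b x₂ = coarse a b X ∧
    ((cell (coarse a b) X).card : ℝ) ≤ T ^ 4 * (cell (fine T a b) x₁).card ∧
    ((cell (coarse a b) X).card : ℝ) ≤ T ^ 4 * (cell (fine T a b) x₂).card ∧
    1 / (T : ℝ) ≤ |b x₁ - b x₂|}

open scoped Classical in
/-- The points at which the value of `u` is at distance less than `τ` from an integer. -/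
def nearGrid (τ : ℝ) (u : Ω → ℝ) : Finset Ω := {x | Int.fract (u x) ∉ Icc τ (1 - τ)}

theorem mem_branchingPoints {T : ℕ} {a b : Ω → ℝ} {X : Ω} : X ∈ branchingPoints T a b ↔
    ∃ x₁ x₂, coarse a b x₁ = coarse a b X ∧ coarse a b x₂ = coarse a b X ∧
      ((cell (coarse a b) X).card : ℝ) ≤ T ^ 4 * (cell (fine T a b) x₁).card ∧
      ((cell (coarse a b) X).card : ℝ) ≤ T ^ 4 * (cell (fine T a b) x₂).card ∧
      1 / (T : ℝ) ≤ |b x₁ - b x₂| := by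
  simp only [branchingPoints, Finset.mem_filter_univ]

theorem mem_nearGrid {τ : ℝ} {u : Ω → ℝ} {x : Ω} :
    x ∈ nearGrid τ u ↔ Int.fract (u x) ∉ Icc τ (1 - τ) := by
  simp only [nearGrid, Finset.mem_filter_univ]

theorem mem_branchingPoints_congr {T : ℕ} {a b : Ω → ℝ} {X Y : Ω}
    (h : coarse a b Y = coarse a b X) :
    Y ∈ branchingPoints T a b ↔ X ∈ branchingPoints T a b := by
  simp only [mem_branchingPoints, h, cell_congr h]

theorem logMass_coarse_sub_logMass_medium_le {T : ℕ} (hT : 0 < T) (a b : Ω → ℝ) :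
    logMass (coarse a b) - logMass (medium T a b) ≤
      Fintype.card Ω * (3 * Real.log 2) + (branchingPoints T a b).card * Real.log T := by
  classical
  have hlog : 0 ≤ Real.log 2 := Real.log_nonneg one_le_two
  have sum_eq : (Fintype.card Ω * (3 * Real.log 2) + (branchingPoints T a b).card * Real.log T : ℝ)
      = ∑ x, (3 * Real.log 2 + if x ∈ branchingPoints T a b then Real.log T else 0) := by
    simp [Finset.sum_add_distrib]
  rw [sum_eq, logMass_sub_logMass]
  refine sum_le_sum_of_sum_cell_le (coarse a b) fun X => ?_
  have lhs_congr : ∀ y ∈ cell (coarse a b) X,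
      Real.log ((cell (coarse a b) y).card / (cell (medium T a b) y).card)
        = Real.log ((cell (coarse a b) X).card / (cell (medium T a b) y).card) := fun y hy => by
    rw [cell_congr (mem_cell.1 hy)]
  have rhs_congr : ∀ y ∈ cell (coarse a b) X,
      (3 * Real.log 2 + if y ∈ branchingPoints T a b then Real.log T else 0)
        = 3 * Real.log 2 + if X ∈ branchingPoints T a b then Real.log T else 0 := fun y hy => by
    simp only [mem_branchingPoints_congr (mem_cell.1 hy)]
  rw [Finset.sum_congr rfl lhs_congr, Finset.sum_congr rfl rhs_congr, Finset.sum_const,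
    nsmul_eq_mul]
  split_ifs with hX
  · refine (sum_log_card_coarse_div_card_medium_le_log hT a b X).trans ?_
    gcongr
    linarith
  · rw [add_zero]
    exact sum_log_card_coarse_div_card_medium_le hT fun x₁ x₂ h₁ h₂ hbig₁ hbig₂ =>
      not_le.1 fun hsep => hX (mem_branchingPoints.2 ⟨x₁, x₂, h₁, h₂, hbig₁, hbig₂, hsep⟩)

theorem card_image_coarse_le_three {a a' b : Ω → ℝ} {ζ κ : ℝ}
    (ha' : ∀ x, a' x = a x + ζ * b x + κ) (hζ : |ζ| ≤ 1) (X : Ω) :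
    ((cell (coarse a b) X).image (coarse a' b)).card ≤ 3 := by
  obtain ⟨x₀, hx₀, hmin⟩ := (cell (coarse a b) X).exists_min_image a' ⟨X, mem_cell.2 rfl⟩
  have hsub : (cell (coarse a b) X).image (coarse a' b) ⊆
      Finset.Ico ⌊a' x₀⌋ (⌊a' x₀⌋ + 3) ×ˢ {⌊b X⌋} := by
    refine Finset.image_subset_iff.2 fun x hx => Finset.mem_product.2
      ⟨Finset.mem_Ico.2 ⟨Int.floor_mono (hmin x hx), Int.floor_lt.2 ?_⟩,
        Finset.mem_singleton.2 (congrArg Prod.snd (mem_cell.1 hx))⟩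
    have hxx₀ : coarse a b x = coarse a b x₀ := (mem_cell.1 hx).trans (mem_cell.1 hx₀).symm
    have ha := Int.abs_sub_lt_one_of_floor_eq_floor (congrArg Prod.fst hxx₀)
    have hb := Int.abs_sub_lt_one_of_floor_eq_floor (congrArg Prod.snd hxx₀)
    have hζb : |ζ * (b x - b x₀)| ≤ 1 := by
      rw [abs_mul]
      exact mul_le_one₀ hζ (abs_nonneg _) hb.le
    push_cast
    linarith [le_of_abs_le hζb, lt_of_abs_lt ha, ha' x, ha' x₀, Int.lt_floor_add_one (a' x₀)]
  simpa using Finset.card_le_card hsub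

open scoped Classical in
/-- The points sharing the coarse cell of `X` for both `a` and `a'`, and lying well inside their
coarse cells in both directions. -/
def cellCore (τ : ℝ) (a a' b : Ω → ℝ) (X : Ω) : Finset Ω :=
  cell (fun x => (coarse a b x, coarse a' b x)) X ∩ (nearGrid τ a ∪ nearGrid τ a')ᶜ

theorem mem_cellCore {τ : ℝ} {a a' b : Ω → ℝ} {X x : Ω} : x ∈ cellCore τ a a' b X ↔
    (coarse a b x = coarse a b X ∧ coarse a' b x = coarse a' b X) ∧
      x ∉ nearGrid τ a ∧ x ∉ nearGrid τ a' := by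
  simp [cellCore]

theorem cellCore_comm (τ : ℝ) (a a' b : Ω → ℝ) (X : Ω) :
    cellCore τ a a' b X = cellCore τ a' a b X := by
  ext x
  simp only [mem_cellCore, and_comm]

open scoped Classical in
/-- The points well inside their coarse cells whose core occupies a proportion at most `σ` of the
coarse cell for `a`. -/
def sparsePoints (τ σ : ℝ) (a a' b : Ω → ℝ) : Finset Ω :=
  {X ∈ (nearGrid τ a ∪ nearGrid τ a')ᶜ |
    ((cellCore τ a a' b X).card : ℝ) ≤ σ * (cell (coarse a b) X).card}

theorem card_sparsePoints_le {a a' b : Ω → ℝ} {ζ κ σ : ℝ} (τ : ℝ)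
    (ha' : ∀ x, a' x = a x + ζ * b x + κ) (hζ : |ζ| ≤ 1) (hσ : 0 ≤ σ) :
    ((sparsePoints τ σ a a' b).card : ℝ) ≤ 3 * σ * Fintype.card Ω := by
  classical
  exact_mod_cast card_le_of_card_cell_prod_inter_le hσ (card_image_coarse_le_three ha' hζ)
    (Finset.filter_subset _ _) fun X hX => (Finset.mem_filter.1 hX).2

open scoped Classical in
/-- The points whose coarse cell has average defect at least `η`. -/
def defectivePoints (T : ℕ) (η : ℝ) (a b : Ω → ℝ) : Finset Ω :=
  {X | η ≤ cellAvg (coarse a b) (defect T a b) X}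

theorem card_defectivePoints_le (T : ℕ) {η : ℝ} (hη : 0 < η) (a b : Ω → ℝ) :
    ((defectivePoints T η a b).card : ℝ) ≤ (∑ x, defect T a b x) / η := by
  rw [le_div_iff₀' hη]
  exact mul_card_le_sum_of_le_cellAvg (coarse a b) (defect_nonneg T a b) fun X hX =>
    (Finset.mem_filter.1 hX).2

theorem CriticalScale.notMem_branchingPoints (h : CriticalScale T a a' b ζ κ τ w σ η ε) {X : Ω}
    (hgrid : X ∉ nearGrid τ a) (hgrid' : X ∉ nearGrid τ a')
    (hsparse : X ∉ sparsePoints τ σ a a' b) (hsparse' : X ∉ sparsePoints τ σ a' a b)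
    (hdefect : X ∉ defectivePoints T η a b) (hdefect' : X ∉ defectivePoints T η a' b) :
    X ∉ branchingPoints T a b := fun hX => by
  simp only [sparsePoints, Finset.mem_filter, Finset.mem_compl, Finset.mem_union, not_and, not_or,
    not_le, defectivePoints, Finset.mem_univ, true_implies] at hsparse hsparse' hdefect hdefect'
  have hcell : CriticalCell T a a' b ζ κ τ w σ η ε X (cellCore τ a a' b X) :=
    { toCriticalScale := h
      mem_core := mem_cellCore.2 ⟨⟨rfl, rfl⟩, hgrid, hgrid'⟩
      coarse_eq := fun x hx => (mem_cellCore.1 hx).1.1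
      coarse_eq' := fun x hx => (mem_cellCore.1 hx).1.2
      fract_mem := fun x hx => not_not.1 (mem_nearGrid.not.1 (mem_cellCore.1 hx).2.1)
      fract_mem' := fun x hx => not_not.1 (mem_nearGrid.not.1 (mem_cellCore.1 hx).2.2)
      card_le := (hsparse ⟨hgrid, hgrid'⟩).le
      card_le' := by
        rw [cellCore_comm]
        exact (hsparse' ⟨hgrid', hgrid⟩).le
      cellAvg_defect_le := hdefect.le
      cellAvg_defect_le' := hdefect'.le }
  obtain ⟨x₁, x₂, h₁, h₂, hbig₁, hbig₂, hsep⟩ := mem_branchingPoints.1 hX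
  exact hsep.not_gt (hcell.abs_sub_lt h₁ h₂ hbig₁ hbig₂)

theorem CriticalScale.card_branchingPoints_le (h : CriticalScale T a a' b ζ κ τ w σ η ε) :
    ((branchingPoints T a b).card : ℝ) ≤ (nearGrid τ a).card + (nearGrid τ a').card +
      6 * σ * Fintype.card Ω + (∑ x, defect T a b x) / η + (∑ x, defect T a' b x) / η := by
  classical
  have ha : ∀ x, a x = a' x + -ζ * b x + -κ := fun x => by rw [h.eq_add_add]; ring
  have hsub : branchingPoints T a b ⊆ nearGrid τ a ∪ nearGrid τ a' ∪ sparsePoints τ σ a a' b ∪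
      sparsePoints τ σ a' a b ∪ defectivePoints T η a b ∪ defectivePoints T η a' b := fun X hX => by
    by_contra hout
    simp only [Finset.mem_union, not_or] at hout
    obtain ⟨⟨⟨⟨⟨hgrid, hgrid'⟩, hsparse⟩, hsparse'⟩, hdefect⟩, hdefect'⟩ := hout
    exact h.notMem_branchingPoints hgrid hgrid' hsparse hsparse' hdefect hdefect' hX
  have card_union_le {A B : Finset Ω} {α β : ℝ} (hA : (A.card : ℝ) ≤ α) (hB : (B.card : ℝ) ≤ β) :
      ((A ∪ B).card : ℝ) ≤ α + β :=
    (Nat.cast_le.2 (Finset.card_union_le A B)).trans (by push_cast; linarith)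
  have hunion := card_union_le (card_union_le (card_union_le (card_union_le
    (card_union_le (A := nearGrid τ a) (B := nearGrid τ a') le_rfl le_rfl)
    (card_sparsePoints_le τ h.eq_add_add h.abs_slope_le_one h.sigma_pos.le))
    (card_sparsePoints_le τ ha ((abs_neg ζ).trans_le h.abs_slope_le_one) h.sigma_pos.le))
    (card_defectivePoints_le T h.eta_pos a b)) (card_defectivePoints_le T h.eta_pos a' b)
  linarith [(Nat.cast_le (α := ℝ)).2 (Finset.card_le_card hsub)]

end CriticalPairs

section Multiscale

variable {Ω : Type*} [Fintype Ω] (P y : Ω → ℝ)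

/-- The gain of `logMass` when the dyadic rectangles of length `2⁻ⁿ` in `P` are heightened from
`2 ^ (w * i)` to `2 ^ ((w + 1) * i)` times their length. -/
def widthGain (n i w : ℕ) : ℝ :=
  logMass (dyadicRect P y n (n - (w + 1) * i)) - logMass (dyadicRect P y n (n - w * i))

/-- The sum of `widthGain` over the scales `n < M`. -/
def totalGain (M i w : ℕ) : ℝ := ∑ n ∈ Finset.range M, widthGain P y n i w

/-- The sum over the scales `n₀ ≤ n < M` of the defects at relative width `w`. -/
def totalDefect (n₀ M i w : ℕ) : ℝ :=
  ∑ n ∈ Finset.Ico n₀ M, ∑ x, defect (2 ^ i) (fun x => 2 ^ n * P x)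
    (fun x => 2 ^ (n - (w + 3) * i) * y x) x

/-- `P` branches substantially and has a small defect at relative width `w`. -/
structure RegularAt (c η : ℝ) (n₀ M i w : ℕ) : Prop where
  le_sum_widthGain : (c * i + 3) * (M * Fintype.card Ω * Real.log 2) ≤
    ∑ n ∈ Finset.Ico n₀ M, widthGain P y n i (w + 2)
  totalDefect_le : totalDefect P y n₀ M i w ≤ η * c / 10 * (M * Fintype.card Ω)

theorem sub_succ_mul_le_sub_mul (n i w : ℕ) : n - (w + 1) * i ≤ n - w * i :=
  Nat.sub_le_sub_left (Nat.mul_le_mul_right i w.le_succ) n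

theorem widthGain_nonneg (n i w : ℕ) : 0 ≤ widthGain P y n i w :=
  sub_nonneg.2 (logMass_le_logMass
    (dyadicRect_factorsThrough P y le_rfl (sub_succ_mul_le_sub_mul n i w)))

theorem widthGain_le (n i w : ℕ) :
    widthGain P y n i w ≤ Fintype.card Ω * (i * Real.log 2) := by
  obtain ⟨k, hk⟩ := Nat.exists_eq_add_of_le (sub_succ_mul_le_sub_mul n i w)
  have hki : k ≤ i := by
    have := add_one_mul w i
    omega
  rw [widthGain, hk, dyadicRect_eq_medium, dyadicRect_eq_coarse]
  refine (logMass_sub_logMass_le_of_card_image_le _ _ (K := (2 ^ k : ℕ)) (by positivity) fun x =>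
    mod_cast card_image_medium_le (by positivity) _ _ x).trans ?_
  rw [Nat.cast_pow, Real.log_pow, Nat.cast_ofNat]
  gcongr

theorem widthGain_le_widthGain_zero (n i w : ℕ) :
    widthGain P y n i w ≤ widthGain P y (n - w * i) i 0 := by
  simpa [widthGain, Nat.succ_mul, Nat.sub_sub] using
    logMass_dyadicRect_sub_le P y (n.sub_le (w * i)) ((n - w * i).sub_le i)

theorem totalGain_nonneg (M i w : ℕ) : 0 ≤ totalGain P y M i w :=
  Finset.sum_nonneg fun _ _ => widthGain_nonneg ..

theorem sum_range_tsub {M k : ℕ} (f : ℕ → ℝ) (hk : k ≤ M) :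
    ∑ n ∈ Finset.range M, f (n - k) = k * f 0 + ∑ n ∈ Finset.range (M - k), f n := by
  rw [← Finset.sum_range_add_sum_Ico _ hk, Finset.sum_Ico_eq_sum_range]
  simp only [Nat.add_sub_cancel_left]
  rw [Finset.sum_congr rfl fun n hn => by rw [Nat.sub_eq_zero_of_le (Finset.mem_range.1 hn).le]]
  simp

theorem sum_range_tsub_le {f : ℕ → ℝ} (hf : ∀ n, 0 ≤ f n) (h0 : f 0 = 0) (M k : ℕ) :
    ∑ n ∈ Finset.range M, f (n - k) ≤ ∑ n ∈ Finset.range M, f n := by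
  obtain hM | hM := le_total M k
  · rw [Finset.sum_eq_zero fun n hn => by
      rw [Nat.sub_eq_zero_of_le ((Finset.mem_range.1 hn).le.trans hM), h0]]
    exact Finset.sum_nonneg fun n _ => hf n
  · rw [sum_range_tsub f hM, h0, mul_zero, zero_add]
    exact Finset.sum_le_sum_of_subset_of_nonneg (Finset.range_mono (M.sub_le k)) fun n _ _ => hf n

theorem totalGain_le_totalGain_zero (M i w : ℕ) : totalGain P y M i w ≤ totalGain P y M i 0 :=
  (Finset.sum_le_sum fun n _ => widthGain_le_widthGain_zero P y n i w).trans
    (sum_range_tsub_le (fun n => widthGain_nonneg P y n i 0) (by simp [widthGain]) M _)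

theorem sum_range_widthGain_le (k i w : ℕ) : ∑ n ∈ Finset.range k, widthGain P y n i w ≤
    k * (Fintype.card Ω * (i * Real.log 2)) :=
  (Finset.sum_le_card_nsmul _ _ _ fun n _ => widthGain_le P y n i w).trans_eq (by simp)

theorem totalGain_le_add_sum_Ico (n₀ M i w : ℕ) :
    totalGain P y M i w ≤ n₀ * (Fintype.card Ω * (i * Real.log 2)) +
      ∑ n ∈ Finset.Ico n₀ M, widthGain P y n i w := by
  refine le_trans ?_ (add_le_add_left (sum_range_widthGain_le P y n₀ i w) _)
  obtain h | h := le_total n₀ M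
  · exact (Finset.sum_range_add_sum_Ico _ h).ge
  · rw [Finset.Ico_eq_empty_of_le h, Finset.sum_empty, add_zero]
    exact Finset.sum_le_sum_of_subset_of_nonneg (Finset.range_mono h)
      fun n _ _ => widthGain_nonneg P y n i w

theorem sum_totalGain (M i V : ℕ) :
    ∑ w ∈ Finset.range V, totalGain P y M i w = totalGain P y M (V * i) 0 := by
  simp only [totalGain]
  rw [Finset.sum_comm]
  refine Finset.sum_congr rfl fun n _ => ?_
  simp [widthGain, Finset.sum_range_sub fun w => logMass (dyadicRect P y n (n - w * i))]

theorem totalDefect_nonneg (n₀ M i w : ℕ) : 0 ≤ totalDefect P y n₀ M i w :=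
  Finset.sum_nonneg fun _ _ => Finset.sum_nonneg fun _ _ => defect_nonneg ..

theorem sum_sub_add_three_le {e : ℕ → ℝ} {C : ℝ} (h0 : ∀ w, 0 ≤ e w) (hC : ∀ w, e w ≤ C) (W : ℕ) :
    ∑ w ∈ Finset.range W, (e w - e (w + 3)) ≤ 3 * C := by
  have htelescope := Finset.sum_range_sub' (fun w => e w + e (w + 1) + e (w + 2)) W
  calc ∑ w ∈ Finset.range W, (e w - e (w + 3))
      = (e 0 + e 1 + e 2) - (e W + e (W + 1) + e (W + 2)) :=
        (Finset.sum_congr rfl fun w _ => by ring).trans htelescope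
    _ ≤ 3 * C := by linarith [hC 0, hC 1, hC 2, h0 W, h0 (W + 1), h0 (W + 2)]

theorem sum_defect_eq {n i w : ℕ} (h : (w + 3) * i ≤ n) :
    ∑ x, defect (2 ^ i) (fun x => 2 ^ n * P x) (fun x => 2 ^ (n - (w + 3) * i) * y x) x =
      ∑ c ∈ gridPairs ((2 ^ i) ^ 4),
        (energy (dyadicRect P y n (n - w * i))
            ((slab ((2 ^ i) ^ 4) (fun x => 2 ^ n * P x) c).indicator 1) -
          energy (dyadicRect P y n (n - (w + 3) * i))
            ((slab ((2 ^ i) ^ 4) (fun x => 2 ^ n * P x) c).indicator 1)) := by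
  simp only [defect]
  rw [Finset.sum_comm]
  refine Finset.sum_congr rfl fun c _ => ?_
  have hlevel : n - (w + 3) * i + 3 * i = n - w * i := by
    rw [add_mul] at h ⊢
    omega
  rw [sum_sq_cellAvg_sub_cellAvg (coarse_factorsThrough_fine (by positivity) _ _),
    ← dyadicRect_eq_fine, ← dyadicRect_eq_coarse, hlevel]

/- The defects at relative widths `w < W` telescope, since the energies are monotone and bounded. -/
theorem sum_totalDefect_le {n₀ i W : ℕ} (M : ℕ) (hn₀ : (W + 3) * i ≤ n₀) :
    ∑ w ∈ Finset.range W, totalDefect P y n₀ M i w ≤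
      3 * (gridPairs ((2 ^ i) ^ 4)).card * (M * Fintype.card Ω) := by
  simp only [totalDefect]
  rw [Finset.sum_comm]
  have sum_defect_le : ∀ n ∈ Finset.Ico n₀ M, ∑ w ∈ Finset.range W, ∑ x,
      defect (2 ^ i) (fun x => 2 ^ n * P x) (fun x => 2 ^ (n - (w + 3) * i) * y x) x ≤
        (gridPairs ((2 ^ i) ^ 4)).card * (3 * Fintype.card Ω) := fun n hn => by
    rw [Finset.sum_congr rfl fun w hw => sum_defect_eq P y ?_, Finset.sum_comm, ← nsmul_eq_mul]
    · refine Finset.sum_le_card_nsmul _ _ _ fun c _ => ?_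
      exact sum_sub_add_three_le (e := fun w => energy (dyadicRect P y n (n - w * i)) _)
        (fun w => energy_nonneg _ _) (fun w => energy_le_card _
          (fun x => indicator_nonneg (fun _ _ => zero_le_one) x)
          fun x => indicator_le_self' (fun _ _ => zero_le_one) x) W
    · exact (Nat.mul_le_mul_right i (by have := Finset.mem_range.1 hw; omega)).trans
        (hn₀.trans (Finset.mem_Ico.1 hn).1)
  have hcard : ((Finset.Ico n₀ M).card : ℝ) ≤ M := by
    rw [Nat.card_Ico]
    exact_mod_cast M.sub_le n₀
  calc _ ≤ ((Finset.Ico n₀ M).card : ℝ) * ((gridPairs ((2 ^ i) ^ 4)).card * (3 * Fintype.card Ω)) :=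
        (Finset.sum_le_card_nsmul _ _ _ sum_defect_le).trans_eq (nsmul_eq_mul _ _)
    _ ≤ M * ((gridPairs ((2 ^ i) ^ 4)).card * (3 * Fintype.card Ω)) := by gcongr
    _ = _ := by ring

end Multiscale

section RegularPairs

variable {Ω : Type*}

/-- Constants for which the comparison of two directions applies to cells with `2 ^ i` subdivisions:
the gaps have length `gap`, and `c`, `η`, `ε` measure branching, defect and uniformity. -/
structure AdmissibleScale (gap c η ε : ℝ) (i : ℕ) : Prop where
  four_le : 4 ≤ i
  div_le_gap : 16 / 2 ^ i ≤ gap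
  c_pos : 0 < c
  eta_pos : 0 < η
  eps_pos : 0 < ε
  eps_le : ε * 8 * (2 ^ i) ^ 8 ≤ (c / 60) ^ 2
  eta_le : 8 * η * (2 ^ i) ^ 4 ≤ ε ^ 2 * (c / 60) ^ 2

variable [Fintype Ω]

/-- At the scales `2⁻ⁿ` with `n < M`, the values of `P` have gaps of length `gap * 2⁻ⁿ` throughout,
and few of them are close to the dyadic grid. -/
structure WellPlaced (τ gap c : ℝ) (M : ℕ) (P : Ω → ℝ) : Prop where
  exists_gap : ∀ n < M, ∀ s : ℝ, ∃ g, s ≤ g ∧ g + gap ≤ s + τ / 4 ∧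
    ∀ x, g ≤ 2 ^ n * P x → g + gap ≤ 2 ^ n * P x
  sum_card_nearGrid_le : ∑ n ∈ Finset.range M, ((nearGrid τ fun x => 2 ^ n * P x).card : ℝ) ≤
    c / 10 * (M * Fintype.card Ω)

variable {P P' y : Ω → ℝ} {ϑ κ τ gap c η ε : ℝ} {i w M n n₀ : ℕ}

theorem AdmissibleScale.criticalScale (hi : AdmissibleScale gap c η ε i)
    (hP : WellPlaced τ gap c M P) (hP' : ∀ x, P' x = P x + ϑ * y x + κ)
    (hϑ : |ϑ| ≤ 1 / 2 ^ ((w + 4) * i)) (hϑ' : 1 / 2 ^ ((w + 5) * i) ≤ |ϑ|)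
    (hn : (w + 3) * i ≤ n) (hM : n < M) :
    CriticalScale (2 ^ i) (fun x => 2 ^ n * P x) (fun x => 2 ^ n * P' x)
      (fun x => 2 ^ (n - (w + 3) * i) * y x) (2 ^ ((w + 3) * i) * ϑ) (2 ^ n * κ) τ gap
      (c / 60) η ε where
  sixteen_le := Nat.pow_le_pow_right (n := 2) two_pos hi.four_le
  eq_add_add x := by
    have hpow : (2 : ℝ) ^ ((w + 3) * i) * 2 ^ (n - (w + 3) * i) = 2 ^ n := by
      rw [← pow_add, Nat.add_sub_cancel' hn]
    linear_combination 2 ^ n * hP' x - ϑ * y x * hpow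
  abs_slope_le := by
    rw [abs_mul, abs_of_pos (by positivity), Nat.cast_pow, Nat.cast_ofNat]
    refine (mul_le_mul_of_nonneg_left hϑ (by positivity)).trans_eq ?_
    rw [show (w + 4) * i = (w + 3) * i + i by ring, pow_add]
    field_simp
  le_abs_slope := by
    rw [abs_mul, abs_of_pos (by positivity), Nat.cast_pow, Nat.cast_ofNat]
    refine le_of_eq_of_le ?_ (mul_le_mul_of_nonneg_left hϑ' (by positivity))
    rw [show (w + 5) * i = (w + 3) * i + i * 2 by ring, pow_add, pow_mul 2 i 2]
    field_simp
  div_le_gap := mod_cast hi.div_le_gap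
  exists_gap := hP.exists_gap n hM
  sigma_pos := by have := hi.c_pos; positivity
  eta_pos := hi.eta_pos
  eps_pos := hi.eps_pos
  eps_le := mod_cast hi.eps_le
  eta_le := mod_cast hi.eta_le

theorem widthGain_le_card_branchingPoints (hn : (w + 3) * i ≤ n) :
    widthGain P y n i (w + 2) ≤ Fintype.card Ω * (3 * Real.log 2) +
      (branchingPoints (2 ^ i) (fun x => 2 ^ n * P x)
        fun x => 2 ^ (n - (w + 3) * i) * y x).card * (i * Real.log 2) := by
  have hlevel : n - (w + 2) * i = n - (w + 3) * i + i := by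
    have : (w + 3) * i = (w + 2) * i + i := by ring
    omega
  rw [widthGain, hlevel, dyadicRect_eq_medium, dyadicRect_eq_coarse]
  refine (logMass_coarse_sub_logMass_medium_le (by positivity) _ _).trans_eq ?_
  rw [Nat.cast_pow, Real.log_pow, Nat.cast_ofNat]

theorem WellPlaced.sum_card_nearGrid_Ico_le (hP : WellPlaced τ gap c M P) (n₀ : ℕ) :
    ∑ n ∈ Finset.Ico n₀ M, ((nearGrid τ fun x => 2 ^ n * P x).card : ℝ) ≤
      c / 10 * (M * Fintype.card Ω) :=
  (Finset.sum_le_sum_of_subset_of_nonneg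
    (fun _ hn => Finset.mem_range.2 (Finset.mem_Ico.1 hn).2) fun _ _ _ => by positivity).trans
    hP.sum_card_nearGrid_le

theorem card_Ico_mul_le {t : ℝ} (ht : 0 ≤ t) (n₀ M : ℕ) :
    ((Finset.Ico n₀ M).card : ℝ) * t ≤ M * t := by
  rw [Nat.card_Ico]
  gcongr
  exact M.sub_le n₀

theorem AdmissibleScale.sum_card_branchingPoints_le (hi : AdmissibleScale gap c η ε i)
    (hP : WellPlaced τ gap c M P) (hP' : WellPlaced τ gap c M P')
    (heq : ∀ x, P' x = P x + ϑ * y x + κ)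
    (hϑ : |ϑ| ≤ 1 / 2 ^ ((w + 4) * i)) (hϑ' : 1 / 2 ^ ((w + 5) * i) ≤ |ϑ|)
    (hn₀ : (w + 3) * i ≤ n₀)
    (hdefect : totalDefect P y n₀ M i w ≤ η * c / 10 * (M * Fintype.card Ω))
    (hdefect' : totalDefect P' y n₀ M i w ≤ η * c / 10 * (M * Fintype.card Ω)) :
    ∑ n ∈ Finset.Ico n₀ M, ((branchingPoints (2 ^ i) (fun x => 2 ^ n * P x)
      fun x => 2 ^ (n - (w + 3) * i) * y x).card : ℝ) ≤ c / 2 * (M * Fintype.card Ω) := by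
  have hc := hi.c_pos
  have hsum := Finset.sum_le_sum fun n hn => (hi.criticalScale hP heq hϑ hϑ'
    (hn₀.trans (Finset.mem_Ico.1 hn).1) (Finset.mem_Ico.1 hn).2).card_branchingPoints_le
  simp only [Finset.sum_add_distrib, Finset.sum_const, nsmul_eq_mul, ← Finset.sum_div] at hsum
  have div_eta_le {D : ℝ} (hD : D ≤ η * c / 10 * (M * Fintype.card Ω)) :
      D / η ≤ c / 10 * (M * Fintype.card Ω) :=
    (div_le_iff₀ hi.eta_pos).2 (hD.trans_eq (by ring))
  have hconst := card_Ico_mul_le (t := 6 * (c / 60) * Fintype.card Ω) (by positivity) n₀ M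
  have hd := div_eta_le hdefect
  have hd' := div_eta_le hdefect'
  rw [totalDefect] at hd hd'
  linarith [hP.sum_card_nearGrid_Ico_le n₀, hP'.sum_card_nearGrid_Ico_le n₀]

theorem AdmissibleScale.not_regularAt [Nonempty Ω] (hi : AdmissibleScale gap c η ε i) (hM : 0 < M)
    (hP : WellPlaced τ gap c M P) (hP' : WellPlaced τ gap c M P')
    (heq : ∀ x, P' x = P x + ϑ * y x + κ)
    (hϑ : |ϑ| ≤ 1 / 2 ^ ((w + 4) * i)) (hϑ' : 1 / 2 ^ ((w + 5) * i) ≤ |ϑ|)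
    (hn₀ : (w + 3) * i ≤ n₀) (hreg : RegularAt P y c η n₀ M i w) :
    ¬ RegularAt P' y c η n₀ M i w := fun hreg' => by
  have hc := hi.c_pos
  have := Real.log_pos one_lt_two
  have hi0 : 0 < i := four_pos.trans_le hi.four_le
  have hbranch := hi.sum_card_branchingPoints_le hP hP' heq hϑ hϑ' hn₀ hreg.totalDefect_le
    hreg'.totalDefect_le
  have hgain := hreg.le_sum_widthGain.trans (Finset.sum_le_sum fun n hn =>
    widthGain_le_card_branchingPoints (hn₀.trans (Finset.mem_Ico.1 hn).1))
  rw [Finset.sum_add_distrib, Finset.sum_const, nsmul_eq_mul, ← Finset.sum_mul] at hgain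
  have hconst := card_Ico_mul_le (t := Fintype.card Ω * (3 * Real.log 2)) (by positivity) n₀ M
  have hscaled := mul_le_mul_of_nonneg_right hbranch (by positivity : 0 ≤ i * Real.log 2)
  have hpos : 0 < c * i * (M * Fintype.card Ω * Real.log 2) := by
    have := Fintype.card_pos (α := Ω)
    positivity
  linarith

end RegularPairs

section RegularScales

variable {Ω : Type*} [Fintype Ω] {P y : Ω → ℝ}

theorem card_filter_lt_mul_le {ι : Type*} {s : Finset ι} {f : ι → ℝ} (hf : ∀ x ∈ s, 0 ≤ f x)
    (a : ℝ) [DecidablePred fun x => a < f x] :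
    ((s.filter fun x => a < f x).card : ℝ) * a ≤ ∑ x ∈ s, f x := by
  rw [← nsmul_eq_mul]
  exact (Finset.card_nsmul_le_sum _ _ _ fun x hx => (Finset.mem_filter.1 hx).2.le).trans
    (Finset.sum_le_sum_of_subset_of_nonneg (Finset.filter_subset _ _) fun x hx _ => hf x hx)

theorem exists_sub_succ_le_div {u : ℕ → ℝ} {R : ℕ} (hR : 0 < R) (h0 : 0 ≤ u R) :
    ∃ r < R, u r - u (r + 1) ≤ u 0 / R := by
  by_contra! h
  have hlt : ∑ _r ∈ Finset.range R, u 0 / R < ∑ r ∈ Finset.range R, (u r - u (r + 1)) :=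
    Finset.sum_lt_sum_of_nonempty ⟨0, Finset.mem_range.2 hR⟩ fun r hr => h r (Finset.mem_range.1 hr)
  rw [Finset.sum_range_sub', Finset.sum_const, Finset.card_range, nsmul_eq_mul,
    mul_div_cancel₀ _ (by positivity)] at hlt
  linarith

theorem regularAt_of_totalGain_sub_le {c η : ℝ} {n₀ M i w : ℕ} (hn₀ : 2 * n₀ ≤ c * M)
    (hi : 6 ≤ c * i)
    (hgain : 3 * c * i * (M * Fintype.card Ω * Real.log 2) ≤ totalGain P y M i 0)
    (hdrop : totalGain P y M i 0 - totalGain P y M i (w + 2) ≤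
      c * i * (M * Fintype.card Ω * Real.log 2))
    (hdefect : totalDefect P y n₀ M i w ≤ η * c / 10 * (M * Fintype.card Ω)) :
    RegularAt P y c η n₀ M i w := by
  refine ⟨?_, hdefect⟩
  have := Real.log_pos one_lt_two
  have hstart : 2 * n₀ * (Fintype.card Ω * (i * Real.log 2)) ≤
      c * M * (Fintype.card Ω * (i * Real.log 2)) := by gcongr
  have hthree : 6 * (M * Fintype.card Ω * Real.log 2) ≤
      c * i * (M * Fintype.card Ω * Real.log 2) := by gcongr
  linarith [totalGain_le_add_sum_Ico P y n₀ M i (w + 2)]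

/- Along the chain `i (r + 1) = (W r + 2) * i r`, the normalized gain
`totalGain P y M (i r) 0 / i r` lies between `0` and `M * card Ω * log 2`, and it decreases by the
average drop of `totalGain`. -/
theorem exists_sum_totalGain_sub_le (P y : Ω → ℝ) {i W : ℕ → ℕ} {R : ℕ} (M : ℕ) (hR : 0 < R)
    (hi : ∀ r, 0 < i r) (hchain : ∀ r, i (r + 1) = (W r + 2) * i r) :
    ∃ r < R, ∑ w ∈ Finset.range (W r + 2),
      (totalGain P y M (i r) 0 - totalGain P y M (i r) w) ≤
        (W r + 2) * i r * (M * Fintype.card Ω * Real.log 2) / R := by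
  obtain ⟨r, hr, hdrop⟩ := exists_sub_succ_le_div
    (u := fun r => totalGain P y M (i r) 0 / i r) hR
    (div_nonneg (totalGain_nonneg ..) (Nat.cast_nonneg _))
  refine ⟨r, hr, ?_⟩
  have hi' : ∀ r, (0 : ℝ) < i r := fun r => Nat.cast_pos.2 (hi r)
  have htotal : totalGain P y M (i 0) 0 / i 0 ≤ M * Fintype.card Ω * Real.log 2 := by
    rw [div_le_iff₀ (hi' 0)]
    exact (sum_range_widthGain_le P y M (i 0) 0).trans_eq (by ring)
  have hcast : (i (r + 1) : ℝ) = (W r + 2) * i r := by rw [hchain]; push_cast; rfl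
  have hmul := mul_le_mul_of_nonneg_left
    (hdrop.trans (div_le_div_of_nonneg_right htotal R.cast_nonneg)) (hi' (r + 1)).le
  rw [Finset.sum_sub_distrib, sum_totalGain, ← hchain, Finset.sum_const, Finset.card_range,
    nsmul_eq_mul]
  calc ((W r + 2 : ℕ) : ℝ) * totalGain P y M (i r) 0 - totalGain P y M (i (r + 1)) 0
      = i (r + 1) * (totalGain P y M (i r) 0 / i r -
          totalGain P y M (i (r + 1)) 0 / i (r + 1)) := by
        have := hi' r
        have := hi' (r + 1)
        rw [mul_sub, mul_div_cancel₀ _ this.ne', hcast]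
        push_cast
        field_simp
    _ ≤ i (r + 1) * (M * Fintype.card Ω * Real.log 2 / R) := hmul
    _ = _ := by rw [hcast, ← mul_div_assoc]

open scoped Classical in
theorem card_filter_not_regularAt_le [Nonempty Ω] {c η D : ℝ} {n₀ M i W : ℕ} (hM : 0 < M)
    (hc : 0 < c) (hη : 0 < η) (hn₀ : 2 * n₀ ≤ c * M) (hW : (W + 3) * i ≤ n₀) (hi : 6 ≤ c * i)
    (hgain : 3 * c * i * (M * Fintype.card Ω * Real.log 2) ≤ totalGain P y M i 0)
    (hdrop : ∑ w ∈ Finset.range (W + 2), (totalGain P y M i 0 - totalGain P y M i w) ≤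
      D * (c * i * (M * Fintype.card Ω * Real.log 2))) :
    (((Finset.range W).filter fun w => ¬ RegularAt P y c η n₀ M i w).card : ℝ) ≤
      D + 30 * (gridPairs ((2 ^ i) ^ 4)).card / (η * c) := by
  have := Fintype.card_pos (α := Ω)
  have hi0 : 0 < c * i := by linarith
  set Q : ℝ := M * Fintype.card Ω * Real.log 2
  have hQ : 0 < Q := mul_pos (by positivity) (Real.log_pos one_lt_two)
  set B₁ := (Finset.range (W + 2)).filter fun w =>
    c * i * Q < totalGain P y M i 0 - totalGain P y M i w
  set B₂ := (Finset.range W).filter fun w =>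
    η * c / 10 * (M * Fintype.card Ω) < totalDefect P y n₀ M i w
  have hB₁ : (B₁.card : ℝ) ≤ D := le_of_mul_le_mul_right
    ((card_filter_lt_mul_le (fun w _ => sub_nonneg.2 (totalGain_le_totalGain_zero ..)) _).trans
      hdrop) (mul_pos hi0 hQ)
  have hB₂ : (B₂.card : ℝ) ≤ 30 * (gridPairs ((2 ^ i) ^ 4)).card / (η * c) := by
    have : (B₂.card : ℝ) * _ ≤ _ := (card_filter_lt_mul_le
      (fun w _ => totalDefect_nonneg ..) _).trans (sum_totalDefect_le P y M hW)
    rw [le_div_iff₀ (by positivity)]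
    refine le_of_mul_le_mul_right ?_ (by positivity : (0 : ℝ) < M * Fintype.card Ω)
    linarith
  have hsub : (Finset.range W).filter (fun w => ¬ RegularAt P y c η n₀ M i w) ⊆
      (B₁.filter (2 ≤ ·)).image (· - 2) ∪ B₂ := fun w hw => by
    obtain ⟨hw, hreg⟩ := Finset.mem_filter.1 hw
    contrapose! hreg
    simp only [Finset.mem_union, not_or, B₁, B₂, Finset.mem_image, Finset.mem_filter,
      Finset.mem_range, not_and, not_lt, not_exists] at hreg hw
    refine regularAt_of_totalGain_sub_le hn₀ hi hgain (le_of_not_gt fun hlt => ?_) (hreg.2 hw)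
    exact hreg.1 (w + 2) ⟨⟨by omega, hlt⟩, by omega⟩ (by omega)
  have hle := (Finset.card_le_card hsub).trans ((Finset.card_union_le _ _).trans
    (Nat.add_le_add_right (Finset.card_image_le.trans (Finset.card_filter_le _ _)) _))
  exact (Nat.cast_le.2 hle).trans (by push_cast; gcongr)

open scoped Classical in
theorem exists_card_filter_not_regularAt_le [Nonempty Ω] {c : ℝ} {i W : ℕ → ℕ} {η : ℕ → ℝ}
    {R M : ℕ} (hR : 0 < R) (hM : 0 < M) (hc : 0 < c)
    (hchain : ∀ r, i (r + 1) = (W r + 2) * i r) (hi : ∀ r, 6 ≤ c * i r) (hη : ∀ r, 0 < η r)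
    (hMW : ∀ r < R, 2 * ((W r + 3) * i r : ℕ) ≤ c * M)
    (hgain : ∀ r < R, 3 * c * i r * (M * Fintype.card Ω * Real.log 2) ≤ totalGain P y M (i r) 0) :
    ∃ r < R, (((Finset.range (W r)).filter fun w =>
        ¬ RegularAt P y c (η r) ((W r + 3) * i r) M (i r) w).card : ℝ) ≤
      (W r + 2) / (R * c) + 30 * (gridPairs ((2 ^ i r) ^ 4)).card / (η r * c) := by
  have hi0 : ∀ r, 0 < i r := fun r => Nat.pos_of_ne_zero fun h => by
    have := hi r
    rw [h, Nat.cast_zero, mul_zero] at this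
    linarith
  obtain ⟨r, hr, hdrop⟩ := exists_sum_totalGain_sub_le P y M hR hi0 hchain
  refine ⟨r, hr, card_filter_not_regularAt_le hM hc (hη r) (hMW r hr) le_rfl (hi r) (hgain r hr)
    (hdrop.trans_eq ?_)⟩
  field_simp

end RegularScales

section Projections

variable {Ω : Type*}

open scoped Classical in
/-- The indices of those among the `m` consecutive intervals of length `δ` starting at `a` which
meet the range of `P`. -/
def occupiedIntervals (P : Ω → ℝ) (a δ : ℝ) (m : ℕ) : Finset ℕ :=
  {k ∈ Finset.range m | ∃ x, P x ∈ Ico (a + k * δ) (a + (k + 1) * δ)}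

theorem mem_occupiedIntervals {P : Ω → ℝ} {a δ : ℝ} {m k : ℕ} :
    k ∈ occupiedIntervals P a δ m ↔ k < m ∧ ∃ x, P x ∈ Ico (a + k * δ) (a + (k + 1) * δ) := by
  simp only [occupiedIntervals, Finset.mem_filter, Finset.mem_range]

/-- Among any `m` consecutive intervals of the same length `δ ≥ δ₀`, at most `C * m ^ t` meet the
range of `P`. -/
def SparseRange (t C δ₀ : ℝ) (P : Ω → ℝ) : Prop :=
  ∀ a δ : ℝ, δ₀ ≤ δ → ∀ m : ℕ, 1 ≤ m → ((occupiedIntervals P a δ m).card : ℝ) ≤ C * (m : ℝ) ^ t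

theorem SparseRange.add_const {t C δ₀ : ℝ} {P : Ω → ℝ} (h : SparseRange t C δ₀ P) (κ : ℝ) :
    SparseRange t C δ₀ fun x => P x + κ := fun a δ hδ m hm => by
  convert h (a - κ) δ hδ m hm using 3
  ext k
  simp only [mem_occupiedIntervals, mem_Ico, sub_add_eq_add_sub, sub_le_iff_le_add,
    lt_sub_iff_add_lt]

theorem SparseRange.exists_gap {t C δ₀ gap : ℝ} {P : Ω → ℝ} (h : SparseRange t C δ₀ P) {m n : ℕ}
    (hgap : 0 ≤ gap) (hm0 : 1 ≤ m) (hm : C * (m : ℝ) ^ t < m) (hδ : δ₀ ≤ gap / 2 ^ n) (s : ℝ) :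
    ∃ g, s ≤ g ∧ g + gap ≤ s + m * gap ∧ ∀ x, g ≤ 2 ^ n * P x → g + gap ≤ 2 ^ n * P x := by
  have hcard : (occupiedIntervals P (s / 2 ^ n) (gap / 2 ^ n) m).card < (Finset.range m).card := by
    rw [Finset.card_range]
    exact_mod_cast (h _ _ hδ m hm0).trans_lt hm
  obtain ⟨k, hk, hfree⟩ := Finset.exists_mem_notMem_of_card_lt_card hcard
  have hkm : (k : ℝ) + 1 ≤ m := mod_cast Finset.mem_range.1 hk
  refine ⟨s + k * gap, le_add_of_nonneg_right (by positivity), ?_, fun x hx => ?_⟩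
  · linarith [mul_le_mul_of_nonneg_right hkm hgap]
  · by_contra! hlt
    refine hfree (mem_occupiedIntervals.2 ⟨Finset.mem_range.1 hk, x, ?_⟩)
    rw [← mul_div_assoc, ← mul_div_assoc, ← add_div, ← add_div, mem_Ico,
      div_le_iff₀' (by positivity), lt_div_iff₀' (by positivity)]
    exact ⟨hx, by linarith⟩

theorem abs_sub_lt_of_dyadicIndex_eq {u : Ω → ℝ} {n : ℕ} {x z : Ω}
    (h : dyadicIndex u n x = dyadicIndex u n z) : |u x - u z| < 1 / 2 ^ n := by
  have := Int.abs_sub_lt_one_of_floor_eq_floor h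
  rwa [← mul_sub, abs_mul, abs_of_pos (by positivity : (0 : ℝ) < 2 ^ n),
    ← lt_div_iff₀' (by positivity)] at this

theorem dyadicRect_injective {p y P : Ω → ℝ} {θ κ : ℝ} {N n : ℕ}
    (hsep : ∀ x z, x ≠ z → 1 / 2 ^ N ≤ max |p x - p z| |y x - y z|) (hθ : |θ| ≤ 1)
    (hP : ∀ x, P x = p x + θ * y x + κ) (hn : N + 1 ≤ n) :
    Function.Injective (dyadicRect P y n n) := fun x z hxz => by
  by_contra hne
  have hPxz := abs_sub_lt_of_dyadicIndex_eq (congrArg Prod.fst hxz)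
  have hyxz := abs_sub_lt_of_dyadicIndex_eq (congrArg Prod.snd hxz)
  have hscale : 2 * (1 / 2 ^ n : ℝ) ≤ 1 / 2 ^ N :=
    calc 2 * (1 / 2 ^ n : ℝ) ≤ 2 * (1 / 2 ^ (N + 1)) := by gcongr; exact one_le_two
      _ = 1 / 2 ^ N := by rw [pow_succ]; field_simp
  have hpxz : |p x - p z| ≤ |P x - P z| + |y x - y z| :=
    calc |p x - p z| = |P x - P z - θ * (y x - y z)| := by rw [hP, hP]; ring_nf
      _ ≤ |P x - P z| + |θ| * |y x - y z| := (abs_sub _ _).trans_eq (by rw [abs_mul])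
      _ ≤ |P x - P z| + |y x - y z| := by gcongr; exact mul_le_of_le_one_left (abs_nonneg _) hθ
  refine (hsep x z hne).not_gt (max_lt (by linarith) ?_)
  linarith [abs_nonneg (y x - y z)]

theorem mem_Ico_dyadicIndex (u : Ω → ℝ) (n : ℕ) (x : Ω) :
    u x ∈ Ico (dyadicIndex u n x / 2 ^ n : ℝ) ((dyadicIndex u n x + 1) / 2 ^ n) := by
  rw [mem_Ico, div_le_iff₀' (by positivity), lt_div_iff₀' (by positivity)]
  exact ⟨Int.floor_le _, Int.lt_floor_add_one _⟩

theorem exists_dyadicIndex_eq_mul_add (u : Ω → ℝ) {l n : ℕ} (hl : l ≤ n) (x : Ω) :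
    ∃ k < 2 ^ (n - l), dyadicIndex u n x = 2 ^ (n - l) * dyadicIndex u l x + (k : ℕ) := by
  have hpow : (2 : ℝ) ^ n = (2 ^ (n - l) : ℕ) * 2 ^ l := by
    rw [Nat.cast_pow, Nat.cast_ofNat, ← pow_add, Nat.sub_add_cancel hl]
  have hdiv : dyadicIndex u l x = dyadicIndex u n x / (2 ^ (n - l) : ℕ) := by
    rw [dyadicIndex, dyadicIndex, hpow, mul_assoc, Int.natCast_mul_floor_div_cancel (by positivity)]
  obtain ⟨k, hk⟩ := Int.eq_ofNat_of_zero_le (Int.emod_nonneg (dyadicIndex u n x)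
    (Nat.cast_ne_zero.2 (by positivity : 2 ^ (n - l) ≠ 0)))
  refine ⟨k, ?_, ?_⟩
  · exact_mod_cast hk ▸ Int.emod_lt_of_pos (dyadicIndex u n x) (by positivity)
  · rw [hdiv, ← hk]
    exact_mod_cast (Int.mul_ediv_add_emod _ _).symm

variable [Fintype Ω]

theorem SparseRange.card_image_dyadicRect_le {t C δ₀ : ℝ} {P : Ω → ℝ} (h : SparseRange t C δ₀ P)
    (y : Ω → ℝ) {n l m : ℕ} (hl : l ≤ n) (hδ : δ₀ ≤ 1 / 2 ^ n) (X : Ω) :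
    (((cell (dyadicRect P y l m) X).image (dyadicRect P y n m)).card : ℝ) ≤
      C * ((2 ^ (n - l) : ℕ) : ℝ) ^ t := by
  set j := dyadicIndex P l X
  refine le_trans ?_ (h (j / 2 ^ l) (1 / 2 ^ n) hδ (2 ^ (n - l)) Nat.one_le_two_pow)
  refine Nat.cast_le.2 ((Finset.card_le_card fun z hz => ?_).trans (Finset.card_image_le
    (f := fun k : ℕ => (2 ^ (n - l) * j + (k : ℤ), dyadicIndex y m X))))
  obtain ⟨x, hx, rfl⟩ := Finset.mem_image.1 hz
  have hPx : dyadicIndex P l x = j := congrArg Prod.fst (mem_cell.1 hx)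
  have hyx : dyadicIndex y m x = dyadicIndex y m X := congrArg Prod.snd (mem_cell.1 hx)
  obtain ⟨k, hk, hindex⟩ := exists_dyadicIndex_eq_mul_add P hl x
  rw [hPx] at hindex
  refine Finset.mem_image.2
    ⟨k, mem_occupiedIntervals.2 ⟨hk, x, ?_⟩, by rw [dyadicRect, hindex, hyx]⟩
  have hmem := mem_Ico_dyadicIndex P n x
  have hpow : (2 : ℝ) ^ n = 2 ^ (n - l) * 2 ^ l := by rw [← pow_add, Nat.sub_add_cancel hl]
  have endpoint_eq (v : ℝ) : (j / 2 ^ l + v * (1 / 2 ^ n) : ℝ) = (2 ^ (n - l) * j + v) / 2 ^ n := by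
    rw [hpow]
    field_simp
  rw [endpoint_eq, endpoint_eq, ← add_assoc]
  rw [hindex] at hmem
  exact_mod_cast hmem

theorem SparseRange.logMass_sub_logMass_le_widthGain {t C δ₀ : ℝ} {P : Ω → ℝ}
    (h : SparseRange t C δ₀ P) (y : Ω → ℝ) {n i : ℕ} (ht : 0 ≤ t) (hC : 0 < C)
    (hδ : δ₀ ≤ 1 / 2 ^ n) :
    logMass (dyadicRect P y (n - i) (n - i)) - logMass (dyadicRect P y n n) -
      Fintype.card Ω * (Real.log C + t * i * Real.log 2) ≤ widthGain P y n i 0 := by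
  have hlogMass := logMass_sub_logMass_le_of_card_image_le (dyadicRect P y (n - i) (n - i))
    (dyadicRect P y n (n - i)) (by positivity) (h.card_image_dyadicRect_le y (n.sub_le i) hδ)
  have hlog : Real.log (C * ((2 ^ (n - (n - i)) : ℕ) : ℝ) ^ t) ≤
      Real.log C + t * i * Real.log 2 := by
    rw [Real.log_mul hC.ne' (by positivity), Real.log_rpow (by positivity), Nat.cast_pow,
      Nat.cast_ofNat, Real.log_pow, mul_assoc]
    gcongr
    omega
  have := mul_le_mul_of_nonneg_left hlog (Nat.cast_nonneg (α := ℝ) (Fintype.card Ω))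
  simp only [widthGain, zero_add, one_mul, zero_mul, Nat.sub_zero]
  linarith

theorem SparseRange.le_totalGain {t C δ₀ : ℝ} {P : Ω → ℝ} (h : SparseRange t C δ₀ P)
    (y : Ω → ℝ) {M i : ℕ} (ht : 0 ≤ t) (hC : 0 < C) (hδ : δ₀ ≤ 1 / 2 ^ M) (hiM : i ≤ M)
    (hzero : ∀ n, M - i ≤ n → logMass (dyadicRect P y n n) = 0) :
    i * logMass (dyadicRect P y 0 0) - M * Fintype.card Ω * (Real.log C + t * i * Real.log 2) ≤
      totalGain P y M i 0 := by
  have hsum : _ ≤ totalGain P y M i 0 := Finset.sum_le_sum fun n hn =>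
    h.logMass_sub_logMass_le_widthGain y (i := i) ht hC (hδ.trans (one_div_pow_le_one_div_pow_of_le
      one_le_two (Finset.mem_range.1 hn).le))
  have hvanish : ∑ n ∈ Finset.range M, logMass (dyadicRect P y n n) =
      ∑ n ∈ Finset.range (M - i), logMass (dyadicRect P y n n) := by
    rw [← Finset.sum_range_add_sum_Ico _ (M.sub_le i),
      Finset.sum_eq_zero (s := Finset.Ico _ _) fun n hn => hzero n (Finset.mem_Ico.1 hn).1,
      add_zero]
  rw [Finset.sum_sub_distrib, Finset.sum_sub_distrib, Finset.sum_const, Finset.card_range,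
    nsmul_eq_mul, hvanish, sum_range_tsub (fun n => logMass (dyadicRect P y n n)) hiM] at hsum
  linarith

theorem logMass_eq_zero_of_injective {β : Type*} {f : Ω → β} (hf : Function.Injective f) :
    logMass f = 0 := Finset.sum_eq_zero fun x _ => by
  have : cell f x = {x} := by
    ext z
    rw [mem_cell, Finset.mem_singleton, hf.eq_iff]
  simp [this]

theorem card_mul_log_card_sub_le_logMass {β : Type*} [DecidableEq β] (f : Ω → β) {K : ℝ}
    (hK : 0 < K) (h : ((Finset.univ.image f).card : ℝ) ≤ K) :
    Fintype.card Ω * (Real.log (Fintype.card Ω) - Real.log K) ≤ logMass f := by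
  have hcell (x : Ω) : cell (fun _ : Ω => ()) x = Finset.univ := by ext; simp
  have := logMass_sub_logMass_le_of_card_image_le (fun _ : Ω => ()) f hK fun x => by rwa [hcell x]
  simp only [logMass, hcell, Finset.sum_const, Finset.card_univ, nsmul_eq_mul] at this ⊢
  linarith

theorem le_logMass_dyadicRect_zero {P y : Ω → ℝ} (hP : ∀ x, |P x| ≤ 3) (hy : ∀ x, |y x| ≤ 1) :
    Fintype.card Ω * (Real.log (Fintype.card Ω) - 5 * Real.log 2) ≤
      logMass (dyadicRect P y 0 0) := by
  have floor_mem {u : ℝ} {k : ℤ} (hu : |u| ≤ k) : ⌊u⌋ ∈ Finset.Icc (-k) k := by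
    rw [abs_le] at hu
    exact Finset.mem_Icc.2 ⟨Int.le_floor.2 (by exact_mod_cast hu.1),
      Int.cast_le.1 ((Int.floor_le u).trans hu.2)⟩
  have hsub : Finset.univ.image (dyadicRect P y 0 0) ⊆
      Finset.Icc (-3) 3 ×ˢ Finset.Icc (-1) 1 := Finset.image_subset_iff.2 fun x _ => by
    simp only [dyadicRect, dyadicIndex, pow_zero, one_mul, Finset.mem_product]
    exact ⟨floor_mem (mod_cast hP x), floor_mem (mod_cast hy x)⟩
  have hcard : (Finset.univ.image (dyadicRect P y 0 0)).card ≤ 2 ^ 5 :=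
    (Finset.card_le_card hsub).trans (by decide)
  have := card_mul_log_card_sub_le_logMass (dyadicRect P y 0 0) (K := (2 : ℝ) ^ (5 : ℕ))
    (by positivity) (mod_cast hcard)
  rwa [Real.log_pow] at this

theorem fract_notMem_Icc_iff {τ s : ℝ} : Int.fract s ∉ Icc τ (1 - τ) ↔ |s - round s| < τ := by
  rw [abs_sub_round_eq_min, min_lt_iff, mem_Icc, not_and_or, not_le, not_le, sub_lt_comm]

theorem eq_of_abs_sub_round_lt {q T k k' : ℕ} (hqT : Nat.Coprime q T) (hk : k < q) (hk' : k' < q)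
    {u : ℝ} (h : |T * (u + k / q) - round (T * (u + k / q) : ℝ)| < 1 / (2 * q))
    (h' : |T * (u + k' / q) - round (T * (u + k' / q) : ℝ)| < 1 / (2 * q)) : k = k' := by
  have hq : (0 : ℝ) < q := Nat.cast_pos.2 (k.zero_le.trans_lt hk)
  set z := round (T * (u + k / q) : ℝ)
  set z' := round (T * (u + k' / q) : ℝ)
  have hlt : |((T * ((k : ℤ) - k') - q * (z - z') : ℤ) : ℝ)| < 1 :=
    calc |((T * ((k : ℤ) - k') - q * (z - z') : ℤ) : ℝ)|
        = q * |(T * (u + k / q) - z) - (T * (u + k' / q) - z')| := by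
          rw [← abs_of_pos hq, ← abs_mul, abs_of_pos hq]
          congr 1
          push_cast
          field_simp
          ring
      _ ≤ q * (|T * (u + k / q) - z| + |T * (u + k' / q) - z'|) := by gcongr; exact abs_sub _ _
      _ < q * (1 / (2 * q) + 1 / (2 * q)) := by gcongr
      _ = 1 := by field_simp; norm_num
  have heq : T * ((k : ℤ) - k') - q * (z - z') = 0 := Int.abs_lt_one_iff.1 (mod_cast hlt)
  have hdvd : (q : ℤ) ∣ k - k' :=
    (Nat.isCoprime_iff_coprime.2 hqT).dvd_of_dvd_mul_left ⟨z - z', sub_eq_zero.1 heq⟩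
  have := Int.eq_zero_of_abs_lt_dvd hdvd (abs_lt.2 ⟨by omega, by omega⟩)
  omega

theorem exists_sum_card_nearGrid_le (u : Ω → ℝ) {q : ℕ} (hq : Odd q) (M : ℕ) :
    ∃ k < q, ∑ n ∈ Finset.range M,
      ((nearGrid (1 / (2 * q)) fun x => 2 ^ n * (u x + k / q)).card : ℝ) ≤
        M * Fintype.card Ω / q := by
  simp only [← Finset.mem_range]
  refine Finset.exists_le_of_sum_le (Finset.nonempty_range_iff.2 hq.pos.ne') ?_
  have hq0 : (q : ℝ) ≠ 0 := Nat.cast_ne_zero.2 hq.pos.ne'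
  rw [Finset.sum_comm, Finset.sum_const, Finset.card_range, nsmul_eq_mul, mul_div_cancel₀ _ hq0]
  refine (Finset.sum_le_card_nsmul _ _ (Fintype.card Ω : ℝ) fun n _ => ?_).trans_eq (by simp)
  simp only [nearGrid, Finset.card_filter, Nat.cast_sum]
  rw [Finset.sum_comm, Fintype.card_eq_sum_ones, Nat.cast_sum]
  refine Finset.sum_le_sum fun x _ => ?_
  rw [← Nat.cast_sum, ← Finset.card_filter, Nat.cast_le,  Finset.card_le_one]
  simp only [Finset.mem_filter, Finset.mem_range, fract_notMem_Icc_iff]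
  rintro k ⟨hk, hnear⟩ k' ⟨hk', hnear'⟩
  exact eq_of_abs_sub_round_lt (T := 2 ^ n) (hq.coprime_two_right.pow_right n) hk hk'
    (mod_cast hnear) (mod_cast hnear')

end Projections

section Covers

variable {X : Type*} [PseudoMetricSpace X] {E E' : Set X} {n n' m : ℕ} {d d' : ℝ}

/-- `E` is covered by at most `n` sets of diameter at most `d`. -/
def HasCover (E : Set X) (n : ℕ) (d : ℝ) : Prop :=
  ∃ 𝒰 : Finset (Set X), 𝒰.card ≤ n ∧ E ⊆ ⋃ U ∈ 𝒰, U ∧ ∀ U ∈ 𝒰, ∀ x ∈ U, ∀ y ∈ U, dist x y ≤ d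

theorem HasCover.mono (h : HasCover E n d) (hE : E' ⊆ E) (hn : n ≤ n') (hd : d ≤ d') :
    HasCover E' n' d' := by
  obtain ⟨𝒰, hcard, hsub, hdist⟩ := h
  exact ⟨𝒰, hcard.trans hn, hE.trans hsub, fun U hU x hx y hy => (hdist U hU x hx y hy).trans hd⟩

theorem hasCover_empty (n : ℕ) (d : ℝ) : HasCover (∅ : Set X) n d :=
  ⟨∅, n.zero_le, empty_subset _, by simp⟩

theorem hasCover_one (h : ∀ x ∈ E, ∀ y ∈ E, dist x y ≤ d) : HasCover E 1 d :=
  ⟨{E}, by simp, by simp, by simpa using h⟩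

theorem HasCover.union (h : HasCover E n d) (h' : HasCover E' n' d) :
    HasCover (E ∪ E') (n + n') d := by
  classical
  obtain ⟨𝒰, hcard, hsub, hdist⟩ := h
  obtain ⟨𝒰', hcard', hsub', hdist'⟩ := h'
  refine ⟨𝒰 ∪ 𝒰', (Finset.card_union_le _ _).trans (add_le_add hcard hcard'), ?_, ?_⟩
  · rw [Finset.set_biUnion_union]
    exact union_subset_union hsub hsub'
  · exact fun U hU => (Finset.mem_union.1 hU).elim (hdist U) (hdist' U)

theorem hasCover_biUnion {ι : Type*} (s : Finset ι) {E : ι → Set X}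
    (h : ∀ b ∈ s, HasCover (E b) n d) : HasCover (⋃ b ∈ s, E b) (s.card * n) d := by
  classical
  induction s using Finset.induction with
  | empty => simpa using hasCover_empty 0 d
  | insert a s ha ih =>
    rw [Finset.set_biUnion_insert, Finset.card_insert_of_notMem ha, add_mul, one_mul, add_comm]
    exact (h a (s.mem_insert_self a)).union (ih fun b hb => h b (Finset.mem_insert_of_mem hb))

theorem HasCover.refine (h : HasCover E n d)
    (h' : ∀ U ⊆ E, (∀ x ∈ U, ∀ y ∈ U, dist x y ≤ d) → HasCover U m d') :
    HasCover E (n * m) d' := by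
  obtain ⟨𝒰, hcard, hsub, hdist⟩ := h
  refine (hasCover_biUnion 𝒰 (E := fun U => E ∩ U) fun U hU => h' _ inter_subset_left
    fun x hx y hy => hdist U hU x hx.2 y hy.2).mono ?_ (Nat.mul_le_mul_right _ hcard) le_rfl
  rw [← inter_iUnion₂]
  exact subset_inter subset_rfl hsub

theorem HasCover.comap {Y : Type*} [PseudoMetricSpace Y] {S : Set Y} {f : Y → X}
    (h : HasCover E n d) (hf : MapsTo f S E)
    (hd : ∀ x ∈ S, ∀ y ∈ S, dist (f x) (f y) ≤ d → dist x y ≤ d') : HasCover S n d' := by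
  classical
  obtain ⟨𝒰, hcard, hsub, hdist⟩ := h
  refine ⟨𝒰.image fun U => S ∩ f ⁻¹' U, Finset.card_image_le.trans hcard, fun x hx => ?_,
    Finset.forall_mem_image.2 fun U hU x hx y hy => hd x hx.1 y hy.1 (hdist U hU _ hx.2 _ hy.2)⟩
  obtain ⟨U, hU, hxU⟩ := mem_iUnion₂.1 (hsub (hf hx))
  exact mem_iUnion₂.2 ⟨_, Finset.mem_image_of_mem _ hU, hx, hxU⟩

theorem HasCover.prod {Y : Type*} [PseudoMetricSpace Y] {E' : Set Y} (h : HasCover E n d)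
    (h' : HasCover E' n' d) : HasCover (E ×ˢ E') (n * n') d := by
  classical
  obtain ⟨𝒰, hcard, hsub, hdist⟩ := h
  obtain ⟨𝒰', hcard', hsub', hdist'⟩ := h'
  refine ⟨Finset.image₂ (· ×ˢ ·) 𝒰 𝒰', Finset.card_image₂_le _ _ _ |>.trans
    (Nat.mul_le_mul hcard hcard'), fun x hx => ?_, Finset.forall_mem_image₂.2
    fun U hU U' hU' x hx y hy => max_le (hdist U hU _ hx.1 _ hy.1) (hdist' U' hU' _ hx.2 _ hy.2)⟩
  obtain ⟨U, hU, hxU⟩ := mem_iUnion₂.1 (hsub hx.1)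
  obtain ⟨U', hU', hxU'⟩ := mem_iUnion₂.1 (hsub' hx.2)
  exact mem_iUnion₂.2 ⟨_, Finset.mem_image₂_of_mem hU hU', hxU, hxU'⟩

theorem hasCover_Icc {a b : ℝ} (hab : a ≤ b) {k : ℕ} (hk : 0 < k) :
    HasCover (Icc a b) k ((b - a) / k) := by
  have hk0 : (k : ℝ) ≠ 0 := Nat.cast_ne_zero.2 hk.ne'
  set e := (b - a) / k with he
  have he0 : 0 ≤ e := div_nonneg (sub_nonneg.2 hab) k.cast_nonneg
  have hIcc (v : ℝ) : HasCover (Icc v (v + e)) 1 e := hasCover_one fun x hx y hy => by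
    simpa using Real.dist_le_of_mem_Icc hx hy
  have hsteps : ∀ j : ℕ, HasCover (Icc a (a + (j + 1) * e)) (j + 1) e := fun j => by
    induction j with
    | zero => simpa using hIcc a
    | succ j ih =>
      refine (ih.union (hIcc (a + (j + 1) * e))).mono ?_ le_rfl le_rfl
      push_cast
      rw [add_mul _ 1 e, one_mul, ← add_assoc]
      exact Icc_subset_Icc_union_Icc
  obtain ⟨j, rfl⟩ := Nat.exists_eq_add_one_of_ne_zero hk.ne'
  refine (hsteps j).mono (Icc_subset_Icc_right (le_of_eq ?_)) le_rfl le_rfl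
  rw [← Nat.cast_add_one, he, mul_div_cancel₀ _ hk0, add_sub_cancel]

theorem hasCover_Icc_ceil {a b : ℝ} (hab : a < b) (hd : 0 < d) :
    HasCover (Icc a b) ⌈(b - a) / d⌉₊ d := by
  have hceil : 0 < ⌈(b - a) / d⌉₊ := Nat.ceil_pos.2 (div_pos (sub_pos.2 hab) hd)
  refine (hasCover_Icc hab.le hceil).mono subset_rfl le_rfl ?_
  rw [div_le_comm₀ (Nat.cast_pos.2 hceil) hd]
  exact Nat.le_ceil _

theorem hasCover_of_forall_dist_le {U : Set ℝ} (hd : 0 ≤ d) (h : ∀ x ∈ U, ∀ y ∈ U, dist x y ≤ d)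
    {k : ℕ} (hk : 0 < k) : HasCover U k (d / k) := by
  have hU : Bornology.IsBounded U := isBounded_iff.2 ⟨d, fun x hx y hy => h x hx y hy⟩
  refine (hasCover_Icc (Real.sInf_le_sSup U hU.bddBelow hU.bddAbove) hk).mono
    hU.subset_Icc_sInf_sSup le_rfl ?_
  rw [← Real.diam_eq hU]
  gcongr
  exact diam_le_of_forall_dist_le hd h

end Covers

section RegularDirections

/-- Passing from the width `2 ^ (-(w + 4) * i)` to the next one costs a factor `2 ^ i`, except where
the hypothesis shows that it is free. -/
theorem hasCover_of_rigid {E : Set ℝ} (hE : E ⊆ Icc (-1) 1) {i : ℕ} (p : ℕ → Prop)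
    [DecidablePred p] {W : ℕ}
    (h : ∀ w < W, ¬ p w → ∀ θ ∈ E, ∀ θ' ∈ E, dist θ θ' ≤ 1 / 2 ^ ((w + 4) * i) →
      dist θ θ' ≤ 1 / 2 ^ ((w + 5) * i)) :
    HasCover E (2 ^ (4 * i + 1) * 2 ^ (i * Nat.count p W)) (1 / 2 ^ ((W + 4) * i)) := by
  induction W with
  | zero =>
    refine (hasCover_Icc (neg_le_self zero_le_one) (by positivity : 0 < 2 ^ (4 * i + 1))).mono hE
      (by simp) (le_of_eq ?_)
    rw [Nat.cast_pow, Nat.cast_ofNat, zero_add, pow_succ]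
    field_simp
    norm_num
  | succ w ih =>
    have ih := ih fun v hv => h v (hv.trans w.lt_succ_self)
    by_cases hw : p w
    · refine (ih.refine fun U _ hU =>
        hasCover_of_forall_dist_le (by positivity) hU (by positivity : 0 < 2 ^ i)).mono subset_rfl
        (le_of_eq ?_) (le_of_eq ?_)
      · rw [Nat.count_succ, if_pos hw, mul_add_one, pow_add _ _ i, mul_assoc]
      · rw [Nat.cast_pow, Nat.cast_ofNat, div_div, ← pow_add]
        ring_nf
    · refine (ih.refine fun U hUE hU => hasCover_one fun θ hθ θ' hθ' =>
        h w w.lt_succ_self hw θ (hUE hθ) θ' (hUE hθ') (hU θ hθ θ' hθ')).mono subset_rfl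
        (le_of_eq ?_) (le_of_eq ?_)
      · rw [Nat.count_succ, if_neg hw, add_zero, mul_one]
      · rw [add_right_comm]

variable {Ω : Type*} [Fintype Ω]

open scoped Classical in
/-- The relative widths, among the first `W`, at which `P` fails to be regular. -/
def irregularWidths (P y : Ω → ℝ) (c η : ℝ) (M i W : ℕ) : Finset ℕ :=
  {w ∈ Finset.range W | ¬ RegularAt P y c η ((W + 3) * i) M i w}

theorem mem_irregularWidths {P y : Ω → ℝ} {c η : ℝ} {M i W w : ℕ} :
    w ∈ irregularWidths P y c η M i W ↔ w < W ∧ ¬ RegularAt P y c η ((W + 3) * i) M i w := by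
  simp only [irregularWidths, Finset.mem_filter, Finset.mem_range]

/-- The slopes `θ ∈ [-1, 1]` such that some translate of `p + θ * y` is well placed, and regular at
all but at most `b` of the first `W` relative widths. -/
def regularDirections (p y : Ω → ℝ) (τ gap c η : ℝ) (M i W b : ℕ) : Set ℝ :=
  {θ | |θ| ≤ 1 ∧ ∃ κ, WellPlaced τ gap c M (fun x => p x + θ * y x + κ) ∧
    (irregularWidths (fun x => p x + θ * y x + κ) y c η M i W).card ≤ b}

/-- Two directions whose irregular widths agree cannot be at a distance corresponding to one of
the remaining widths, so the directions are sorted by their sets of irregular widths. -/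
theorem AdmissibleScale.hasCover_regularDirections [Nonempty Ω] {τ gap c η ε : ℝ} {i M : ℕ}
    (hi : AdmissibleScale gap c η ε i) (hM : 0 < M) (p y : Ω → ℝ) (W b : ℕ) :
    HasCover (regularDirections p y τ gap c η M i W b) (2 ^ W * (2 ^ (4 * i + 1) * 2 ^ (i * b)))
      (1 / 2 ^ ((W + 4) * i)) := by
  choose! hbound κ hplaced hcard using
    fun θ (hθ : θ ∈ regularDirections p y τ gap c η M i W b) => hθ
  set E := regularDirections p y τ gap c η M i W b
  set P : ℝ → Ω → ℝ := fun θ x => p x + θ * y x + κ θ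
  have hfiber : ∀ B ∈ (Finset.range W).powerset,
      HasCover {θ ∈ E | irregularWidths (P θ) y c η M i W = B} (2 ^ (4 * i + 1) * 2 ^ (i * b))
        (1 / 2 ^ ((W + 4) * i)) := fun B _ => by
    by_cases hB : B.card ≤ b
    · refine (hasCover_of_rigid (fun θ hθ => abs_le.1 (hbound θ hθ.1)) (· ∈ B)
        fun w hwW hwB θ hθ θ' hθ' hle => ?_).mono subset_rfl ?_ le_rfl
      · by_contra! hlt
        rw [dist_comm, Real.dist_eq] at hle hlt
        have hregular : ∀ θ ∈ {θ ∈ E | irregularWidths (P θ) y c η M i W = B},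
            RegularAt (P θ) y c η ((W + 3) * i) M i w := fun θ hθ => by
          by_contra hnot
          exact hwB (hθ.2 ▸ mem_irregularWidths.2 ⟨hwW, hnot⟩)
        exact hi.not_regularAt hM (hplaced θ hθ.1) (hplaced θ' hθ'.1) (ϑ := θ' - θ)
          (κ := κ θ' - κ θ) (fun x => by ring) hle hlt.le (Nat.mul_le_mul_right _ (by omega))
          (hregular θ hθ) (hregular θ' hθ')
      · gcongr
        · norm_num
        · rw [Nat.count_eq_card_filter_range]
          exact (Finset.card_le_card fun w hw => (Finset.mem_filter.1 hw).2).trans hB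
    · refine (hasCover_empty _ _).mono (fun θ hθ => hB ?_) le_rfl le_rfl
      exact hθ.2 ▸ hcard θ hθ.1
  refine (hasCover_biUnion _ hfiber).mono (fun θ hθ => ?_) (by simp) le_rfl
  exact mem_iUnion₂.2 ⟨_, Finset.mem_powerset.2 fun w hw =>
    Finset.mem_range.2 (mem_irregularWidths.1 hw).1, hθ, rfl⟩

end RegularDirections

section SparseDirections

theorem eventually_le_mul_natCast {a : ℝ} (ha : 0 < a) (b : ℝ) : ∀ᶠ n : ℕ in atTop, b ≤ a * n :=
  (tendsto_natCast_atTop_atTop.const_mul_atTop ha).eventually_ge_atTop b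

theorem eventually_le_mul_two_pow {a : ℝ} (ha : 0 < a) (b : ℝ) :
    ∀ᶠ n : ℕ in atTop, b ≤ a * 2 ^ n :=
  ((tendsto_pow_atTop_atTop_of_one_lt one_lt_two).const_mul_atTop ha).eventually_ge_atTop b

theorem exists_mul_rpow_lt {t : ℝ} (C : ℝ) (ht : t < 1) : ∃ m : ℕ, 1 ≤ m ∧ C * (m : ℝ) ^ t < m := by
  have htendsto : Tendsto (fun m : ℕ => (m : ℝ) ^ (1 - t)) atTop atTop :=
    (tendsto_rpow_atTop (sub_pos.2 ht)).comp tendsto_natCast_atTop_atTop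
  obtain ⟨m, hm, hm1⟩ := ((htendsto.eventually_gt_atTop C).and (eventually_ge_atTop 1)).exists
  have hm0 : (0 : ℝ) < m := Nat.cast_pos.2 hm1
  refine ⟨m, hm1, ?_⟩
  calc C * (m : ℝ) ^ t < (m : ℝ) ^ (1 - t) * (m : ℝ) ^ t := by gcongr
    _ = m := by rw [← Real.rpow_add hm0, sub_add_cancel, Real.rpow_one]

/-- A uniformity threshold `ε` for which `2 ^ i` subdivisions are admissible. -/
def uniformityBound (c : ℝ) (i : ℕ) : ℝ := (c / 60) ^ 2 / (8 * (2 ^ i) ^ 8)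

/-- A defect threshold `η` for which `2 ^ i` subdivisions are admissible. -/
def defectBound (c : ℝ) (i : ℕ) : ℝ :=
  uniformityBound c i ^ 2 * (c / 60) ^ 2 / (8 * (2 ^ i) ^ 4)

theorem uniformityBound_pos {c : ℝ} (hc : 0 < c) (i : ℕ) : 0 < uniformityBound c i := by
  unfold uniformityBound
  positivity

theorem defectBound_pos {c : ℝ} (hc : 0 < c) (i : ℕ) : 0 < defectBound c i := by
  have := uniformityBound_pos hc i
  unfold defectBound
  positivity

theorem admissibleScale_defectBound {gap c : ℝ} {i : ℕ} (hc : 0 < c) (hi : 4 ≤ i)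
    (hgap : 16 ≤ gap * 2 ^ i) :
    AdmissibleScale gap c (defectBound c i) (uniformityBound c i) i where
  four_le := hi
  div_le_gap := (div_le_iff₀ (by positivity)).2 hgap
  c_pos := hc
  eta_pos := defectBound_pos hc i
  eps_pos := uniformityBound_pos hc i
  eps_le := le_of_eq (by unfold uniformityBound; field_simp)
  eta_le := le_of_eq (by unfold defectBound; field_simp)

/-- The sequence of scales obtained by iterating `i ↦ (W i + 2) * i`. -/
def scaleChain (W : ℕ → ℕ) (I : ℕ) : ℕ → ℕ
  | 0 => I
  | r + 1 => (W (scaleChain W I r) + 2) * scaleChain W I r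

theorem scaleChain_mono (W : ℕ → ℕ) (I : ℕ) : Monotone (scaleChain W I) :=
  monotone_nat_of_le_succ fun _ => Nat.le_mul_of_pos_left _ (by omega)

theorem le_scaleChain (W : ℕ → ℕ) (I r : ℕ) : I ≤ scaleChain W I r :=
  scaleChain_mono W I r.zero_le

theorem exists_card_irregularWidths_le.{u} {c κ : ℝ} (hc : 0 < c) (hκ : 0 < κ) :
    ∃ (W : ℕ → ℕ) (R : ℕ), (∀ i, 20 ≤ κ * W i) ∧ ∀ I : ℕ, 6 ≤ c * I → ∀ᶠ M in atTop,
      ∀ (Ω : Type u) [Fintype Ω] [Nonempty Ω] (P y : Ω → ℝ),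
        (∀ r < R, 3 * c * scaleChain W I r * (M * Fintype.card Ω * Real.log 2) ≤
          totalGain P y M (scaleChain W I r) 0) →
        ∃ r < R, ((irregularWidths P y c (defectBound c (scaleChain W I r)) M (scaleChain W I r)
          (W (scaleChain W I r))).card : ℝ) ≤ κ / 4 * W (scaleChain W I r) := by
  have hW (i : ℕ) : ∃ W : ℕ, 2 ≤ W ∧ 20 ≤ κ * W ∧
      30 * (gridPairs ((2 ^ i) ^ 4)).card / (defectBound c i * c) ≤ κ / 8 * W :=
    ((eventually_ge_atTop 2).and ((eventually_le_mul_natCast hκ _).and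
      (eventually_le_mul_natCast (by positivity) _))).exists
  choose W hW2 hW20 hWgrid using hW
  obtain ⟨R, hR, hR0⟩ := ((eventually_le_mul_natCast (mul_pos hc hκ) 16).and
    (eventually_gt_atTop 0)).exists
  refine ⟨W, R, hW20, fun I hI => ?_⟩
  set i := scaleChain W I
  filter_upwards [eventually_gt_atTop 0, (Finset.eventually_all (Finset.range R)).2 fun r _ =>
    eventually_le_mul_natCast hc (2 * ((W (i r) + 3) * i r : ℕ))] with M hM hMW Ω _ _ P y hgain
  obtain ⟨r, hr, hle⟩ := exists_card_filter_not_regularAt_le (P := P) (y := y) (i := i)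
    (W := fun r => W (i r)) (η := fun r => defectBound c (i r)) hR0 hM hc (fun _ => rfl)
    (fun r => hI.trans (by gcongr; exact le_scaleChain W I r)) (fun _ => defectBound_pos hc _)
    (fun r hr => hMW r (Finset.mem_range.2 hr)) hgain
  refine ⟨r, hr, hle.trans ?_⟩
  have hWR : ((W (i r) : ℝ) + 2) / (R * c) ≤ κ / 8 * W (i r) := by
    have : (0 : ℝ) < R := Nat.cast_pos.2 hR0
    have hW2 : (2 : ℝ) ≤ W (i r) := mod_cast hW2 (i r)
    rw [div_le_iff₀ (by positivity)]
    nlinarith [mul_le_mul_of_nonneg_left hR (Nat.cast_nonneg (α := ℝ) (W (i r)))]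
  linarith [hWgrid (i r)]

theorem exists_wellPlaced_add_const.{u} {t C c : ℝ} (ht : t < 1) (hc : 0 < c) :
    ∃ τ gap : ℝ, 0 < gap ∧ gap ≤ 1 ∧ ∀ (Ω : Type u) [Fintype Ω] (u : Ω → ℝ) (δ₀ : ℝ) (M : ℕ),
      SparseRange t C δ₀ u → δ₀ ≤ gap / 2 ^ M →
        ∃ κ ∈ Icc (0 : ℝ) 1, WellPlaced τ gap c M fun x => u x + κ := by
  obtain ⟨m, hm1, hm⟩ := exists_mul_rpow_lt C ht
  obtain ⟨k₀, hk₀⟩ := (eventually_le_mul_natCast hc 10).exists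
  set q := 2 * k₀ + 1
  have hq0 : (0 : ℝ) < q := Nat.cast_pos.2 (Nat.succ_pos _)
  have hqc : 1 / (q : ℝ) ≤ c / 10 := by
    have : (k₀ : ℝ) ≤ q := mod_cast (by omega)
    rw [div_le_iff₀ hq0]
    nlinarith
  have hm0 : (1 : ℝ) ≤ m := mod_cast hm1
  have hq1 : (1 : ℝ) ≤ q := mod_cast Nat.succ_pos _
  refine ⟨1 / (2 * q), 1 / (8 * q * m), by positivity, ?_, fun Ω _ u δ₀ M hu hδ => ?_⟩
  · rw [div_le_one (by positivity)]
    nlinarith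
  obtain ⟨k, hk, hnear⟩ := exists_sum_card_nearGrid_le u (odd_two_mul_add_one k₀) M
  refine ⟨k / q, ⟨by positivity, (div_le_one hq0).2 (mod_cast hk.le)⟩, fun n hn s => ?_, ?_⟩
  · obtain ⟨g, hsg, hgs, hg⟩ := (hu.add_const (k / q)).exists_gap (n := n)
      (gap := 1 / (8 * q * m)) (by positivity) hm1 hm
      (hδ.trans (by gcongr; exact one_le_two)) s
    exact ⟨g, hsg, hgs.trans_eq (by field_simp; ring), hg⟩
  · calc _ ≤ M * Fintype.card Ω / (q : ℝ) := hnear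
      _ = 1 / q * (M * Fintype.card Ω) := by ring
      _ ≤ c / 10 * (M * Fintype.card Ω) := by gcongr

theorem SparseRange.mul_le_totalGain {Ω : Type*} [Fintype Ω] [Nonempty Ω] {t C c : ℝ}
    {P y : Ω → ℝ} {N K i : ℕ} (h : SparseRange t C (1 / 2 ^ (N + (2 + K))) P)
    (hP : ∀ x, |P x| ≤ 3) (hy : ∀ x, |y x| ≤ 1)
    (hinj : ∀ n, N + 1 ≤ n → Function.Injective (dyadicRect P y n n))
    (hcard : 2 ^ ((t + 4 * c) * N) ≤ (Fintype.card Ω : ℝ)) (ht : 0 ≤ t) (hC : 0 < C) (hiK : i ≤ K)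
    (hc : 0 < c) (hCi : Real.log C ≤ c / 2 * Real.log 2 * i)
    (hN : 5 + (t + 4 * c) * (2 + K) ≤ c / 2 * N) :
    3 * c * i * ((N + (2 + K) : ℕ) * Fintype.card Ω * Real.log 2) ≤
      totalGain P y (N + (2 + K)) i 0 := by
  set Z : ℝ := ((Fintype.card Ω : ℕ) : ℝ)
  have : 0 < Z := Nat.cast_pos.2 Fintype.card_pos
  have hlog : (t + 4 * c) * N * Real.log 2 ≤ Real.log Z := by
    rw [← Real.log_rpow two_pos]
    exact Real.log_le_log (by positivity) hcard
  have hscale : (3 * c + c / 2 + t) * (N + (2 + K) : ℕ) ≤ (t + 4 * c) * N - 5 := by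
    have : (0 : ℝ) ≤ c / 2 * (2 + K) := by positivity
    push_cast
    linarith
  have hzero := h.le_totalGain y ht hC le_rfl (hiK.trans (by omega)) fun n hn =>
    logMass_eq_zero_of_injective (hinj n (by omega))
  refine le_trans ?_ hzero
  rw [le_sub_iff_add_le]
  calc _ ≤ 3 * c * i * ((N + (2 + K) : ℕ) * Z * Real.log 2) +
        (N + (2 + K) : ℕ) * Z * (c / 2 * Real.log 2 * i + t * i * Real.log 2) := by gcongr
    _ = i * Z * Real.log 2 * ((3 * c + c / 2 + t) * (N + (2 + K) : ℕ)) := by ring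
    _ ≤ i * Z * Real.log 2 * ((t + 4 * c) * N - 5) := by gcongr
    _ = i * (Z * ((t + 4 * c) * N * Real.log 2 - 5 * Real.log 2)) := by ring
    _ ≤ i * (Z * (Real.log Z - 5 * Real.log 2)) := by gcongr
    _ ≤ i * logMass (dyadicRect P y 0 0) := by gcongr; exact le_logMass_dyadicRect_zero hP hy

theorem two_pow_mul_le_two_rpow {κ : ℝ} {i W b : ℕ} (hi : 4 ≤ κ * i) (hW : 20 ≤ κ * W)
    (hb : b ≤ κ / 4 * W) :
    ((2 ^ W * (2 ^ (4 * i + 1) * 2 ^ (i * b)) : ℕ) : ℝ) ≤ 2 ^ (κ * ((W + 2) * i : ℕ)) := by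
  have hWi : (W : ℝ) * 4 ≤ W * (κ * i) := by gcongr
  have hiW : (i : ℝ) * 20 ≤ i * (κ * W) := by gcongr
  have hib : (i : ℝ) * b ≤ i * (κ / 4 * W) := by gcongr
  rw [← pow_add, ← pow_add, Nat.cast_pow, Nat.cast_ofNat, ← Real.rpow_natCast]
  refine Real.rpow_le_rpow_of_exponent_le one_le_two ?_
  push_cast
  linarith

theorem AdmissibleScale.exists_hasCover_regularDirections {Ω : Type*} [Fintype Ω] [Nonempty Ω]
    {τ gap c η ε κ : ℝ} {i W M : ℕ} (hi : AdmissibleScale gap c η ε i) (hM : 0 < M) (p y : Ω → ℝ)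
    (hκi : 4 ≤ κ * i) (hκW : 20 ≤ κ * W) :
    ∃ n : ℕ, (n : ℝ) ≤ 2 ^ (κ * ((W + 2) * i : ℕ)) ∧
      HasCover (regularDirections p y τ gap c η M i W ⌊κ / 4 * W⌋₊) n (1 / 2 ^ ((W + 2) * i)) := by
  refine ⟨_, two_pow_mul_le_two_rpow hκi hκW (Nat.floor_le (by linarith)),
    (hi.hasCover_regularDirections hM p y _ _).mono subset_rfl le_rfl ?_⟩
  exact one_div_pow_le_one_div_pow_of_le one_le_two
    (Nat.mul_le_mul_right _ (Nat.add_le_add_left (by norm_num) _))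

theorem abs_add_mul_add_le_three {a b θ ω : ℝ} (ha : |a| ≤ 1) (hb : |b| ≤ 1) (hθ : |θ| ≤ 1)
    (hω : |ω| ≤ 1) : |a + θ * b + ω| ≤ 3 :=
  calc |a + θ * b + ω| ≤ |a| + |θ| * |b| + |ω| := by
        rw [← abs_mul]
        exact abs_add_three _ _ _
    _ ≤ 1 + 1 * 1 + 1 := by gcongr
    _ = 3 := by norm_num

/-- The slopes `θ ∈ [-1, 1]` for which the projection `p + θ * y` has a sparse range. -/
def sparseDirections {Ω : Type*} (p y : Ω → ℝ) (t C δ₀ : ℝ) : Set ℝ :=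
  {θ | |θ| ≤ 1 ∧ SparseRange t C δ₀ fun x => p x + θ * y x}

theorem exists_sparseDirections_subset_iUnion.{u} {t C s κ : ℝ} (ht0 : 0 ≤ t) (ht1 : t < 1)
    (hC : 0 < C) (hst : t < s) (hκ : 0 < κ) :
    ∃ R : ℕ, ∀ I₀ : ℕ, ∃ L : ℕ → ℕ, (∀ r, I₀ ≤ L r) ∧ ∀ᶠ N : ℕ in atTop,
      ∀ (Ω : Type u) [Fintype Ω] (p y : Ω → ℝ), (∀ x, |p x| ≤ 1) → (∀ x, |y x| ≤ 1) →
        (∀ x z, x ≠ z → 1 / 2 ^ N ≤ max |p x - p z| |y x - y z|) →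
        2 ^ (s * N) ≤ (Fintype.card Ω : ℝ) →
        ∃ E : ℕ → Set ℝ, sparseDirections p y t C (1 / 2 ^ (2 * N)) ⊆ ⋃ r ∈ Finset.range R, E r ∧
          ∀ r, ∃ n : ℕ, (n : ℝ) ≤ 2 ^ (κ * L r) ∧ HasCover (E r) n (1 / 2 ^ L r) := by
  obtain ⟨c, rfl⟩ : ∃ c, s = t + 4 * c := ⟨(s - t) / 4, by ring⟩
  have hc : 0 < c := by linarith
  obtain ⟨τ, gap, hgap0, hgap1, hplace⟩ := exists_wellPlaced_add_const (C := C) ht1 hc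
  obtain ⟨W, R, hW, hregular⟩ := exists_card_irregularWidths_le hc hκ
  refine ⟨R, fun I₀ => ?_⟩
  obtain ⟨I, hII₀, hI4, hIgap, hIκ, hIc, hIC⟩ := ((eventually_ge_atTop I₀).and
    ((eventually_ge_atTop 4).and ((eventually_le_mul_two_pow hgap0 16).and
    ((eventually_le_mul_natCast hκ 4).and ((eventually_le_mul_natCast hc 6).and
    (eventually_le_mul_natCast (mul_pos (half_pos hc) (Real.log_pos one_lt_two))
      (Real.log C))))))).exists
  set i := scaleChain W I
  have hIi (r : ℕ) : I ≤ i r := le_scaleChain W I r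
  refine ⟨fun r => i (r + 1), fun r => hII₀.trans (hIi _), ?_⟩
  filter_upwards [eventually_le_mul_two_pow hgap0 (2 ^ (2 + i R)),
    eventually_le_mul_natCast (half_pos hc) (5 + (t + 4 * c) * (2 + i R)),
    (tendsto_add_atTop_nat (2 + i R)).eventually ((hregular I hIc).and (eventually_gt_atTop 0))]
    with N hNgap hNK hM Ω _ p y hp hy hsep hcard
  obtain ⟨hregular, hM⟩ := hM
  set M := N + (2 + i R)
  have hZ : (0 : ℝ) < Fintype.card Ω := lt_of_lt_of_le (by positivity) hcard
  have : Nonempty Ω := Fintype.card_pos_iff.1 (Nat.cast_pos.1 hZ)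
  have hδ : 1 / (2 : ℝ) ^ (2 * N) ≤ gap / 2 ^ M := by
    rw [div_le_div_iff₀ (by positivity) (by positivity), one_mul]
    calc (2 : ℝ) ^ M = 2 ^ N * 2 ^ (2 + i R) := pow_add _ _ _
      _ ≤ 2 ^ N * (gap * 2 ^ N) := by gcongr
      _ = gap * 2 ^ (2 * N) := by ring
  refine ⟨fun r => regularDirections p y τ gap c (defectBound c (i r)) M (i r) (W (i r))
    ⌊κ / 4 * W (i r)⌋₊, fun θ ⟨hθ, hsparse⟩ => ?_, fun r => ?_⟩
  · obtain ⟨ω, hω, hplaced⟩ := hplace Ω _ _ M hsparse hδ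
    have hsparse : SparseRange t C (1 / 2 ^ M) fun x => p x + θ * y x + ω := fun a δ hMδ =>
      hsparse.add_const ω a δ ((hδ.trans (by gcongr)).trans hMδ)
    obtain ⟨r, hr, hle⟩ := hregular Ω _ y fun r hr => hsparse.mul_le_totalGain
      (fun x => abs_add_mul_add_le_three (hp x) (hy x) hθ (abs_le.2 ⟨by linarith [hω.1], hω.2⟩)) hy
      (fun n => dyadicRect_injective hsep hθ fun _ => rfl) hcard ht0 hC
      (scaleChain_mono W I hr.le) hc (hIC.trans (by gcongr; exact hIi r)) hNK
    exact mem_iUnion₂.2 ⟨r, Finset.mem_range.2 hr, hθ, ω, hplaced, Nat.le_floor hle⟩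
  · exact (admissibleScale_defectBound hc (hI4.trans (hIi r)) (hIgap.trans
      (by gcongr; exacts [one_le_two, hIi r]))).exists_hasCover_regularDirections hM p y
      (hIκ.trans (by gcongr; exact hIi r)) (hW (i r))

end SparseDirections

section Assouad

variable {X : Type*} [PseudoMetricSpace X] {E F : Set X}

theorem HasCover.ediam_iff {n : ℕ} {d : ℝ} (hd : 0 ≤ d) :
    HasCover E n d ↔ ∃ 𝒰 : Finset (Set X), E ⊆ ⋃ U ∈ 𝒰, U ∧
      (∀ U ∈ 𝒰, ediam U ≤ ENNReal.ofReal d) ∧ 𝒰.card ≤ n := by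
  simp only [HasCover, ediam_le_iff, edist_le_ofReal hd]
  tauto

/-- The covering condition in the definition of the Assouad dimension, for the exponent `α` and the
constant `C`. -/
def AssouadBound (E : Set X) (α C : ℝ) : Prop :=
  ∀ x ∈ E, ∀ r R : ℝ, 0 < r → r < R →
    ∃ n : ℕ, (n : ℝ) ≤ C * (R / r) ^ α ∧ HasCover (E ∩ closedBall x R) n r

theorem assouadDim_eq_sInf (E : Set X) :
    assouadDim E = sInf {α : ℝ | 0 ≤ α ∧ ∃ C : ℝ, 0 < C ∧ AssouadBound E α C} := by
  refine congrArg sInf (Set.ext fun α => and_congr_right fun _ => exists_congr fun C =>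
    and_congr_right fun _ => forall₂_congr fun x _ => forall₄_congr fun r R hr _ => ?_)
  simp only [HasCover.ediam_iff hr.le]
  constructor
  · rintro ⟨𝒰, hsub, hdiam, hcard⟩
    exact ⟨𝒰.card, hcard, 𝒰, hsub, hdiam, le_rfl⟩
  · rintro ⟨n, hn, 𝒰, hsub, hdiam, hcard⟩
    exact ⟨𝒰, hsub, hdiam, (Nat.cast_le.2 hcard).trans hn⟩

theorem AssouadBound.mono {α β C C' : ℝ} (h : AssouadBound E α C) (hα : α ≤ β) (hC : C ≤ C')
    (hC' : 0 ≤ C') : AssouadBound E β C' := fun x hx r R hr hR => by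
  obtain ⟨n, hn, hcover⟩ := h x hx r R hr hR
  have : 1 ≤ R / r := (one_le_div hr).2 hR.le
  exact ⟨n, hn.trans (by gcongr), hcover⟩

theorem AssouadBound.assouadDim_le {α C : ℝ} (h : AssouadBound E α C) (hα : 0 ≤ α) (hC : 0 < C) :
    assouadDim E ≤ α :=
  (assouadDim_eq_sInf E).trans_le (csInf_le ⟨0, fun _ hb => hb.1⟩ ⟨hα, C, hC, h⟩)

theorem assouadBound_real (E : Set ℝ) : AssouadBound E 1 3 := fun x _ r R hr hR => by
  refine ⟨_, ?_, (hasCover_Icc_ceil (by linarith : x - R < x + R) hr).mono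
    (Real.closedBall_eq_Icc ▸ inter_subset_right) le_rfl le_rfl⟩
  have hRr : 1 ≤ R / r := (one_le_div hr).2 hR.le
  rw [Real.rpow_one, show (x + R - (x - R)) / r = 2 * (R / r) by ring]
  linarith [Nat.ceil_lt_add_one (a := 2 * (R / r)) (by positivity)]

theorem assouadDim_real_le_one (E : Set ℝ) : assouadDim E ≤ 1 :=
  (assouadBound_real E).assouadDim_le zero_le_one three_pos

theorem exists_assouadBound_of_lt {E : Set ℝ} {a : ℝ} (h : assouadDim E < a) :
    ∃ (t : ℚ) (C : ℕ), 0 ≤ t ∧ (t : ℝ) < a ∧ 1 ≤ C ∧ AssouadBound E t C := by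
  rw [assouadDim_eq_sInf] at h
  obtain ⟨α, ⟨hα0, C, hC, hbound⟩, hα⟩ :=
    exists_lt_of_csInf_lt (s := {α : ℝ | 0 ≤ α ∧ ∃ C : ℝ, 0 < C ∧ AssouadBound E α C})
      ⟨1, zero_le_one, 3, three_pos, assouadBound_real E⟩ h
  obtain ⟨t, ht, hta⟩ := exists_rat_btwn hα
  exact ⟨t, ⌈C⌉₊, mod_cast hα0.trans ht.le, hta, Nat.ceil_pos.2 hC,
    hbound.mono ht.le (Nat.le_ceil C) (Nat.cast_nonneg _)⟩

theorem hasCover_of_isCover {ε : ℝ≥0} {S : Finset X} (h : IsCover ε E (S : Set X)) :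
    HasCover E S.card (2 * ε) := by
  rw [isCover_iff_subset_iUnion_closedBall] at h
  refine (hasCover_biUnion S (E := fun a => closedBall a (ε : ℝ)) (n := 1) fun a _ =>
    hasCover_one fun x hx y hy => ?_).mono h (mul_one _).le le_rfl
  linarith [dist_triangle_right x y a, mem_closedBall.1 hx, mem_closedBall.1 hy]

theorem hasCover_of_forall_card_separated_le {ε : ℝ} {n : ℕ} (hε : 0 ≤ ε)
    (h : ∀ S : Finset X, ↑S ⊆ E → (∀ a ∈ S, ∀ b ∈ S, a ≠ b → ε < dist a b) → S.card ≤ n) :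
    HasCover E n (2 * ε) := by
  lift ε to ℝ≥0 using hε
  have hpacking : packingNumber ε E ≤ n := iSup₂_le fun S hSE => iSup_le fun hS => by
    by_contra! hlt
    obtain ⟨T, hTS, hT⟩ := exists_subset_encard_eq (Order.add_one_le_of_lt hlt)
    lift T to Finset X using finite_of_encard_eq_coe (k := n + 1) (mod_cast hT)
    have hle := h T (hTS.trans hSE) fun a ha b hb hab => by
      simpa only [edist_nndist, ENNReal.coe_lt_coe, ← NNReal.coe_lt_coe, coe_nndist] using
        hS (hTS ha) (hTS hb) hab
    rw [encard_coe_eq_coe_finsetCard] at hT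
    exact absurd hle (not_le.2 (by exact_mod_cast hT.ge))
  have hcovering := (coveringNumber_le_packingNumber ε E).trans hpacking
  obtain ⟨S, -, hfin, hS, hcard⟩ := exists_set_encard_eq_coveringNumber
    (hcovering.trans_lt (ENat.natCast_lt_top n)).ne
  lift S to Finset X using hfin
  rw [encard_coe_eq_coe_finsetCard] at hcard
  exact (hasCover_of_isCover hS).mono subset_rfl (by exact_mod_cast hcard.trans_le hcovering) le_rfl

/-- Every subset of `F` of diameter at most `R ≤ R₀` is covered by at most `n` sets of diameter at
most `R / y`. -/
def DividesInto (F : Set X) (R₀ y : ℝ) (n : ℕ) : Prop :=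
  ∀ U ⊆ F, ∀ R, 0 < R → R ≤ R₀ → (∀ a ∈ U, ∀ b ∈ U, dist a b ≤ R) → HasCover U n (R / y)

theorem DividesInto.hasCover_pow {R₀ y : ℝ} {n : ℕ} (h : DividesInto F R₀ y n) (hy : 1 ≤ y)
    {U : Set X} (hU : U ⊆ F) {R : ℝ} (hR : 0 < R) (hRR₀ : R ≤ R₀)
    (hUR : ∀ a ∈ U, ∀ b ∈ U, dist a b ≤ R) (k : ℕ) : HasCover U (n ^ k) (R / y ^ k) := by
  induction k with
  | zero => simpa using hasCover_one hUR
  | succ k ih =>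
    refine (ih.refine fun V hV hVR => h V (hV.trans hU) (R / y ^ k) (by positivity)
      ((div_le_self hR.le (one_le_pow₀ hy)).trans hRR₀) hVR).mono subset_rfl (pow_succ n k).ge ?_
    rw [div_div, pow_succ]

theorem DividesInto.exists_assouadBound {s R₀ y : ℝ} {n : ℕ} (h : DividesInto F R₀ y n)
    (hF : TotallyBounded F) (hs : 0 ≤ s) (hR₀ : 0 < R₀) (hy : 1 < y) (hn : (n : ℝ) ≤ y ^ s) :
    ∃ C, 0 < C ∧ AssouadBound F s C := by
  have hy0 : 0 < y := one_pos.trans hy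
  obtain ⟨T, -, hTfin, hT⟩ := exists_finite_isCover_of_totallyBounded
    (Real.toNNReal_pos.2 (half_pos hR₀)).ne' hF
  lift T to Finset X using hTfin
  have hFcover := hasCover_of_isCover hT
  rw [Real.coe_toNNReal _ (half_pos hR₀).le, mul_div_cancel₀ _ two_ne_zero] at hFcover
  refine ⟨(T.card + 1) * (2 * y) ^ s, by positivity, fun z _ r R hr hrR => ?_⟩
  have hR : 0 < R := hr.trans hrR
  have hratio : 1 ≤ 2 * R / r := (one_le_div hr).2 (by linarith)
  obtain ⟨k, hk, hk'⟩ := exists_nat_pow_near hratio hy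
  refine ⟨T.card * n ^ (k + 1), ?_, (hFcover.mono inter_subset_left le_rfl le_rfl).refine
    fun U hU hUR₀ => ?_⟩
  · have hpow : (n : ℝ) ^ (k + 1) ≤ (2 * y) ^ s * (R / r) ^ s :=
      calc (n : ℝ) ^ (k + 1) ≤ (y ^ s) ^ (k + 1) := by gcongr
        _ = (y ^ k * y) ^ s := by rw [← pow_succ, Real.rpow_pow_comm hy0.le]
        _ ≤ (2 * R / r * y) ^ s := by gcongr
        _ = (2 * y) ^ s * (R / r) ^ s := by
          rw [← Real.mul_rpow (by positivity) (by positivity)]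
          ring_nf
    push_cast
    rw [mul_assoc]
    gcongr
    exact (lt_add_one _).le
  · have hUR : ∀ a ∈ U, ∀ b ∈ U, dist a b ≤ min R₀ (2 * R) := fun a ha b hb =>
      le_min (hUR₀ a ha b hb) (by
        linarith [dist_triangle_right a b z, mem_closedBall.1 (hU ha).2,
          mem_closedBall.1 (hU hb).2])
    refine (h.hasCover_pow hy.le (hU.trans inter_subset_left) (by positivity) (min_le_left _ _) hUR
      (k + 1)).mono subset_rfl le_rfl ?_
    calc min R₀ (2 * R) / y ^ (k + 1) ≤ 2 * R / y ^ (k + 1) := by gcongr; exact min_le_right _ _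
      _ ≤ r := ((div_lt_comm₀ hr (by positivity)).1 hk').le

theorem exists_separated_of_lt_assouadDim (hF : TotallyBounded F) {s R₀ y : ℝ} (hs : 0 ≤ s)
    (hR₀ : 0 < R₀) (hy : 1 < y) (hsF : s < assouadDim F) :
    ∃ z ∈ F, ∃ R, 0 < R ∧ R ≤ R₀ ∧ ∃ S : Finset X, ↑S ⊆ F ∩ closedBall z R ∧
      (∀ a ∈ S, ∀ b ∈ S, a ≠ b → R / (2 * y) < dist a b) ∧ y ^ s ≤ S.card := by
  by_contra! hcon
  have hdiv : DividesInto F R₀ y ⌊y ^ s⌋₊ := fun U hUF R hR hRR₀ hUR => by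
    have hhalf : 2 * (R / (2 * y)) = R / y := by field_simp
    refine hhalf ▸ hasCover_of_forall_card_separated_le (by positivity) fun S hSU hS => ?_
    obtain rfl | ⟨z, hz⟩ := S.eq_empty_or_nonempty
    · exact Nat.zero_le _
    · exact Nat.le_floor (hcon z (hUF (hSU hz)) R hR hRR₀ S (fun a ha =>
        ⟨hUF (hSU ha), hUR a (hSU ha) z (hSU hz)⟩) hS).le
  obtain ⟨C, hC, hbound⟩ := hdiv.exists_assouadBound hF hs hR₀ hy (Nat.floor_le (by positivity))
  exact (hbound.assouadDim_le hs hC).not_gt hsF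

end Assouad

section FiniteDimensional

variable {V : Type*} [NormedAddCommGroup V] [NormedSpace ℝ V] [FiniteDimensional ℝ V] {F : Set V}

theorem exists_dividesInto_two (F : Set V) (R₀ : ℝ) : ∃ n, DividesInto F R₀ 2 n := by
  obtain ⟨T, -, hTfin, hT⟩ := exists_finite_isCover_of_totallyBounded (ε := 1 / 4) (by norm_num)
    (isCompact_closedBall (0 : V) 1).totallyBounded
  lift T to Finset V using hTfin
  refine ⟨T.card, fun U _ R hR _ hUR => ?_⟩
  obtain rfl | ⟨z, hz⟩ := U.eq_empty_or_nonempty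
  · exact hasCover_empty _ _
  · refine (hasCover_of_isCover hT).comap (f := fun v => R⁻¹ • (v - z)) (fun v hv => ?_)
      fun v _ w _ hvw => ?_
    · rw [mem_closedBall_zero_iff, norm_smul, Real.norm_of_nonneg (inv_nonneg.2 hR.le),
        inv_mul_le_one₀ hR, ← dist_eq_norm]
      exact hUR v hv z hz
    · rw [dist_smul₀, dist_sub_right, Real.norm_of_nonneg (inv_nonneg.2 hR.le),
        inv_mul_le_iff₀ hR] at hvw
      refine hvw.trans_eq ?_
      push_cast
      ring

theorem exists_assouadBound_of_isBounded (hF : Bornology.IsBounded F) :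
    ∃ α C, 0 ≤ α ∧ 0 < C ∧ AssouadBound F α C := by
  obtain ⟨n, hn⟩ := exists_dividesInto_two F 1
  obtain ⟨C, hC, hbound⟩ := hn.exists_assouadBound
    (hF.isCompact_closure.totallyBounded.subset subset_closure) n.cast_nonneg one_pos one_lt_two
    (by rw [Real.rpow_natCast]; exact_mod_cast n.lt_two_pow_self.le)
  exact ⟨n, C, n.cast_nonneg, hC, hbound⟩

end FiniteDimensional

section CoverSums

variable {X : Type*} [PseudoMetricSpace X] {S S' : Set X} {d : ℝ} {ρ ρ' B B' : ℝ≥0∞}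

/-- `S` has a finite cover by sets of diameter at most `ρ` whose diameters, to the power `d`, sum to
at most `B`. -/
def HasCoverSum (d : ℝ) (ρ B : ℝ≥0∞) (S : Set X) : Prop :=
  ∃ 𝒱 : Finset (Set X), S ⊆ ⋃ V ∈ 𝒱, V ∧ (∀ V ∈ 𝒱, ediam V ≤ ρ) ∧ ∑ V ∈ 𝒱, ediam V ^ d ≤ B

theorem HasCoverSum.mono (h : HasCoverSum d ρ B S) (hS : S' ⊆ S) (hρ : ρ ≤ ρ') (hB : B ≤ B') :
    HasCoverSum d ρ' B' S' := by
  obtain ⟨𝒱, hsub, hdiam, hsum⟩ := h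
  exact ⟨𝒱, hS.trans hsub, fun V hV => (hdiam V hV).trans hρ, hsum.trans hB⟩

theorem HasCoverSum.union (h : HasCoverSum d ρ B S) (h' : HasCoverSum d ρ B' S') :
    HasCoverSum d ρ (B + B') (S ∪ S') := by
  classical
  obtain ⟨𝒱, hsub, hdiam, hsum⟩ := h
  obtain ⟨𝒱', hsub', hdiam', hsum'⟩ := h'
  refine ⟨𝒱 ∪ 𝒱', ?_, fun V hV => (Finset.mem_union.1 hV).elim (hdiam V) (hdiam' V), ?_⟩
  · rw [Finset.set_biUnion_union]
    exact union_subset_union hsub hsub'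
  · refine le_trans ?_ (add_le_add hsum hsum')
    rw [← Finset.sum_union_inter]
    exact le_self_add

theorem hasCoverSum_biUnion {ι : Type*} (s : Finset ι) {S : ι → Set X}
    (h : ∀ i ∈ s, HasCoverSum d ρ B (S i)) : HasCoverSum d ρ (s.card * B) (⋃ i ∈ s, S i) := by
  classical
  induction s using Finset.induction with
  | empty => exact ⟨∅, by simp, by simp, by simp⟩
  | insert a s ha ih =>
    rw [Finset.set_biUnion_insert, Finset.card_insert_of_notMem ha, Nat.cast_add_one, add_one_mul,
      add_comm]
    exact (h a (s.mem_insert_self a)).union (ih fun i hi => h i (Finset.mem_insert_of_mem hi))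

theorem HasCover.hasCoverSum {n : ℕ} {δ : ℝ} (h : HasCover S n δ) (hδ : 0 ≤ δ) (hd : 0 ≤ d) :
    HasCoverSum d (ENNReal.ofReal δ) (ENNReal.ofReal (n * δ ^ d)) S := by
  obtain ⟨𝒱, hsub, hdiam, hcard⟩ := (HasCover.ediam_iff hδ).1 h
  refine ⟨𝒱, hsub, hdiam, ?_⟩
  calc ∑ V ∈ 𝒱, ediam V ^ d ≤ ∑ _V ∈ 𝒱, ENNReal.ofReal δ ^ d := by
        gcongr with V hV
        exact hdiam V hV
    _ = 𝒱.card * ENNReal.ofReal (δ ^ d) := by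
        rw [Finset.sum_const, nsmul_eq_mul, ENNReal.ofReal_rpow_of_nonneg hδ hd]
    _ ≤ n * ENNReal.ofReal (δ ^ d) := by gcongr
    _ = ENNReal.ofReal (n * δ ^ d) := by
        rw [ENNReal.ofReal_mul (Nat.cast_nonneg n), ENNReal.ofReal_natCast]

theorem hasCoverSum_closedBall (z : X) {η : ℝ} (hd : 0 ≤ d) (hη : 0 ≤ η) :
    HasCoverSum d (ENNReal.ofReal (2 * η)) (ENNReal.ofReal ((2 * η) ^ d)) (closedBall z η) := by
  have hcover : HasCover (closedBall z η) 1 (2 * η) := hasCover_one fun x hx y hy =>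
    (dist_triangle_right x y z).trans ((add_le_add hx hy).trans_eq (two_mul η).symm)
  simpa only [Nat.cast_one, one_mul] using hcover.hasCoverSum (by positivity) hd

end CoverSums

section HausdorffDimension

variable {X : Type*} [MetricSpace X]

theorem dimH_le_of_hasCoverSum {S : Set X} {d : ℝ≥0} {ρ : ℕ → ℝ≥0∞} {B : ℝ≥0∞}
    (hρ : Tendsto ρ atTop (𝓝 0)) (hB : B ≠ ∞)
    (h : ∀ k, HasCoverSum d (ρ k) B S) :
    dimH S ≤ d := by
  borelize X
  choose 𝒱 hsub hdiam hsum using h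
  refine dimH_le_of_hausdorffMeasure_ne_top (ne_top_of_le_ne_top hB ?_)
  calc Measure.hausdorffMeasure d S
      ≤ liminf (fun k => ∑ V : 𝒱 k, ediam (V : Set X) ^ (d : ℝ)) atTop :=
        Measure.hausdorffMeasure_le_liminf_sum (d : ℝ) S ρ hρ (fun k (V : 𝒱 k) => (V : Set X))
          (.of_forall fun k V => hdiam k V V.2)
          (.of_forall fun k => by simpa only [iUnion_subtype] using hsub k)
    _ ≤ liminf (fun _ : ℕ => B) atTop := liminf_le_liminf (.of_forall fun k =>
        (Finset.sum_coe_sort (𝒱 k) fun V => ediam V ^ (d : ℝ)).trans_le (hsum k))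
    _ = B := liminf_const B

theorem tendsto_ofReal_mul_half_pow (a : ℝ) :
    Tendsto (fun k : ℕ => ENNReal.ofReal (a * (1 / 2) ^ k)) atTop (𝓝 0) := by
  have := (tendsto_pow_atTop_nhds_zero_of_lt_one one_half_pos.le one_half_lt_one).const_mul a
  simpa using ENNReal.tendsto_ofReal this

theorem AssouadBound.dimH_le {F : Set X} (hF : Bornology.IsBounded F) {α : ℝ≥0} {C : ℝ}
    (h : AssouadBound F α C) : dimH F ≤ α := by
  obtain rfl | ⟨z, hz⟩ := F.eq_empty_or_nonempty
  · simp
  obtain ⟨R, hR1, hR⟩ := hF.subset_closedBall_lt 1 z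
  refine dimH_le_of_hasCoverSum (tendsto_ofReal_mul_half_pow 1)
    (ENNReal.ofReal_ne_top (r := C * R ^ (α : ℝ))) fun k => ?_
  rw [one_mul]
  have hk : (0 : ℝ) < (1 / 2) ^ k := by positivity
  obtain ⟨n, hn, hcover⟩ := h z hz ((1 / 2) ^ k) R hk
    ((pow_le_one₀ one_half_pos.le one_half_lt_one.le).trans_lt hR1)
  rw [inter_eq_left.2 hR] at hcover
  refine (hcover.hasCoverSum hk.le α.2).mono subset_rfl le_rfl (ENNReal.ofReal_le_ofReal ?_)
  calc n * ((1 / 2) ^ k) ^ (α : ℝ)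
      ≤ C * (R / (1 / 2) ^ k) ^ (α : ℝ) * ((1 / 2) ^ k) ^ (α : ℝ) := by gcongr
    _ = C * R ^ (α : ℝ) := by
        rw [mul_assoc, ← Real.mul_rpow (by positivity) hk.le, div_mul_cancel₀ _ hk.ne']

end HausdorffDimension

theorem dimH_le_assouadDim {V : Type*} [NormedAddCommGroup V] [NormedSpace ℝ V]
    [FiniteDimensional ℝ V] {F : Set V} (hF : Bornology.IsBounded F) :
    dimH F ≤ ENNReal.ofReal (assouadDim F) := by
  obtain ⟨α, C, hα, hC, h⟩ := exists_assouadBound_of_isBounded hF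
  have hle : ∀ β : ℝ, 0 ≤ β → ∀ C, AssouadBound F β C → dimH F ≤ ENNReal.ofReal β :=
    fun β hβ C h => by
      lift β to ℝ≥0 using hβ
      simpa using h.dimH_le hF
  rw [assouadDim_eq_sInf]
  refine ENNReal.le_ofReal_iff_toReal_le ((hle α hα C h).trans_lt ENNReal.ofReal_lt_top).ne
    (Real.sInf_nonneg fun β hβ => hβ.1) |>.2 (le_csInf ⟨α, hα, C, hC, h⟩ ?_)
  rintro β ⟨hβ, C', -, hβF⟩
  exact ENNReal.toReal_le_of_le_ofReal hβ (hle β hβ C' hβF)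

section SparseRange

variable {X : Type*} [PseudoMetricSpace X]

theorem HasCover.card_le_mul {E : Set X} {n w : ℕ} {d : ℝ} (h : HasCover E n d) {K : Finset ℕ}
    {f : ℕ → X} (hf : ∀ k ∈ K, f k ∈ E)
    (hw : ∀ k ∈ K, ∀ l ∈ K, dist (f k) (f l) ≤ d → k ≤ l + w) : K.card ≤ (w + 1) * n := by
  classical
  obtain ⟨𝒰, hcard, hsub, hdist⟩ := h
  choose! U hU hfU using fun k (hk : k ∈ K) => mem_iUnion₂.1 (hsub (hf k hk))
  refine (Finset.card_le_mul_card_image_of_maps_to hU (w + 1) fun V hV => ?_).trans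
    (Nat.mul_le_mul_left _ hcard)
  set fiber := {k ∈ K | U k = V}
  obtain hempty | hne := fiber.eq_empty_or_nonempty
  · simp [hempty]
  · have hfiber : ∀ k ∈ fiber, k ∈ K ∧ f k ∈ V := fun k hk =>
      have hk := Finset.mem_filter.1 hk
      ⟨hk.1, hk.2 ▸ hfU k hk.1⟩
    obtain ⟨hminK, hminV⟩ := hfiber _ (fiber.min'_mem hne)
    have hsub : fiber ⊆ Finset.Icc (fiber.min' hne) (fiber.min' hne + w) := fun k hk =>
      Finset.mem_Icc.2 ⟨fiber.min'_le k hk, hw k (hfiber k hk).1 _ hminK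
        (hdist V hV _ (hfiber k hk).2 _ hminV)⟩
    refine (Finset.card_le_card hsub).trans ?_
    rw [Nat.card_Icc, add_assoc, Nat.add_sub_cancel_left]

theorem AssouadBound.sparseRange {D : Set X} {Ω : Type*} {t C δ₀ ρ : ℝ} (hD : AssouadBound D t C)
    (hC : 0 ≤ C) (hδ₀ : 0 < δ₀) (hρ : 0 < ρ) {φ : Ω → X} {π : Ω → ℝ} (hφ : ∀ u, φ u ∈ D)
    (hupper : ∀ u v, dist (φ u) (φ v) ≤ ρ * (dist (π u) (π v) + 2 * δ₀))
    (hlower : ∀ u v, ρ * dist (π u) (π v) ≤ 2 * (dist (φ u) (φ v) + 2 * (ρ * δ₀))) :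
    SparseRange t (6 * (C * 6 ^ t)) δ₀ π := fun a δ hδ m hm => by
  have hδ0 : 0 < δ := hδ₀.trans_le hδ
  have hm1 : (1 : ℝ) ≤ m := Nat.one_le_cast.2 hm
  set K := occupiedIntervals π a δ m
  obtain hempty | ⟨k₀, hk₀⟩ := K.eq_empty_or_nonempty
  · rw [hempty, Finset.card_empty, Nat.cast_zero]
    positivity
  have : Nonempty Ω := (mem_occupiedIntervals.1 hk₀).2.nonempty
  choose! u hu using fun k (hk : k ∈ K) => (mem_occupiedIntervals.1 hk).2
  have hπ : ∀ k ∈ K, π (u k) ∈ Icc a (a + m * δ) := fun k hk => by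
    have hkm : (k : ℝ) + 1 ≤ m := mod_cast (mem_occupiedIntervals.1 hk).1
    exact ⟨(le_add_of_nonneg_right (by positivity)).trans (hu k hk).1,
      (hu k hk).2.le.trans (by gcongr)⟩
  obtain ⟨n, hn, hcover⟩ := hD (φ (u k₀)) (hφ _) (ρ * δ / 2) (3 * (ρ * δ) * m) (by positivity)
    (by nlinarith [mul_pos hρ hδ0])
  have hcard : K.card ≤ 6 * n := by
    refine hcover.card_le_mul (f := fun k => φ (u k)) (fun k hk => ⟨hφ _, ?_⟩)
      fun k hk l hl hkl => ?_
    · refine (hupper (u k) (u k₀)).trans ?_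
      calc ρ * (dist (π (u k)) (π (u k₀)) + 2 * δ₀) ≤ ρ * (m * δ + 2 * (m * δ)) := by
            gcongr
            · simpa using Real.dist_le_of_mem_Icc (hπ k hk) (hπ k₀ hk₀)
            · exact hδ.trans (le_mul_of_one_le_left hδ0.le hm1)
        _ = 3 * (ρ * δ) * m := by ring
    · have hdist : dist (π (u k)) (π (u l)) ≤ 5 * δ := le_of_mul_le_mul_left
        (by nlinarith [hlower (u k) (u l), mul_le_mul_of_nonneg_left hδ hρ.le]) hρ
      have hlt : (k : ℝ) < l + 6 := lt_of_mul_lt_mul_right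
        (by linarith [(hu k hk).1, (hu l hl).2, Real.sub_le_dist (π (u k)) (π (u l))]) hδ0.le
      exact Nat.lt_add_one_iff.1 (mod_cast hlt)
  calc (K.card : ℝ) ≤ 6 * n := mod_cast hcard
    _ ≤ 6 * (C * (3 * (ρ * δ) * m / (ρ * δ / 2)) ^ t) := by gcongr
    _ = 6 * (C * (6 * m) ^ t) := by
        congr 3
        field_simp
        ring
    _ = 6 * (C * 6 ^ t) * (m : ℝ) ^ t := by
        rw [Real.mul_rpow (by norm_num) (by positivity), ← mul_assoc C, mul_assoc 6]

theorem AssouadBound.sparseRange_of_abs_sub_le {D : Set ℝ} {Ω : Type*} {t C δ₀ ρ A B : ℝ}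
    (hD : AssouadBound D t C) (hC : 0 ≤ C) (hδ₀ : 0 < δ₀) (hρ : 0 < ρ) {φ π : Ω → ℝ}
    (hφ : ∀ u, φ u ∈ D) (happrox : ∀ u, |φ u - (A + B * π u)| ≤ ρ * δ₀) (hB : ρ ≤ 2 * |B|)
    (hB' : |B| ≤ ρ) : SparseRange t (6 * (C * 6 ^ t)) δ₀ π := by
  have hdiff : ∀ u v, |(φ u - φ v) - B * (π u - π v)| ≤ 2 * (ρ * δ₀) := fun u v =>
    calc |(φ u - φ v) - B * (π u - π v)|
        = |(φ u - (A + B * π u)) - (φ v - (A + B * π v))| := by ring_nf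
      _ ≤ ρ * δ₀ + ρ * δ₀ := (abs_sub _ _).trans (add_le_add (happrox u) (happrox v))
      _ = 2 * (ρ * δ₀) := (two_mul _).symm
  refine hD.sparseRange hC hδ₀ hρ hφ (fun u v => ?_) fun u v => ?_
  · calc |φ u - φ v| ≤ |B| * |π u - π v| + 2 * (ρ * δ₀) := by
          rw [← abs_mul]
          linarith [hdiff u v, abs_sub_abs_le_abs_sub (φ u - φ v) (B * (π u - π v))]
      _ ≤ ρ * |π u - π v| + 2 * (ρ * δ₀) := by gcongr
      _ = ρ * (|π u - π v| + 2 * δ₀) := by ring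
  · calc ρ * |π u - π v| ≤ 2 * |B| * |π u - π v| := by gcongr
      _ = 2 * |B * (π u - π v)| := by rw [abs_mul, mul_assoc]
      _ ≤ 2 * (|φ u - φ v| + 2 * (ρ * δ₀)) := by
          have hdiff' := abs_sub_comm (φ u - φ v) (B * (π u - π v)) ▸ hdiff u v
          linarith [abs_sub_abs_le_abs_sub (B * (π u - π v)) (φ u - φ v)]

end SparseRange

section Plane

theorem abs_dist_sub_inner_div_le {V : Type*} [NormedAddCommGroup V] [InnerProductSpace ℝ V]
    {x z u : V} (hxz : x ≠ z) (h : 2 * dist u z ≤ dist x z) :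
    |dist x u - (dist x z - inner ℝ (x - z) (u - z) / dist x z)| ≤ dist u z ^ 2 / dist x z := by
  have hsq : dist x u ^ 2 = dist x z ^ 2 - 2 * inner ℝ (x - z) (u - z) + dist u z ^ 2 := by
    rw [dist_eq_norm x u, ← sub_sub_sub_cancel_right x u z, norm_sub_sq_real, dist_eq_norm,
      dist_eq_norm]
  have hinner : |inner ℝ (x - z) (u - z)| ≤ dist x z * dist u z := by
    simpa only [dist_eq_norm] using abs_real_inner_le_norm (x - z) (u - z)
  have hpos : 0 < dist x z := dist_pos.2 hxz
  set q := inner ℝ (x - z) (u - z) / dist x z with hq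
  have hqz : |q| ≤ dist u z := by
    rwa [hq, abs_div, abs_of_pos hpos, div_le_iff₀' hpos]
  have hdiff : dist x u ^ 2 - (dist x z - q) ^ 2 = dist u z ^ 2 - q ^ 2 := by
    rw [hsq, hq]
    field_simp
    ring
  have hqsq : q ^ 2 ≤ dist u z ^ 2 := sq_le_sq' (neg_le_of_abs_le hqz) (le_of_abs_le hqz)
  have hle : dist x z - q ≤ dist x u :=
    le_of_sq_le_sq (by linarith) dist_nonneg
  rw [abs_of_nonneg (sub_nonneg.2 hle), le_div_iff₀ hpos]
  nlinarith [sq_nonneg q, le_of_abs_le hqz, h]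

variable {i j : Fin 2} {E : Set ℝ} {K δ : ℝ} {n : ℕ}

theorem Euc.abs_apply_sub_le {n : ℕ} (x y : Euc n) (i : Fin n) : |x i - y i| ≤ dist x y := by
  rw [dist_eq_norm]
  exact PiLp.norm_apply_le (x - y) i

theorem Euc.inner_eq (hij : i ≠ j) (x y : Euc 2) : inner ℝ x y = x i * y i + x j * y j := by
  rw [PiLp.inner_apply, Fintype.sum_eq_add i j hij fun k hk => by omega]
  simp only [Real.inner_apply]

theorem Euc.dist_le (hij : i ≠ j) (x y : Euc 2) : dist x y ≤ |x i - y i| + |x j - y j| := by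
  refine le_of_sq_le_sq ?_ (by positivity)
  calc dist x y ^ 2 = |x i - y i| ^ 2 + |x j - y j| ^ 2 := by
        rw [dist_eq_norm, ← real_inner_self_eq_norm_sq, Euc.inner_eq hij, sq_abs, sq_abs, sq, sq]
        rfl
    _ ≤ (|x i - y i| + |x j - y j|) ^ 2 := by
        nlinarith [abs_nonneg (x i - y i), abs_nonneg (x j - y j)]

/-- The points `x` whose `i`-th coordinate is within `K` of that of `z` and which are seen from `z`
in a direction of slope in `E`, measured against the `i`-th axis. -/
def sector (i j : Fin 2) (z : Euc 2) (K : ℝ) (E : Set ℝ) : Set (Euc 2) :=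
  {x | |x i - z i| ≤ K ∧ ∃ θ ∈ E, |θ| ≤ 1 ∧ x j - z j = θ * (x i - z i)}

theorem HasCover.sector (hE : HasCover E n δ) (hij : i ≠ j) (z : Euc 2) (hK : 0 < K) (hδ : 0 < δ) :
    HasCover (sector i j z K E) (n * ⌈2 * K / δ⌉₊) ((2 + K) * δ) := by
  choose! hxK θ hθE hθ hx using fun x (hx : x ∈ _root_.sector i j z K E) => hx
  have hIcc := hasCover_Icc_ceil (neg_lt_self hK) hδ
  rw [sub_neg_eq_add, ← two_mul] at hIcc
  refine (hE.prod hIcc).comap (f := fun x => (θ x, x i - z i))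
    (fun x hx => ⟨hθE x hx, abs_le.1 (hxK x hx)⟩) fun x hxs y hys hxy => ?_
  obtain ⟨hθxy, hi⟩ := max_le_iff.1 hxy
  simp only [dist_sub_right, Real.dist_eq] at hθxy hi
  have hj : x j - y j = θ x * (x i - y i) + (θ x - θ y) * (y i - z i) := by
    linear_combination hx x hxs - hx y hys
  calc dist x y ≤ |x i - y i| + |x j - y j| := Euc.dist_le hij x y
    _ ≤ |x i - y i| + (|θ x| * |x i - y i| + |θ x - θ y| * |y i - z i|) := by
        rw [hj, ← abs_mul, ← abs_mul]
        gcongr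
        exact abs_add_le _ _
    _ ≤ δ + (1 * δ + δ * K) := by
        gcongr
        exacts [hθ x hxs, hxK y hys]
    _ = (2 + K) * δ := by ring

theorem HasCover.hasCoverSum_sector {κ : ℝ} (hE : HasCover E n δ) (hij : i ≠ j) (z : Euc 2)
    (hK : 0 < K) (hδ : 0 < δ) (hδ1 : δ ≤ 1) (hκ : 0 ≤ κ) (hn : n * δ ^ κ ≤ 1) :
    HasCoverSum (1 + κ) (ENNReal.ofReal ((2 + K) * δ))
      (ENNReal.ofReal ((2 * K + 1) * (2 + K) ^ (1 + κ))) (_root_.sector i j z K E) := by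
  refine ((hE.sector hij z hK hδ).hasCoverSum (by positivity) (by positivity)).mono subset_rfl
    le_rfl (ENNReal.ofReal_le_ofReal ?_)
  have hceil : (⌈2 * K / δ⌉₊ : ℝ) ≤ (2 * K + 1) / δ := by
    rw [add_div]
    have := (one_le_div hδ).2 hδ1
    linarith [Nat.ceil_lt_add_one (a := 2 * K / δ) (by positivity)]
  calc ((n * ⌈2 * K / δ⌉₊ : ℕ) : ℝ) * ((2 + K) * δ) ^ (1 + κ)
      ≤ n * ((2 * K + 1) / δ) * ((2 + K) * δ) ^ (1 + κ) := by
        push_cast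
        gcongr
    _ = n * δ ^ κ * ((2 * K + 1) * (2 + K) ^ (1 + κ)) := by
        rw [Real.mul_rpow (by positivity) hδ.le, Real.rpow_add hδ, Real.rpow_one]
        field_simp
    _ ≤ 1 * ((2 * K + 1) * (2 + K) ^ (1 + κ)) := by gcongr
    _ = (2 * K + 1) * (2 + K) ^ (1 + κ) := one_mul _

end Plane

section Pins

variable {F : Set (Euc 2)} {S : Finset (Euc 2)} {x z : Euc 2} {i j : Fin 2} {t C K R δ₀ κ : ℝ}

/-- The `i`-th coordinate of the points of `S`, in the coordinates which turn `closedBall z R` into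
the unit ball. -/
def rescaledCoord (S : Finset (Euc 2)) (z : Euc 2) (R : ℝ) (i : Fin 2) : S → ℝ :=
  fun u => ((u : Euc 2) i - z i) / R

theorem abs_rescaledCoord_le_one (hS : ↑S ⊆ closedBall z R) (hR : 0 < R) (i : Fin 2) (u : S) :
    |rescaledCoord S z R i u| ≤ 1 := by
  rw [rescaledCoord, abs_div, abs_of_pos hR, div_le_one hR]
  exact (Euc.abs_apply_sub_le _ _ _).trans (mem_closedBall.1 (hS u.2))

theorem dist_le_max_rescaledCoord (hij : i ≠ j) (hR : 0 < R) (u v : S) :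
    dist (u : Euc 2) v ≤ 2 * R * max |rescaledCoord S z R i u - rescaledCoord S z R i v|
      |rescaledCoord S z R j u - rescaledCoord S z R j v| := by
  have hcoord (l : Fin 2) : |(u : Euc 2) l - (v : Euc 2) l| =
      R * |rescaledCoord S z R l u - rescaledCoord S z R l v| := by
    rw [rescaledCoord, rescaledCoord, ← sub_div, sub_sub_sub_cancel_right, abs_div, abs_of_pos hR,
      mul_div_cancel₀ _ hR.ne']
  refine (Euc.dist_le hij _ _).trans ?_
  rw [hcoord i, hcoord j, ← mul_add, mul_comm 2 R, mul_assoc, two_mul]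
  exact mul_le_mul_of_nonneg_left (add_le_add (le_max_left _ _) (le_max_right _ _)) hR.le

/-- Seen from `x`, the distances to the points of a small ball around `z` are, up to an affine
change of variable, the values of the projection in the direction from `z` to `x`. -/
theorem AssouadBound.mem_sector (hD : AssouadBound (pinnedDistSet x F) t C) (hC : 0 ≤ C)
    (hS : ↑S ⊆ F ∩ closedBall z R) (hR : 0 < R) (hδ₀ : 0 < δ₀) (hδ₀' : δ₀ ≤ 1 / 2)
    (hRx : R ≤ dist x z * δ₀) (hij : i ≠ j) (hslope : |x j - z j| ≤ |x i - z i|)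
    (hK : |x i - z i| ≤ K) :
    x ∈ sector i j z K (sparseDirections (rescaledCoord S z R i) (rescaledCoord S z R j) t
      (6 * (C * 6 ^ t)) δ₀) := by
  have hxz : 0 < dist x z := pos_of_mul_pos_left (hR.trans_le hRx) hδ₀.le
  have hle : dist x z ≤ 2 * |x i - z i| := by linarith [Euc.dist_le hij x z]
  have hi : 0 < |x i - z i| := by linarith
  have hi0 : x i - z i ≠ 0 := abs_pos.1 hi
  have hθ : |(x j - z j) / (x i - z i)| ≤ 1 := by rwa [abs_div, div_le_one hi]
  have hB : |-(R * ((x i - z i) / dist x z))| = R * (|x i - z i| / dist x z) := by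
    rw [abs_neg, abs_mul, abs_div, abs_of_pos hR, abs_of_pos hxz]
  refine ⟨hK, _, ⟨hθ, ?_⟩, hθ, (div_mul_cancel₀ _ hi0).symm⟩
  refine hD.sparseRange_of_abs_sub_le (A := dist x z) (B := -(R * ((x i - z i) / dist x z)))
    (φ := fun u : S => dist x u) hC hδ₀ hR (fun u => ⟨u, (hS u.2).1, rfl⟩) (fun u => ?_) ?_ ?_
  · have huz : dist (u : Euc 2) z ≤ R := (hS u.2).2
    have hinner : inner ℝ (x - z) (u - z) / dist x z = R * ((x i - z i) / dist x z) *
        (rescaledCoord S z R i u + (x j - z j) / (x i - z i) * rescaledCoord S z R j u) := by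
      simp only [Euc.inner_eq hij, PiLp.sub_apply, rescaledCoord]
      field_simp
    rw [neg_mul, ← sub_eq_add_neg, ← hinner]
    refine (abs_dist_sub_inner_div_le (dist_pos.1 hxz) (by nlinarith)).trans ?_
    rw [div_le_iff₀ hxz]
    nlinarith [dist_nonneg (x := (u : Euc 2)) (y := z)]
  · rw [hB, mul_left_comm]
    refine le_mul_of_one_le_right hR.le ?_
    rwa [← mul_div_assoc, one_le_div hxz]
  · rw [hB]
    exact mul_le_of_le_one_right hR.le ((div_le_one hxz).2 (Euc.abs_apply_sub_le x z i))

theorem natCast_mul_half_pow_rpow_le_one {n L : ℕ} (hn : (n : ℝ) ≤ 2 ^ (κ * L)) :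
    n * (1 / 2 ^ L : ℝ) ^ κ ≤ 1 := by
  rw [one_div, Real.inv_rpow (by positivity), ← Real.rpow_natCast, ← Real.rpow_mul zero_le_two,
    mul_comm (L : ℝ)]
  exact mul_inv_le_one_of_le₀ hn (by positivity)

theorem hasCoverSum_sector_of_subset_iUnion {m k : ℕ} {L : ℕ → ℕ} {Θ : Set ℝ} {E : ℕ → Set ℝ}
    (hΘ : Θ ⊆ ⋃ r ∈ Finset.range m, E r) (hL : ∀ r, k ≤ L r)
    (hE : ∀ r, ∃ n : ℕ, (n : ℝ) ≤ 2 ^ (κ * L r) ∧ HasCover (E r) n (1 / 2 ^ L r)) (hij : i ≠ j)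
    (z : Euc 2) (hK : 0 < K) (hκ : 0 ≤ κ) :
    HasCoverSum (1 + κ) (ENNReal.ofReal ((2 + K) * (1 / 2) ^ k))
      (m * ENNReal.ofReal ((2 * K + 1) * (2 + K) ^ (1 + κ))) (sector i j z K Θ) := by
  refine (hasCoverSum_biUnion (Finset.range m) (S := fun r => sector i j z K (E r))
    fun r _ => ?_).mono ?_ le_rfl (by rw [Finset.card_range])
  · obtain ⟨n, hn, hcover⟩ := hE r
    refine (hcover.hasCoverSum_sector hij z hK (by positivity)
      ((div_le_one (by positivity)).2 (one_le_pow₀ one_le_two)) hκ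
      (natCast_mul_half_pow_rpow_le_one hn)).mono subset_rfl (ENNReal.ofReal_le_ofReal ?_) le_rfl
    rw [one_div_pow]
    gcongr
    exacts [one_le_two, hL r]
  · rintro x ⟨hxK, θ, hθ, hx⟩
    obtain ⟨r, hr, hθr⟩ := mem_iUnion₂.1 (hΘ hθ)
    exact mem_iUnion₂.2 ⟨r, hr, hxK, θ, hθr, hx⟩

theorem one_div_two_pow_le_max_rescaledCoord {N : ℕ} (hij : i ≠ j) (hR : 0 < R)
    (hS : ∀ u ∈ S, ∀ v ∈ S, u ≠ v → R / (2 * 2 ^ N) < dist u v) {u v : S} (huv : u ≠ v) :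
    1 / 2 ^ (N + 2) ≤ max |rescaledCoord S z R i u - rescaledCoord S z R i v|
      |rescaledCoord S z R j u - rescaledCoord S z R j v| := by
  have hlt := (hS u u.2 v v.2 (Subtype.coe_ne_coe.2 huv)).trans_le
    (dist_le_max_rescaledCoord (z := z) hij hR u v)
  refine le_of_mul_le_mul_left ?_ (mul_pos two_pos hR)
  calc 2 * R * (1 / 2 ^ (N + 2)) = R / (2 * 2 ^ N) := by
        field_simp
        ring
    _ ≤ _ := hlt.le

theorem exists_hasCoverSum_sector_sparseDirections (hF : TotallyBounded F) (ht0 : 0 ≤ t)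
    (ht1 : t < 1) (htF : t < assouadDim F) (hC : 0 < C) (hK : 0 < K) (hκ : 0 < κ) :
    ∃ m : ℕ, ∀ k : ℕ, ∃ δ₀ : ℝ, 0 < δ₀ ∧ δ₀ ≤ 1 / 2 ∧ ∃ z ∈ F, ∃ R : ℝ, 0 < R ∧
      R ≤ (1 / 2) ^ k * δ₀ ∧ ∃ S : Finset (Euc 2), ↑S ⊆ F ∩ closedBall z R ∧
        ∀ i j, i ≠ j → HasCoverSum (1 + κ) (ENNReal.ofReal ((2 + K) * (1 / 2) ^ k))
          (m * ENNReal.ofReal ((2 * K + 1) * (2 + K) ^ (1 + κ)))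
          (sector i j z K
            (sparseDirections (rescaledCoord S z R i) (rescaledCoord S z R j) t C δ₀)) := by
  obtain ⟨s₁, hts₁, hs₁F⟩ := exists_between htF
  obtain ⟨s, hts, hss₁⟩ := exists_between hts₁
  obtain ⟨m, hm⟩ := exists_sparseDirections_subset_iUnion (C := C) ht0 ht1 hC hts hκ
  refine ⟨m, fun k => ?_⟩
  obtain ⟨L, hkL, hL⟩ := hm k
  obtain ⟨N, hN, hNs, hN1⟩ := ((tendsto_add_atTop_nat 2).eventually hL |>.and
    ((eventually_le_mul_natCast (sub_pos.2 hss₁) (2 * s)).and (eventually_ge_atTop 1))).exists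
  have hδ₀ : (0 : ℝ) < 1 / 2 ^ (2 * (N + 2)) := by positivity
  obtain ⟨z, hzF, R, hR, hRk, S, hSF, hsep, hcard⟩ := exists_separated_of_lt_assouadDim hF
    (s := s₁) (y := 2 ^ N) (R₀ := (1 / 2) ^ k * (1 / 2 ^ (2 * (N + 2)))) (ht0.trans hts₁.le)
    (by positivity) (one_lt_pow₀ one_lt_two (by omega)) hs₁F
  refine ⟨_, hδ₀, ?_, z, hzF, R, hR, hRk, S, hSF, fun i j hij => ?_⟩
  · exact one_div_le_one_div_of_le two_pos (le_self_pow₀ one_le_two (by omega))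
  · have hSR : ↑S ⊆ closedBall z R := hSF.trans inter_subset_right
    have hcard' : 2 ^ (s * (N + 2 : ℕ)) ≤ (Fintype.card S : ℝ) :=
      calc (2 : ℝ) ^ (s * (N + 2 : ℕ)) ≤ 2 ^ (N * s₁) :=
            Real.rpow_le_rpow_of_exponent_le one_le_two (by push_cast; linarith)
        _ = (2 ^ N) ^ s₁ := by rw [Real.rpow_mul zero_le_two, Real.rpow_natCast]
        _ ≤ Fintype.card S := by rwa [Fintype.card_coe]
    obtain ⟨E, hE, hcover⟩ := hN S _ _ (abs_rescaledCoord_le_one hSR hR i)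
      (abs_rescaledCoord_le_one hSR hR j)
      (fun _ _ => one_div_two_pow_le_max_rescaledCoord hij hR hsep) hcard'
    exact hasCoverSum_sector_of_subset_iUnion hE hkL hcover hij z hK hκ.le

theorem inter_setOf_assouadBound_subset {η : ℝ} (hC : 0 ≤ C) (hS : ↑S ⊆ F ∩ closedBall z R)
    (hR : 0 < R) (hδ₀ : 0 < δ₀) (hδ₀' : δ₀ ≤ 1 / 2) (hRη : R ≤ η * δ₀) :
    closedBall z K ∩ {x | AssouadBound (pinnedDistSet x F) t C} ⊆
      closedBall z η ∪ (sector 0 1 z K (sparseDirections (rescaledCoord S z R 0)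
        (rescaledCoord S z R 1) t (6 * (C * 6 ^ t)) δ₀) ∪
      sector 1 0 z K (sparseDirections (rescaledCoord S z R 1)
        (rescaledCoord S z R 0) t (6 * (C * 6 ^ t)) δ₀)) := by
  rintro x ⟨hxK, hD⟩
  obtain hx | hx := le_or_gt (dist x z) η
  · exact .inl hx
  have hRx : R ≤ dist x z * δ₀ := hRη.trans (by gcongr)
  have hcoord (i : Fin 2) : |x i - z i| ≤ K := (Euc.abs_apply_sub_le x z i).trans hxK
  obtain h | h := le_total |x 1 - z 1| |x 0 - z 0|
  · exact .inr (.inl (hD.mem_sector hC hS hR hδ₀ hδ₀' hRx zero_ne_one h (hcoord 0)))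
  · exact .inr (.inr (hD.mem_sector hC hS hR hδ₀ hδ₀' hRx one_ne_zero h (hcoord 1)))

theorem dimH_closedBall_inter_setOf_assouadBound_le (hF : Bornology.IsBounded F) (ht0 : 0 ≤ t)
    (ht1 : t < 1) (htF : t < assouadDim F) (hC : 0 < C) {κ : ℝ≥0} (hκ : 0 < κ) (K : ℝ) :
    dimH (closedBall 0 K ∩ {x | AssouadBound (pinnedDistSet x F) t C}) ≤ (1 + κ : ℝ≥0) := by
  obtain ⟨K₁, hK₁, hFK₁⟩ := hF.exists_pos_norm_le
  set K' := |K| + K₁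
  have hK'0 : 0 < K' := by positivity
  obtain ⟨m, hm⟩ := exists_hasCoverSum_sector_sparseDirections (κ := κ)
    (hF.isCompact_closure.totallyBounded.subset subset_closure) ht0 ht1 htF
    (C := 6 * (C * 6 ^ t)) (by positivity) hK'0 hκ
  set M := (m : ℝ≥0∞) * ENNReal.ofReal ((2 * K' + 1) * (2 + K') ^ (1 + κ : ℝ))
  have hM : M ≠ ∞ := ENNReal.mul_ne_top (ENNReal.natCast_ne_top m) ENNReal.ofReal_ne_top
  refine dimH_le_of_hasCoverSum (tendsto_ofReal_mul_half_pow (2 + K'))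
    (B := ENNReal.ofReal (2 ^ (1 + κ : ℝ)) + (M + M)) (by finiteness) fun k => ?_
  obtain ⟨δ₀, hδ₀, hδ₀', z, hz, R, hR, hRk, S, hS, hsector⟩ := hm k
  have hK : closedBall 0 K ⊆ closedBall z K' := closedBall_subset_closedBall' (by
    rw [dist_zero_left]
    exact add_le_add (le_abs_self K) (hFK₁ z hz))
  have hball : HasCoverSum (1 + κ) (ENNReal.ofReal ((2 + K') * (1 / 2) ^ k))
      (ENNReal.ofReal (2 ^ (1 + κ : ℝ))) (closedBall z ((1 / 2) ^ k)) := by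
    refine (hasCoverSum_closedBall z (by positivity) (by positivity)).mono subset_rfl
      (ENNReal.ofReal_le_ofReal ?_) (ENNReal.ofReal_le_ofReal ?_)
    · gcongr
      exact le_add_of_nonneg_right hK'0.le
    · gcongr
      exact mul_le_of_le_one_right zero_le_two (pow_le_one₀ one_half_pos.le one_half_lt_one.le)
  rw [NNReal.coe_add, NNReal.coe_one]
  exact (hball.union ((hsector 0 1 zero_ne_one).union (hsector 1 0 one_ne_zero))).mono
    ((inter_subset_inter_left _ hK).trans
      (inter_setOf_assouadBound_subset hC.le hS hR hδ₀ hδ₀' hRk)) le_rfl le_rfl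

theorem dimH_exceptional_pins_le (hF : Bornology.IsBounded F) :
    dimH {x : Euc 2 | ¬ min (assouadDim F) 1 ≤ assouadDim (pinnedDistSet x F)} ≤ 1 := by
  refine ENNReal.le_of_forall_pos_le_add fun κ hκ _ => ?_
  have hsub : {x : Euc 2 | ¬ min (assouadDim F) 1 ≤ assouadDim (pinnedDistSet x F)} ⊆
      ⋃ p : {t : ℚ // 0 ≤ t ∧ (t : ℝ) < min (assouadDim F) 1} × {C : ℕ // 1 ≤ C} × ℕ,
        closedBall 0 (p.2.2 : ℝ) ∩ {x | AssouadBound (pinnedDistSet x F) p.1 p.2.1} := by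
    intro x hx
    obtain ⟨t, C, ht0, ht, hC, hD⟩ := exists_assouadBound_of_lt (not_le.1 hx)
    obtain ⟨K, hK⟩ := exists_nat_ge ‖x‖
    exact mem_iUnion.2 ⟨(⟨t, ht0, ht⟩, ⟨C, hC⟩, K), mem_closedBall_zero_iff.2 hK, hD⟩
  refine (dimH_mono hsub).trans ?_
  rw [dimH_iUnion]
  refine iSup_le fun ⟨⟨t, ht0, ht⟩, ⟨C, hC⟩, K⟩ => ?_
  obtain ⟨htF, ht1⟩ := lt_min_iff.1 ht
  exact (dimH_closedBall_inter_setOf_assouadBound_le hF (mod_cast ht0) ht1 htF (mod_cast hC) hκ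
    K).trans_eq (by push_cast; rfl)

end Pins

/-- **Corollary 3.7**: for non-empty bounded `F ⊆ ℝ²`,
`dim_A D_x(F) ≥ min{dim_A F, 1}` for all `x` outside a set of Hausdorff dimension at most
`1`; hence if `dim_H F > 1` there is a pin `x ∈ F` with `dim_A D_x(F) = 1`. -/
theorem assouad_pinned_distance_planar (F : Set (Euc 2)) (hne : F.Nonempty)
    (hbd : Bornology.IsBounded F) :
    dimH {x : Euc 2 | ¬ min (assouadDim F) 1 ≤ assouadDim (pinnedDistSet x F)} ≤ 1 ∧
    (1 < dimH F → ∃ x ∈ F, assouadDim (pinnedDistSet x F) = 1) := by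
  refine ⟨dimH_exceptional_pins_le hbd, fun h => ?_⟩
  have hF : 1 ≤ assouadDim F := ENNReal.one_le_ofReal.1 (h.le.trans (dimH_le_assouadDim hbd))
  obtain ⟨x, hxF, hx⟩ := not_subset.1 fun hsub =>
    ((dimH_mono hsub).trans (dimH_exceptional_pins_le hbd)).not_gt h
  exact ⟨x, hxF, (assouadDim_real_le_one _).antisymm (min_eq_right hF ▸ not_not.1 hx)⟩

end
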